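/- arXiv:2411.17638 — 2 statements merged into one kernel-verified Lean document; each statement's English description precedes it below -/
import Mathlib

section
/- Theorem D, ℚ(i)-dihedral family: For every integer n ≥ 1, let w_n = 4^n + 1 and take r = 24·w_n. Then the quotient #{primes ℓ with 5 ≤ ℓ ≤ x and c_r(ν_r(ℓ)) = 1} / π(x) tends to (1/2)^{n+1} (in ℝ, as the natural number x → ∞). -/
open Polynomial Filter

/-- The `N`-th Fourier coefficient of the mod-2 eta power `η^r(q^{m_r})`:
the coefficient of `X^N` in `X^{b_r} · ∏_{n=1}^{N} (1 − X^{m_r·n})^r` over `ZMod 2`,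
where `m_r = 24 / gcd 24 r` and `b_r = r / gcd 24 r`. -/
noncomputable def etaCoeff (r N : ℕ) : ZMod 2 :=
  (X ^ (r / Nat.gcd 24 r) *
    ∏ n ∈ Finset.Icc 1 N,
      ((1 : Polynomial (ZMod 2)) - X ^ (24 / Nat.gcd 24 r * n)) ^ r).coeff N

/-- `ν_r(ℓ)`: the smallest multiple of `ℓ` that is `≥ b_r` and congruent to `b_r`
modulo `m_r`. -/
noncomputable def nuR (r ℓ : ℕ) : ℕ :=
  sInf {N : ℕ | ℓ ∣ N ∧ r / Nat.gcd 24 r ≤ N ∧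
    N % (24 / Nat.gcd 24 r) = (r / Nat.gcd 24 r) % (24 / Nat.gcd 24 r)}

/-- `π(x)`: the number of primes `≤ x`. -/
def primePi (x : ℕ) : ℕ := ((Finset.range (x + 1)).filter Nat.Prime).card

/-- The number of primes `ℓ` with `5 ≤ ℓ ≤ x` and `c_r(ν_r(ℓ)) = 1`. -/
noncomputable def etaDensityCount (r x : ℕ) : ℕ :=
  ((Finset.range (x + 1)).filter
    (fun ℓ => ℓ.Prime ∧ 5 ≤ ℓ ∧ etaCoeff r (nuR r ℓ) = 1)).card

/-!
Put `w = 4 ^ n + 1`. Modulo `2` one has `η(q)^{24w} = Δ^w = Δ · Δ(q^{4^n})`, and Jacobi's identity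
for `η³` (here Gauss's identity for triangular numbers) gives `Δ = ∑ q^{m²}` over odd `m > 0`. Thus
for a prime `ℓ ≥ w` the coefficient `c_r(ℓ)` is the parity of the number of representations
`ℓ = a² + 4ⁿ b²` with `a`, `b` odd and positive. Such a representation is unique, so `c_r(ℓ) = 1`
exactly when `ℓ` is of the form `x² + 4ⁿ y²` but not of the form `x² + 4ⁿ⁺¹ y²`.

A prime `ℓ ≡ 1 (mod 4)` has the form `x² + 4ⁿ y²` exactly when its Gaussian prime divisors are
congruent modulo `2ⁿ` to a unit of `ℤ[i]` times a rational integer, which is to say that they are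
trivial in a group of order `2ⁿ⁻¹`. Orthogonality of the characters of this group reduces the
density `2⁻ⁿ` to an asymptotic for the coefficients of `-L'/L`. The L-functions continue by the
Mellin transform of products of two theta kernels and do not vanish on `Re s = 1` by Landau's
theorem on Dirichlet series with nonnegative coefficients, so the Wiener–Ikehara theorem, proved
with the Fejér kernel, applies.
-/

section FejerKernel

open MeasureTheory Set Topology

/-- The Fejér kernel of scale `r` on the real line, normalised so that it is the Fourier transform
of the tent function of half-width `r`; its mass does not depend on `r`. -/
noncomputable def fejerKernel (r v : ℝ) : ℝ := r * Real.sinc (r * v / 2) ^ 2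

/-- The tent function of height `1` supported on `[-r, r]`. -/
noncomputable def tent (r t : ℝ) : ℝ := max 0 (1 - |t| / r)

lemma fejerKernel_nonneg {r : ℝ} (hr : 0 ≤ r) (v : ℝ) : 0 ≤ fejerKernel r v :=
  mul_nonneg hr (sq_nonneg _)

lemma integrable_sinc_sq : Integrable fun v ↦ Real.sinc v ^ 2 := by
  refine (integrable_inv_one_add_sq.const_mul 2).mono'
    (Real.continuous_sinc.pow 2).aestronglyMeasurable (.of_forall fun v ↦ ?_)
  rw [Real.norm_of_nonneg (sq_nonneg _), ← div_eq_mul_inv, le_div_iff₀ (by positivity)]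
  have hle_one : Real.sinc v ^ 2 ≤ 1 := (sq_le_one_iff_abs_le_one _).mpr (Real.abs_sinc_le_one v)
  have hle_inv : Real.sinc v ^ 2 * v ^ 2 ≤ 1 := by
    rcases eq_or_ne v 0 with rfl | hv
    · simp
    · rw [Real.sinc_of_ne_zero hv, div_pow, div_mul_cancel₀ _ (by positivity)]
      exact Real.sin_sq_le_one v
  linarith

lemma integral_sinc_sq_pos : 0 < ∫ v, Real.sinc v ^ 2 :=
  integral_pos_of_integrable_nonneg_nonzero (x := 0) (Real.continuous_sinc.pow 2)
    integrable_sinc_sq (fun _ ↦ sq_nonneg _) (by simp)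

lemma integrable_fejerKernel {r : ℝ} (hr : r ≠ 0) : Integrable (fejerKernel r) := by
  unfold fejerKernel
  simp_rw [mul_div_right_comm r]
  exact (integrable_sinc_sq.comp_mul_left' (div_ne_zero hr two_ne_zero)).const_mul r

lemma integral_fejerKernel {r : ℝ} (hr : 0 < r) :
    ∫ v, fejerKernel r v = 2 * ∫ v, Real.sinc v ^ 2 := by
  unfold fejerKernel
  simp_rw [mul_div_right_comm r]
  rw [integral_const_mul, Measure.integral_comp_mul_left (fun v ↦ Real.sinc v ^ 2) (r / 2),
    abs_of_pos (by positivity), smul_eq_mul]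
  field_simp

lemma tendsto_setIntegral_fejerKernel {δ : ℝ} (hδ : 0 < δ) :
    Tendsto (fun r ↦ ∫ v in Icc (-δ) δ, fejerKernel r v) atTop
      (𝓝 (2 * ∫ v, Real.sinc v ^ 2)) := by
  have htop : Tendsto (fun r : ℝ ↦ r / 2 * δ) atTop atTop :=
    (tendsto_id.atTop_div_const two_pos).atTop_mul_const hδ
  refine ((intervalIntegral_tendsto_integral integrable_sinc_sq
    (tendsto_neg_atTop_atBot.comp htop) htop).const_mul 2).congr' ?_
  filter_upwards [eventually_gt_atTop 0] with r hr
  rw [integral_Icc_eq_integral_Ioc, ← intervalIntegral.integral_of_le (by linarith)]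
  simp only [fejerKernel, mul_div_right_comm r, Function.comp, intervalIntegral.integral_const_mul]
  rw [intervalIntegral.integral_comp_mul_left (fun v ↦ Real.sinc v ^ 2) (by positivity)]
  rw [mul_neg, smul_eq_mul]
  field_simp

lemma tent_nonneg (r t : ℝ) : 0 ≤ tent r t := le_max_left _ _

lemma tent_of_abs_le {r t : ℝ} (hr : 0 < r) (ht : |t| ≤ r) : tent r t = 1 - |t| / r :=
  max_eq_right (sub_nonneg.mpr ((div_le_one hr).mpr ht))

lemma tent_of_le_abs {r t : ℝ} (hr : 0 < r) (ht : r ≤ |t|) : tent r t = 0 :=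
  max_eq_left (sub_nonpos.mpr ((one_le_div hr).mpr ht))

lemma continuous_tent (r : ℝ) : Continuous (tent r) := by
  unfold tent
  fun_prop

lemma hasCompactSupport_tent {r : ℝ} (hr : 0 < r) : HasCompactSupport (tent r) :=
  .of_support_subset_isCompact (isCompact_Icc (a := -r) (b := r)) fun t ht ↦ by
    by_contra h
    exact ht (tent_of_le_abs hr (not_le.mp fun h' ↦ h (abs_le.mp h')).le)

lemma integrable_tent {r : ℝ} (hr : 0 < r) : Integrable (tent r) :=
  (continuous_tent r).integrable_of_hasCompactSupport (hasCompactSupport_tent hr)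

lemma integral_one_sub_div_mul_cos {r : ℝ} (hr : 0 < r) (v : ℝ) :
    ∫ t in (0 : ℝ)..r, (1 - t / r) * Real.cos (t * v) = fejerKernel r v / 2 := by
  rcases eq_or_ne v 0 with rfl | hv
  · simp [fejerKernel]
    field_simp
    norm_num
  have hderiv : ∀ t ∈ uIcc 0 r, HasDerivAt
      (fun t ↦ (1 - t / r) * (Real.sin (t * v) / v) - Real.cos (t * v) / (r * v ^ 2))
      ((1 - t / r) * Real.cos (t * v)) t := fun t _ ↦ by
    have hmul : HasDerivAt (fun t : ℝ ↦ t * v) v t := by simpa using (hasDerivAt_id t).mul_const v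
    have hlin : HasDerivAt (fun t : ℝ ↦ 1 - t / r) (-(1 / r)) t :=
      ((hasDerivAt_id t).div_const r).const_sub 1
    refine ((hlin.mul (hmul.sin.div_const v)).sub (hmul.cos.div_const (r * v ^ 2))).congr_deriv ?_
    field_simp
    ring
  have hcos : Real.cos (r * v) = 1 - 2 * Real.sin (r * v / 2) ^ 2 := by
    rw [Real.sin_sq_eq_half_sub, mul_div_cancel₀ _ two_ne_zero]
    ring
  rw [intervalIntegral.integral_eq_sub_of_hasDerivAt hderiv
    ((by fun_prop : Continuous _).intervalIntegrable _ _), fejerKernel,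
    Real.sinc_of_ne_zero (by positivity), hcos]
  simp only [div_self hr.ne', zero_div, zero_mul, Real.sin_zero, Real.cos_zero]
  field_simp
  ring

lemma integral_tent_mul_exp {r : ℝ} (hr : 0 < r) (v : ℝ) :
    ∫ t, (tent r t : ℂ) * Complex.exp (t * v * Complex.I) = fejerKernel r v := by
  set f : ℝ → ℂ := fun t ↦ (tent r t : ℂ) * Complex.exp (t * v * Complex.I) with hf
  have hcont : Continuous f := by
    have := continuous_tent r
    fun_prop
  have hinteg (a b : ℝ) : IntervalIntegrable f volume a b := hcont.intervalIntegrable a b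
  have hneg : IntervalIntegrable (fun t ↦ f (-t)) volume 0 r :=
    (hcont.comp continuous_neg).intervalIntegrable 0 r
  have hsupp : ∀ t ∉ Ioc (-r) r, f t = 0 := fun t ht ↦ by
    have : r ≤ |t| := by
      rw [le_abs']
      by_contra! h
      exact ht ⟨h.1, h.2.le⟩
    simp [hf, tent_of_le_abs hr this]
  calc ∫ t, f t = ∫ t in (-r)..r, f t := by
        rw [intervalIntegral.integral_of_le (by linarith),
          setIntegral_eq_integral_of_forall_compl_eq_zero hsupp]
    _ = ∫ t in (0 : ℝ)..r, (f (-t) + f t) := by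
        rw [← intervalIntegral.integral_add_adjacent_intervals (hinteg _ 0) (hinteg 0 _),
          intervalIntegral.integral_add hneg (hinteg 0 r),
          intervalIntegral.integral_comp_neg, neg_zero]
    _ = ∫ t in (0 : ℝ)..r, ((2 * ((1 - t / r) * Real.cos (t * v)) : ℝ) : ℂ) := by
        refine intervalIntegral.integral_congr fun t ht ↦ ?_
        rw [uIcc_of_le hr.le] at ht
        have ht' : |t| ≤ r := abs_le.mpr ⟨by linarith [ht.1], ht.2⟩
        simp only [hf, tent_of_abs_le hr ht', tent_of_abs_le hr ((abs_neg t).trans_le ht'), abs_neg,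
          abs_of_nonneg ht.1]
        push_cast
        rw [Complex.cos]
        ring_nf
    _ = fejerKernel r v := by
        rw [intervalIntegral.integral_ofReal, intervalIntegral.integral_const_mul,
          integral_one_sub_div_mul_cos hr, mul_div_cancel₀ _ two_ne_zero]

end FejerKernel

section Tauberian

open MeasureTheory Set Topology

/-- The Laplace transform `∫₀^∞ h(u) e^{-su} du` of a real function. -/
noncomputable def laplaceTransform (h : ℝ → ℝ) (s : ℂ) : ℂ :=
  ∫ u in Ioi (0 : ℝ), (h u : ℂ) * Complex.exp (-s * u)

lemma integral_mul_exp_mul_fejerKernel {h : ℝ → ℝ} (hm : Measurable h) {M : ℝ}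
    (hb : ∀ u, |h u| ≤ M) {r d : ℝ} (hr : 0 < r) (hd : 0 < d) (y : ℝ) :
    ((∫ u in Ioi (0 : ℝ), h u * Real.exp (-d * u) * fejerKernel r (y - u) : ℝ) : ℂ) =
      ∫ t, tent r t * laplaceTransform h (d + t * Complex.I) * Complex.exp (y * t * Complex.I) := by
  let F (u t : ℝ) : ℂ :=
    h u * Complex.exp (-d * u) * (tent r t * Complex.exp (t * (y - u : ℝ) * Complex.I))
  have hF : Integrable (Function.uncurry F) ((volume.restrict (Ioi 0)).prod volume) := by
    have hdom : Integrable (fun p : ℝ × ℝ ↦ M * Real.exp (-d * p.1) * tent r p.2)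
        ((volume.restrict (Ioi 0)).prod volume) :=
      ((exp_neg_integrableOn_Ioi 0 hd).const_mul M).mul_prod (integrable_tent hr)
    have hmeas : Measurable (Function.uncurry F) := by
      have := (continuous_tent r).measurable
      have : Measurable fun p : ℝ × ℝ ↦ h p.1 := hm.comp measurable_fst
      unfold Function.uncurry F
      fun_prop
    refine hdom.mono' hmeas.aestronglyMeasurable (.of_forall fun p ↦ ?_)
    have hexp : ‖Complex.exp (-d * (p.1 : ℂ))‖ = Real.exp (-d * p.1) := by
      rw [Complex.norm_exp]; simp
    have hosc : ‖Complex.exp (p.2 * ((y - p.1 : ℝ) : ℂ) * Complex.I)‖ = 1 := by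
      rw [Complex.norm_exp]; simp
    simp only [Function.uncurry, F, norm_mul, hexp, hosc, mul_one, Complex.norm_real,
      Real.norm_eq_abs, abs_of_nonneg (tent_nonneg r _)]
    gcongr
    exacts [tent_nonneg r _, hb _]
  calc ((∫ u in Ioi (0 : ℝ), h u * Real.exp (-d * u) * fejerKernel r (y - u) : ℝ) : ℂ)
      = ∫ u in Ioi (0 : ℝ), ∫ t, F u t := by
        rw [← integral_complex_ofReal]
        congr with u
        rw [integral_const_mul, integral_tent_mul_exp hr]
        push_cast
        ring
    _ = ∫ t, ∫ u in Ioi (0 : ℝ), F u t := integral_integral_swap hF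
    _ = _ := by
        congr with t
        rw [laplaceTransform, ← integral_const_mul, ← integral_mul_const]
        congr with u
        have hexp : Complex.exp (-d * u) * Complex.exp (t * (y - u : ℝ) * Complex.I) =
            Complex.exp (-(d + t * Complex.I) * u) * Complex.exp (y * t * Complex.I) := by
          rw [← Complex.exp_add, ← Complex.exp_add]
          push_cast
          ring_nf
        linear_combination (h u : ℂ) * tent r t * hexp

lemma tendsto_integral_mul_exp_mul {h k : ℝ → ℝ} (hm : Measurable h) {M : ℝ}
    (hb : ∀ u, |h u| ≤ M) (hk : Integrable k) {d : ℕ → ℝ} (hd : ∀ n, 0 ≤ d n)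
    (hlim : Tendsto d atTop (𝓝 0)) :
    Tendsto (fun n ↦ ∫ u in Ioi (0 : ℝ), h u * Real.exp (-d n * u) * k u) atTop
      (𝓝 (∫ u in Ioi (0 : ℝ), h u * k u)) := by
  refine tendsto_integral_of_dominated_convergence (fun u ↦ M * |k u|)
    (fun n ↦ (Measurable.aestronglyMeasurable (by fun_prop)).mul hk.aestronglyMeasurable.restrict)
    (hk.abs.const_mul M).integrableOn (fun n ↦ ?_) (.of_forall fun u ↦ ?_)
  · filter_upwards [ae_restrict_mem measurableSet_Ioi] with u hu
    have hexp : Real.exp (-d n * u) ≤ 1 := by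
      rw [Real.exp_le_one_iff, neg_mul, neg_nonpos]
      exact mul_nonneg (hd n) (le_of_lt hu)
    have hM : 0 ≤ M := (abs_nonneg _).trans (hb u)
    rw [norm_mul, norm_mul, Real.norm_eq_abs, Real.norm_eq_abs, Real.norm_eq_abs, Real.abs_exp]
    calc |h u| * Real.exp (-d n * u) * |k u| ≤ M * 1 * |k u| := by gcongr; exact hb u
      _ = M * |k u| := by rw [mul_one]
  · have hexp : Tendsto (fun n ↦ Real.exp (-d n * u)) atTop (𝓝 1) := by
      simpa [Function.comp_def] using (Real.continuous_exp.tendsto _).comp (hlim.neg.mul_const u)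
    simpa using (hexp.const_mul (h u)).mul_const (k u)

lemma tendsto_integral_tent_mul_comp_add {g : ℂ → ℂ} (hg : ContinuousOn g {s | 0 ≤ s.re})
    {r : ℝ} (hr : 0 < r) (y : ℝ) {d : ℕ → ℝ} (hd : ∀ n, d n ∈ Icc 0 1)
    (hlim : Tendsto d atTop (𝓝 0)) :
    Tendsto (fun n ↦ ∫ t, tent r t * g (d n + t * Complex.I) * Complex.exp (y * t * Complex.I))
      atTop (𝓝 (∫ t, tent r t * g (t * Complex.I) * Complex.exp (y * t * Complex.I))) := by
  have hcpt : IsCompact ((fun p : ℝ × ℝ ↦ (p.1 + p.2 * Complex.I : ℂ)) ''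
      (Icc 0 1 ×ˢ Icc (-r) r)) :=
    (isCompact_Icc.prod isCompact_Icc).image (by fun_prop)
  obtain ⟨B, hB⟩ := hcpt.exists_bound_of_continuousOn (hg.mono (by
    rintro _ ⟨p, hp, rfl⟩
    simpa using hp.1.1))
  have hre (n : ℕ) (t : ℝ) : (d n + t * Complex.I : ℂ) ∈ {s : ℂ | 0 ≤ s.re} := by
    simpa using (hd n).1
  refine tendsto_integral_of_dominated_convergence (fun t ↦ tent r t * B) (fun n ↦ ?_)
    ((integrable_tent hr).mul_const B) (fun n ↦ .of_forall fun t ↦ ?_) (.of_forall fun t ↦ ?_)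
  · have hgn : Continuous fun t : ℝ ↦ g (d n + t * Complex.I) :=
      hg.comp_continuous (by fun_prop) (hre n)
    exact (((Complex.continuous_ofReal.comp (continuous_tent r)).mul hgn).mul
      (by fun_prop)).aestronglyMeasurable
  · have hosc : ‖Complex.exp (y * t * Complex.I)‖ = 1 := by
      rw [Complex.norm_exp]; simp
    rw [norm_mul, norm_mul, hosc, mul_one, Complex.norm_real, Real.norm_of_nonneg (tent_nonneg r t)]
    rcases le_total r |t| with ht | ht
    · simp [tent_of_le_abs hr ht]
    · exact mul_le_mul_of_nonneg_left (hB _ ⟨(d n, t), ⟨hd n, abs_le.mp ht⟩, rfl⟩) (tent_nonneg r t)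
  · have hpath : Tendsto (fun n ↦ (d n + t * Complex.I : ℂ)) atTop (𝓝 (t * Complex.I)) := by
      simpa [Function.comp_def] using
        ((Complex.continuous_ofReal.tendsto _).comp hlim).add_const (t * Complex.I)
    have hgt := (hg (t * Complex.I) (by simp)).tendsto.comp
      (tendsto_nhdsWithin_iff.mpr ⟨hpath, .of_forall fun n ↦ hre n t⟩)
    exact (hgt.const_mul _).mul_const _

lemma integral_mul_fejerKernel {h : ℝ → ℝ} (hm : Measurable h) {M : ℝ}
    (hb : ∀ u, |h u| ≤ M) {g : ℂ → ℂ} (hg : ContinuousOn g {s | 0 ≤ s.re})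
    (hhg : ∀ s : ℂ, 0 < s.re → laplaceTransform h s = g s) {r : ℝ} (hr : 0 < r) (y : ℝ) :
    ((∫ u in Ioi (0 : ℝ), h u * fejerKernel r (y - u) : ℝ) : ℂ) =
      ∫ t, tent r t * g (t * Complex.I) * Complex.exp (y * t * Complex.I) := by
  let d (n : ℕ) : ℝ := 1 / (n + 1)
  have hpos (n : ℕ) : 0 < d n := by positivity
  have hle (n : ℕ) : d n ≤ 1 := (div_le_one (by positivity)).mpr (by simp)
  have hlim : Tendsto d atTop (𝓝 0) := tendsto_one_div_add_atTop_nhds_zero_nat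
  have hleft := (Complex.continuous_ofReal.tendsto _).comp (tendsto_integral_mul_exp_mul hm hb
    ((integrable_fejerKernel hr.ne').comp_sub_left y) (fun n ↦ (hpos n).le) hlim)
  have hright := tendsto_integral_tent_mul_comp_add hg hr y (fun n ↦ ⟨(hpos n).le, hle n⟩) hlim
  refine tendsto_nhds_unique hleft (hright.congr fun n ↦ ?_)
  simp only [Function.comp, integral_mul_exp_mul_fejerKernel hm hb hr (hpos n)]
  congr with t
  rw [hhg _ (by simpa using hpos n)]

lemma tendsto_integral_mul_fejerKernel {h : ℝ → ℝ} (hm : Measurable h) {M : ℝ}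
    (hb : ∀ u, |h u| ≤ M) {g : ℂ → ℂ} (hg : ContinuousOn g {s | 0 ≤ s.re})
    (hhg : ∀ s : ℂ, 0 < s.re → laplaceTransform h s = g s) {r : ℝ} (hr : 0 < r) :
    Tendsto (fun y ↦ ∫ u in Ioi (0 : ℝ), h u * fejerKernel r (y - u)) atTop (𝓝 0) := by
  have hfreq : Tendsto (fun y : ℝ ↦ -y / (2 * Real.pi)) atTop (cocompact ℝ) :=
    (tendsto_neg_atTop_atBot.atBot_div_const (by positivity)).mono_right atBot_le_cocompact
  have hRL := (Real.tendsto_integral_exp_smul_cocompact fun t : ℝ ↦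
    tent r t * g (t * Complex.I)).comp hfreq
  have hzero : Tendsto (fun y ↦ ((∫ u in Ioi (0 : ℝ), h u * fejerKernel r (y - u) : ℝ) : ℂ))
      atTop (𝓝 0) := by
    refine hRL.congr fun y ↦ ?_
    rw [integral_mul_fejerKernel hm hb hg hhg hr]
    simp only [Function.comp, Circle.smul_def, Real.fourierChar_apply, smul_eq_mul]
    congr with t
    rw [mul_comm]
    congr 2
    push_cast
    field_simp
  simpa [Function.comp_def] using (Complex.continuous_re.tendsto _).comp hzero

section Comparison

variable {H : ℝ → ℝ} {M : ℝ}

lemma measurable_of_monotone_mul_exp (hmono : Monotone fun u ↦ H u * Real.exp u) :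
    Measurable H := by
  have hH : H = fun u ↦ H u * Real.exp u * Real.exp (-u) :=
    funext fun u ↦ by rw [mul_assoc, ← Real.exp_add, add_neg_cancel, Real.exp_zero, mul_one]
  rw [hH]
  exact hmono.measurable.mul (by fun_prop)

lemma integrable_comp_sub_mul_fejerKernel (hm : Measurable H) (hb : ∀ u, |H u| ≤ M) {r : ℝ}
    (hr : r ≠ 0) (y : ℝ) : Integrable fun v ↦ H (y - v) * fejerKernel r v :=
  (integrable_fejerKernel hr).bdd_mul (c := M)
    (hm.comp (measurable_const.sub measurable_id)).aestronglyMeasurable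
    (.of_forall fun v ↦ hb (y - v))

lemma mul_exp_sub_le_of_monotone_mul_exp (hmono : Monotone fun u ↦ H u * Real.exp u)
    {u v : ℝ} (huv : u ≤ v) : H u * Real.exp (u - v) ≤ H v := by
  rw [Real.exp_sub, mul_div_assoc', div_le_iff₀ (Real.exp_pos v)]
  exact hmono huv

variable (h0 : ∀ u, 0 ≤ H u) (hM : ∀ u, H u ≤ M) (hmono : Monotone fun u ↦ H u * Real.exp u)
include h0 hM hmono

lemma mul_exp_mul_setIntegral_fejerKernel_le {r : ℝ} (hr : 0 < r) (δ y : ℝ) :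
    H y * Real.exp (-(2 * δ)) * ∫ v in Icc (-δ) δ, fejerKernel r v ≤
      ∫ v, H (y + δ - v) * fejerKernel r v := by
  have hinteg := integrable_comp_sub_mul_fejerKernel (measurable_of_monotone_mul_exp hmono)
    (fun u ↦ (abs_of_nonneg (h0 u)).trans_le (hM u)) hr.ne' (y + δ)
  calc H y * Real.exp (-(2 * δ)) * ∫ v in Icc (-δ) δ, fejerKernel r v
      = ∫ v in Icc (-δ) δ, H y * Real.exp (-(2 * δ)) * fejerKernel r v :=
        (integral_const_mul _ _).symm
    _ ≤ ∫ v in Icc (-δ) δ, H (y + δ - v) * fejerKernel r v := by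
        refine setIntegral_mono_on ((integrable_fejerKernel hr.ne').const_mul _).integrableOn
          hinteg.integrableOn measurableSet_Icc fun v hv ↦ ?_
        refine mul_le_mul_of_nonneg_right ?_ (fejerKernel_nonneg hr.le v)
        refine le_trans ?_ (mul_exp_sub_le_of_monotone_mul_exp hmono
          (by linarith [hv.2] : y ≤ y + δ - v))
        gcongr
        exacts [h0 y, by linarith [hv.1]]
    _ ≤ ∫ v, H (y + δ - v) * fejerKernel r v :=
        setIntegral_le_integral hinteg (.of_forall fun v ↦
          mul_nonneg (h0 _) (fejerKernel_nonneg hr.le v))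

lemma integral_comp_sub_mul_fejerKernel_le {r : ℝ} (hr : 0 < r) (δ y : ℝ) :
    ∫ v, H (y - δ - v) * fejerKernel r v ≤
      H y * Real.exp (2 * δ) * (∫ v in Icc (-δ) δ, fejerKernel r v) +
        M * ((∫ v, fejerKernel r v) - ∫ v in Icc (-δ) δ, fejerKernel r v) := by
  have hK := integrable_fejerKernel hr.ne'
  have hinteg := integrable_comp_sub_mul_fejerKernel (measurable_of_monotone_mul_exp hmono)
    (fun u ↦ (abs_of_nonneg (h0 u)).trans_le (hM u)) hr.ne' (y - δ)
  have hnear : ∀ v ∈ Icc (-δ) δ, H (y - δ - v) ≤ H y * Real.exp (2 * δ) := fun v hv ↦ by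
    have hle := mul_exp_sub_le_of_monotone_mul_exp hmono (by linarith [hv.1] : y - δ - v ≤ y)
    calc H (y - δ - v)
        = H (y - δ - v) * Real.exp (y - δ - v - y) * Real.exp (δ + v) := by
          rw [mul_assoc, ← Real.exp_add, sub_add_eq_add_sub]; simp
      _ ≤ H y * Real.exp (2 * δ) := by
          have := h0 y
          gcongr
          linarith [hv.2]
  rw [← setIntegral_compl measurableSet_Icc hK, ← integral_const_mul, ← integral_const_mul,
    ← integral_add_compl (measurableSet_Icc (a := -δ) (b := δ)) hinteg]
  gcongr ?_ + ?_
  · exact setIntegral_mono_on hinteg.integrableOn (hK.const_mul _).integrableOn measurableSet_Icc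
      fun v hv ↦ mul_le_mul_of_nonneg_right (hnear v hv) (fejerKernel_nonneg hr.le v)
  · exact setIntegral_mono_on hinteg.integrableOn (hK.const_mul _).integrableOn
      measurableSet_Icc.compl fun v _ ↦
        mul_le_mul_of_nonneg_right (hM _) (fejerKernel_nonneg hr.le v)

lemma tendsto_of_tendsto_integral_mul_fejerKernel {c : ℝ}
    (hlim : ∀ r : ℝ, 0 < r → Tendsto (fun y ↦ ∫ v, H (y - v) * fejerKernel r v) atTop
      (𝓝 (c * ∫ v, fejerKernel r v))) :
    Tendsto H atTop (𝓝 c) := by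
  obtain ⟨I, hI⟩ : ∃ I, 2 * ∫ v, Real.sinc v ^ 2 = I := ⟨_, rfl⟩
  have hIpos : 0 < I := hI ▸ mul_pos two_pos integral_sinc_sq_pos
  have hexp (a b : ℝ) : Tendsto (fun δ ↦ b * Real.exp (a * δ) * I) (𝓝[>] 0) (𝓝 (b * I)) := by
    have hcont : Continuous fun δ ↦ b * Real.exp (a * δ) * I := by fun_prop
    simpa using (hcont.tendsto 0).mono_left nhdsWithin_le_nhds
  have hlim_shift (a : ℝ) {r : ℝ} (hr : 0 < r) :
      Tendsto (fun y ↦ ∫ v, H (y + a - v) * fejerKernel r v) atTop (𝓝 (c * I)) := by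
    rw [← hI, ← integral_fejerKernel hr]
    exact (hlim r hr).comp (tendsto_atTop_add_const_right atTop a tendsto_id)
  refine tendsto_order.mpr ⟨fun b hb ↦ ?_, fun b hb ↦ ?_⟩
  · obtain ⟨δ, hδ, hδpos⟩ := (((hexp 2 b).eventually_lt_const (by gcongr : b * I < c * I)).and
      self_mem_nhdsWithin).exists
    have hmass := hI ▸ tendsto_setIntegral_fejerKernel hδpos
    have hbound : Tendsto (fun r ↦ b * Real.exp (2 * δ) * (∫ v in Icc (-δ) δ, fejerKernel r v) +
        M * (I - ∫ v in Icc (-δ) δ, fejerKernel r v)) atTop (𝓝 (b * Real.exp (2 * δ) * I)) := by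
      simpa using (hmass.const_mul (b * Real.exp (2 * δ))).add ((hmass.const_sub I).const_mul M)
    obtain ⟨r, hr, hmass_pos, hrpos⟩ := ((hbound.eventually_lt_const hδ).and
      ((hmass.eventually_const_lt hIpos).and (eventually_gt_atTop 0))).exists
    filter_upwards [(hlim_shift (-δ) hrpos).eventually_const_lt hr] with y hy
    have hle := integral_comp_sub_mul_fejerKernel_le h0 hM hmono hrpos δ y
    rw [integral_fejerKernel hrpos, hI] at hle
    have hlt := lt_of_add_lt_add_right (hy.trans_le hle)
    exact lt_of_mul_lt_mul_right (lt_of_mul_lt_mul_right hlt hmass_pos.le)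
      (Real.exp_nonneg _)
  · obtain ⟨δ, hδ, hδpos⟩ := (((hexp (-2) b).eventually_const_lt (by gcongr : c * I < b * I)).and
      self_mem_nhdsWithin).exists
    have hmass := hI ▸ tendsto_setIntegral_fejerKernel hδpos
    obtain ⟨r, hr, hmass_pos, hrpos⟩ := (((hmass.const_mul (b * Real.exp (-2 * δ)))
      |>.eventually_const_lt hδ).and
      ((hmass.eventually_const_lt hIpos).and (eventually_gt_atTop 0))).exists
    filter_upwards [(hlim_shift δ hrpos).eventually_lt_const hr] with y hy
    have hlt := (mul_exp_mul_setIntegral_fejerKernel_le h0 hM hmono hrpos δ y).trans_lt hy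
    rw [← neg_mul] at hlt
    exact lt_of_mul_lt_mul_right (lt_of_mul_lt_mul_right hlt hmass_pos.le)
      (Real.exp_nonneg _)

end Comparison

end Tauberian

section WienerIkehara

open MeasureTheory Set Topology

/-- The normalized summatory function `x⁻¹ ∑_{k ≤ x} a k` of a sequence in the logarithmic
variable `u = log x`. -/
noncomputable def summatoryMeanExp (a : ℕ → ℝ) (u : ℝ) : ℝ :=
  (∑ k ∈ Finset.Icc 1 ⌊Real.exp u⌋₊, a k) * Real.exp (-u)

lemma summatoryMeanExp_of_neg (a : ℕ → ℝ) {u : ℝ} (hu : u < 0) : summatoryMeanExp a u = 0 := by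
  have hfloor : ⌊Real.exp u⌋₊ = 0 := Nat.floor_eq_zero.mpr (by simpa using hu)
  simp [summatoryMeanExp, hfloor]

lemma summatoryMeanExp_log (a : ℕ → ℝ) {n : ℕ} (hn : 0 < n) :
    summatoryMeanExp a (Real.log n) = (∑ k ∈ Finset.Icc 1 n, a k) / n := by
  have hn' : (0 : ℝ) < n := Nat.cast_pos.mpr hn
  rw [summatoryMeanExp, Real.exp_neg, Real.exp_log hn', Nat.floor_natCast, div_eq_mul_inv]

section

variable {a : ℕ → ℝ} (ha : ∀ n, 0 ≤ a n)
include ha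

lemma summatoryMeanExp_nonneg (u : ℝ) : 0 ≤ summatoryMeanExp a u :=
  mul_nonneg (Finset.sum_nonneg fun k _ ↦ ha k) (Real.exp_nonneg _)

lemma monotone_summatoryMeanExp_mul_exp : Monotone fun u ↦ summatoryMeanExp a u * Real.exp u := by
  intro u v huv
  simp only [summatoryMeanExp, mul_assoc, ← Real.exp_add, neg_add_cancel, Real.exp_zero, mul_one]
  exact Finset.sum_le_sum_of_subset_of_nonneg (Finset.Icc_subset_Icc_right
    (Nat.floor_mono (Real.exp_le_exp.mpr huv))) fun k _ _ ↦ ha k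

lemma measurable_summatoryMeanExp : Measurable (summatoryMeanExp a) :=
  measurable_of_monotone_mul_exp (monotone_summatoryMeanExp_mul_exp ha)

variable {M : ℝ} (hM : ∀ n : ℕ, ∑ k ∈ Finset.Icc 1 n, a k ≤ M * n)
include hM

lemma summatoryMeanExp_le (u : ℝ) : summatoryMeanExp a u ≤ M := by
  have hM0 : 0 ≤ M := by simpa using (ha 1).trans (by simpa using hM 1)
  calc summatoryMeanExp a u ≤ M * Real.exp u * Real.exp (-u) := by
        refine mul_le_mul_of_nonneg_right ((hM _).trans ?_) (Real.exp_nonneg _)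
        exact mul_le_mul_of_nonneg_left (Nat.floor_le (Real.exp_nonneg u)) hM0
    _ = M := by rw [mul_assoc, ← Real.exp_add, add_neg_cancel, Real.exp_zero, mul_one]

lemma abs_summatoryMeanExp_sub_le (c u : ℝ) : |summatoryMeanExp a u - c| ≤ M + |c| :=
  (abs_sub _ _).trans <| by
    rw [abs_of_nonneg (summatoryMeanExp_nonneg ha u)]
    gcongr
    exact summatoryMeanExp_le ha hM u

lemma LSeries_one_add_eq_laplaceTransform {s : ℂ} (hs : 0 < s.re) :
    LSeries (fun n ↦ (a n : ℂ)) (1 + s) = (1 + s) * laplaceTransform (summatoryMeanExp a) s := by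
  have hO : (fun n : ℕ ↦ ∑ k ∈ Finset.Icc 1 n, a k) =O[atTop] fun n ↦ (n : ℝ) ^ (1 : ℝ) :=
    .of_bound M (.of_forall fun n ↦ by
      rw [Real.norm_of_nonneg (Finset.sum_nonneg fun k _ ↦ ha k)]
      simpa using hM n)
  rw [LSeries_eq_mul_integral_of_nonneg a zero_le_one (by simpa using hs) hO ha, laplaceTransform,
    ← Real.exp_zero, ← integral_comp_exp_Ioi]
  congr with u
  have hexp : Complex.exp u * Complex.exp (u * -(1 + s + 1)) =
      Complex.exp (-u) * Complex.exp (-s * u) := by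
    rw [← Complex.exp_add, ← Complex.exp_add]
    ring_nf
  rw [Complex.real_smul, Complex.cpow_def_of_ne_zero (by exact_mod_cast (Real.exp_pos u).ne'),
    ← Complex.ofReal_log (Real.exp_pos u).le, Real.log_exp, summatoryMeanExp]
  push_cast
  linear_combination (∑ k ∈ Finset.Icc 1 ⌊Real.exp u⌋₊, (a k : ℂ)) * hexp

lemma laplaceTransform_summatoryMeanExp_sub_const (c : ℝ) {s : ℂ} (hs : 0 < s.re) :
    laplaceTransform (fun u ↦ summatoryMeanExp a u - c) s =
      (LSeries (fun n ↦ (a n : ℂ)) (1 + s) - c / s - c) / (1 + s) := by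
  have hs0 : s ≠ 0 := fun h ↦ by simp [h] at hs
  have hs1 : 1 + s ≠ 0 := fun h ↦ by
    have := congrArg Complex.re h
    simp only [Complex.add_re, Complex.one_re, Complex.zero_re] at this
    linarith
  have hexp : IntegrableOn (fun u : ℝ ↦ Complex.exp (-s * u)) (Ioi 0) :=
    integrableOn_exp_mul_complex_Ioi (by simpa using hs) 0
  have hinteg : IntegrableOn (fun u : ℝ ↦ (summatoryMeanExp a u : ℂ) * Complex.exp (-s * u))
      (Ioi 0) := by
    refine hexp.bdd_mul (c := M) (Complex.measurable_ofReal.comp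
      (measurable_summatoryMeanExp ha)).aestronglyMeasurable (.of_forall fun u ↦ ?_)
    rw [Complex.norm_real, Real.norm_of_nonneg (summatoryMeanExp_nonneg ha u)]
    exact summatoryMeanExp_le ha hM u
  have hconst : ∫ u in Ioi (0 : ℝ), Complex.exp (-s * u) = 1 / s := by
    rw [integral_exp_mul_complex_Ioi (by simpa using hs)]
    simp
  have hsub : laplaceTransform (fun u ↦ summatoryMeanExp a u - c) s =
      laplaceTransform (summatoryMeanExp a) s - c * (1 / s) := by
    simp only [laplaceTransform, Complex.ofReal_sub, sub_mul]
    rw [integral_sub hinteg (hexp.const_mul _), integral_const_mul, hconst]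
  rw [hsub, LSeries_one_add_eq_laplaceTransform ha hM hs]
  field_simp
  ring

end

lemma integral_comp_sub_mul_eq_setIntegral_Ioi {F : ℝ → ℝ} (hF : ∀ u < 0, F u = 0)
    (k : ℝ → ℝ) (y : ℝ) : ∫ v, F (y - v) * k v = ∫ u in Ioi (0 : ℝ), F u * k (y - u) := by
  have hsubst := integral_sub_left_eq_self (fun v ↦ F (y - v) * k v) volume y
  simp only [sub_sub_cancel] at hsubst
  rw [← hsubst, ← integral_Ici_eq_integral_Ioi, setIntegral_eq_integral_of_forall_compl_eq_zero]
  intro u hu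
  rw [hF u (not_le.mp hu), zero_mul]

lemma tendsto_setIntegral_Ioi_comp_sub {k : ℝ → ℝ} (hk : Integrable k) :
    Tendsto (fun y ↦ ∫ u in Ioi (0 : ℝ), k (y - u)) atTop (𝓝 (∫ v, k v)) := by
  refine ((aecover_Iio tendsto_id).integral_tendsto_of_countably_generated hk).congr fun y ↦ ?_
  have hsubst := integral_sub_left_eq_self ((Iio y).indicator k) volume y
  rw [← integral_indicator measurableSet_Iio, id, ← hsubst, ← integral_indicator measurableSet_Ioi]
  congr with u
  simp [indicator]

lemma tendsto_summatoryMeanExp {a : ℕ → ℝ} (ha : ∀ n, 0 ≤ a n) {M : ℝ}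
    (hM : ∀ n : ℕ, ∑ k ∈ Finset.Icc 1 n, a k ≤ M * n) {c : ℝ} {G : ℂ → ℂ}
    (hG : ContinuousOn G {s | 1 ≤ s.re})
    (heq : ∀ s : ℂ, 1 < s.re → LSeries (fun n ↦ (a n : ℂ)) s - c / (s - 1) = G s) :
    Tendsto (summatoryMeanExp a) atTop (𝓝 c) := by
  have hmeas := measurable_summatoryMeanExp ha
  have hg : ContinuousOn (fun s : ℂ ↦ (G (1 + s) - c) / (1 + s)) {s | 0 ≤ s.re} := by
    refine ((hG.comp (by fun_prop) fun s hs ↦ by simpa using hs).sub continuousOn_const).div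
      (by fun_prop) fun s hs h ↦ ?_
    have := congrArg Complex.re h
    simp only [Complex.add_re, Complex.one_re, Complex.zero_re] at this
    linarith [hs.out]
  have hlaplace (s : ℂ) (hs : 0 < s.re) :
      laplaceTransform (fun u ↦ summatoryMeanExp a u - c) s = (G (1 + s) - c) / (1 + s) := by
    rw [laplaceTransform_summatoryMeanExp_sub_const ha hM c hs, ← heq _ (by simpa using hs),
      add_sub_cancel_left]
  refine tendsto_of_tendsto_integral_mul_fejerKernel (summatoryMeanExp_nonneg ha)
    (summatoryMeanExp_le ha hM) (monotone_summatoryMeanExp_mul_exp ha) fun r hr ↦ ?_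
  have hK (y : ℝ) : IntegrableOn (fun u ↦ fejerKernel r (y - u)) (Ioi 0) :=
    ((integrable_fejerKernel hr.ne').comp_sub_left y).integrableOn
  have hdiff := tendsto_integral_mul_fejerKernel (hmeas.sub_const c)
    (abs_summatoryMeanExp_sub_le ha hM c) hg hlaplace hr
  have hconst := (tendsto_setIntegral_Ioi_comp_sub (integrable_fejerKernel hr.ne')).const_mul c
  have hadd := hdiff.add hconst
  rw [zero_add] at hadd
  refine hadd.congr fun y ↦ ?_
  rw [integral_comp_sub_mul_eq_setIntegral_Ioi (fun u ↦ summatoryMeanExp_of_neg a),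
    ← integral_const_mul, ← integral_add ((hK y).bdd_mul (hmeas.sub_const c).aestronglyMeasurable
      (.of_forall (abs_summatoryMeanExp_sub_le ha hM c))) ((hK y).const_mul c)]
  congr with u
  ring

theorem tendsto_sum_div_of_continuousOn_LSeries_sub {a : ℕ → ℝ} (ha : ∀ n, 0 ≤ a n) {M : ℝ}
    (hM : ∀ n : ℕ, ∑ k ∈ Finset.Icc 1 n, a k ≤ M * n) {c : ℝ} {G : ℂ → ℂ}
    (hG : ContinuousOn G {s | 1 ≤ s.re})
    (heq : ∀ s : ℂ, 1 < s.re → LSeries (fun n ↦ (a n : ℂ)) s - c / (s - 1) = G s) :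
    Tendsto (fun n : ℕ ↦ (∑ k ∈ Finset.Icc 1 n, a k) / n) atTop (𝓝 c) := by
  refine ((tendsto_summatoryMeanExp ha hM hG heq).comp
    (Real.tendsto_log_atTop.comp tendsto_natCast_atTop_atTop)).congr' ?_
  filter_upwards [eventually_gt_atTop 0] with n hn using summatoryMeanExp_log a hn

end WienerIkehara

section EtaModTwo

open Finset

local notation "𝕏" => PowerSeries.X

section GaussTriangular

variable {K : Type*} [Field K]

/-- The factor `(1 - X ^ (2 * k)) / (1 - X ^ (2 * k - 1))` of Gauss's product for the generating
function of the triangular numbers, with index shifted by one. -/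
noncomputable def gaussFactor (K : Type*) [Field K] (k : ℕ) : PowerSeries K :=
  (1 - 𝕏 ^ (2 * k + 2)) * (1 - 𝕏 ^ (2 * k + 1))⁻¹

/-- The `s`-th term of the sum in the finite form `sum_X_pow_triangular` of Gauss's identity. -/
noncomputable def gaussTerm (K : Type*) [Field K] (n s : ℕ) : PowerSeries K :=
  (∏ k ∈ Ico s n, gaussFactor K k) * 𝕏 ^ (s * (2 * n + 1))

lemma one_sub_X_pow_ne_zero (k : ℕ) : (1 - 𝕏 ^ (k + 1) : PowerSeries K) ≠ 0 := fun h ↦ by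
  simpa using congrArg PowerSeries.constantCoeff h

lemma gaussFactor_mul (k : ℕ) :
    gaussFactor K k * (1 - 𝕏 ^ (2 * k + 1)) = 1 - 𝕏 ^ (2 * k + 2) := by
  rw [gaussFactor, mul_assoc, PowerSeries.inv_mul_cancel _ (by simp), mul_one]

lemma gaussTerm_succ_mul {n s : ℕ} (hs : s < n) :
    gaussTerm K n (s + 1) * (1 - 𝕏 ^ (2 * (s + 1))) =
      gaussTerm K n s * 𝕏 ^ (2 * n + 1) * (1 - 𝕏 ^ (2 * s + 1)) := by
  rw [gaussTerm, gaussTerm, prod_eq_prod_Ico_succ_bot hs, show 2 * (s + 1) = 2 * s + 2 by ring,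
    ← gaussFactor_mul]
  ring

lemma gaussTerm_succ_left_mul {n s : ℕ} (hs : s ≤ n) :
    gaussTerm K (n + 1) s * (1 - 𝕏 ^ (2 * n + 1)) =
      gaussTerm K n s * (𝕏 ^ (2 * s) * (1 - 𝕏 ^ (2 * n + 2))) := by
  rw [gaussTerm, gaussTerm, prod_Ico_succ_top hs, ← gaussFactor_mul]
  ring

lemma sum_gaussTerm_succ_left_mul (n : ℕ) :
    (∑ s ∈ range n, gaussTerm K (n + 1) s) * (1 - 𝕏 ^ (2 * n + 1)) =
      (∑ s ∈ range n, gaussTerm K n s) * (1 - 𝕏 ^ (2 * n + 1)) +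
        gaussTerm K n n * (1 - 𝕏 ^ (2 * n)) := by
  have hdiff : ∀ s ∈ range n, gaussTerm K (n + 1) s * (1 - 𝕏 ^ (2 * n + 1)) -
      gaussTerm K n s * (1 - 𝕏 ^ (2 * n + 1)) =
        gaussTerm K n (s + 1) * (1 - 𝕏 ^ (2 * (s + 1))) -
          gaussTerm K n s * (1 - 𝕏 ^ (2 * s)) := fun s hs ↦ by
    rw [gaussTerm_succ_mul (mem_range.mp hs), gaussTerm_succ_left_mul (mem_range.mp hs).le]
    ring
  have htelescope := sum_congr rfl hdiff
  rw [sum_range_sub fun s ↦ gaussTerm K n s * (1 - 𝕏 ^ (2 * s)), sum_sub_distrib, ← sum_mul,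
    ← sum_mul] at htelescope
  linear_combination htelescope

lemma sum_X_pow_triangular (n : ℕ) :
    ∑ s ∈ range (2 * n), (𝕏 : PowerSeries K) ^ (s * (s + 1) / 2) =
      ∑ s ∈ range n, gaussTerm K n s := by
  induction n with
  | zero => simp
  | succ n ih =>
    have heven : 2 * n * (2 * n + 1) / 2 = n * (2 * n + 1) := by
      rw [mul_assoc, Nat.mul_div_cancel_left _ two_pos]
    have hodd : (2 * n + 1) * (2 * n + 1 + 1) / 2 = n * (2 * n + 1) + (2 * n + 1) :=
      Nat.div_eq_of_eq_mul_right two_pos (by ring)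
    have hlast := gaussTerm_succ_left_mul (K := K) le_rfl (n := n)
    have hdiag : gaussTerm K n n = 𝕏 ^ (n * (2 * n + 1)) := by simp [gaussTerm]
    refine mul_right_cancel₀ (one_sub_X_pow_ne_zero (2 * n)) ?_
    rw [show 2 * (n + 1) = 2 * n + 1 + 1 by ring, sum_range_succ, sum_range_succ, ih, heven, hodd,
      sum_range_succ, add_mul _ (gaussTerm K (n + 1) n), sum_gaussTerm_succ_left_mul, hlast, hdiag]
    ring

lemma X_pow_dvd_sum_X_pow_triangular_sub {n : ℕ} (hn : n ≠ 0) :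
    (𝕏 : PowerSeries K) ^ (n + 1) ∣
      ∑ s ∈ range (2 * n), 𝕏 ^ (s * (s + 1) / 2) - ∏ k ∈ range n, gaussFactor K k := by
  obtain ⟨n, rfl⟩ := Nat.exists_eq_succ_of_ne_zero hn
  rw [sum_X_pow_triangular, sum_range_succ', gaussTerm, ← range_eq_Ico, zero_mul, pow_zero, mul_one,
    add_sub_cancel_right]
  refine dvd_sum fun s _ ↦ Dvd.dvd.mul_left (pow_dvd_pow _ ?_) _
  nlinarith

end GaussTriangular

/-- The `n`-th partial product `∏_{k=1}^n (1 - X^k)` of Euler's function. -/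
noncomputable def eulerProd (R : Type*) [CommRing R] (n : ℕ) : PowerSeries R :=
  ∏ k ∈ Icc 1 n, (1 - 𝕏 ^ k)

section CommRing

variable {R : Type*} [CommRing R]

lemma eulerProd_succ (n : ℕ) : eulerProd R (n + 1) = eulerProd R n * (1 - 𝕏 ^ (n + 1)) :=
  prod_Icc_succ_top (by lia) _

lemma X_pow_dvd_eulerProd_sub {m n : ℕ} (h : m ≤ n) :
    𝕏 ^ (m + 1) ∣ eulerProd R n - eulerProd R m := by
  induction n, h using Nat.le_induction with
  | base => simp
  | succ n hn ih =>
    rw [eulerProd_succ, show eulerProd R n * (1 - 𝕏 ^ (n + 1)) - eulerProd R m =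
      eulerProd R n - eulerProd R m - eulerProd R n * 𝕏 ^ (n + 1) by ring]
    exact dvd_sub ih (Dvd.dvd.mul_left (pow_dvd_pow _ (by lia)) _)

lemma isUnit_eulerProd (n : ℕ) : IsUnit (eulerProd R n) := by
  rw [PowerSeries.isUnit_iff_constantCoeff, eulerProd, map_prod]
  refine IsUnit.prod_iff.mpr fun k hk ↦ ?_
  simp [Nat.one_le_iff_ne_zero.mp (mem_Icc.mp hk).1]

end CommRing

section CharTwo

variable {K : Type*} [Field K] [CharP K 2]

instance : CharP (PowerSeries K) 2 :=
  charP_of_injective_ringHom (PowerSeries.C_injective (R := K)) 2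

lemma prod_gaussFactor_mul_eulerProd (n : ℕ) :
    (∏ k ∈ range n, gaussFactor K k) * eulerProd K (2 * n) = eulerProd K n ^ 4 := by
  induction n with
  | zero => simp [eulerProd]
  | succ n ih =>
    have hsq : (1 - 𝕏 ^ (n + 1) : PowerSeries K) ^ 2 = 1 - 𝕏 ^ (2 * n + 2) := by
      rw [sub_pow_char, one_pow, ← pow_mul]
      ring_nf
    rw [show 2 * (n + 1) = 2 * n + 1 + 1 by ring, eulerProd_succ, eulerProd_succ, eulerProd_succ,
      mul_pow, ← ih, show 4 = 2 * 2 by rfl, pow_mul (1 - 𝕏 ^ (n + 1)), hsq, prod_range_succ,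
      sq (1 - _), ← gaussFactor_mul]
    ring

lemma X_pow_dvd_eulerProd_pow_three_sub {n : ℕ} (hn : n ≠ 0) :
    𝕏 ^ (n + 1) ∣ eulerProd K n ^ 3 - ∑ s ∈ range (2 * n), 𝕏 ^ (s * (s + 1) / 2) := by
  have hgauss := X_pow_dvd_sum_X_pow_triangular_sub (K := K) hn
  have hmul : ∀ T : PowerSeries K, (eulerProd K n ^ 3 - T) * eulerProd K n =
      (∏ k ∈ range n, gaussFactor K k) * (eulerProd K (2 * n) - eulerProd K n) -
        (T - ∏ k ∈ range n, gaussFactor K k) * eulerProd K n := fun T ↦ by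
    linear_combination -prod_gaussFactor_mul_eulerProd (K := K) n
  rw [← (isUnit_eulerProd n).dvd_mul_right, hmul]
  exact dvd_sub ((X_pow_dvd_eulerProd_sub (by lia)).mul_left _) (hgauss.mul_right _)

lemma sum_X_pow_pow_two_pow {ι : Type*} (S : Finset ι) (e : ι → ℕ) (k : ℕ) :
    (∑ s ∈ S, (𝕏 : PowerSeries K) ^ e s) ^ 2 ^ k = ∑ s ∈ S, 𝕏 ^ (2 ^ k * e s) := by
  simp only [sum_pow_char_pow, ← pow_mul, mul_comm]

lemma X_mul_sum_X_pow_triangular_pow_eight (m : ℕ) :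
    (𝕏 : PowerSeries K) * (∑ s ∈ range m, 𝕏 ^ (s * (s + 1) / 2)) ^ 8 =
      ∑ s ∈ range m, 𝕏 ^ ((2 * s + 1) ^ 2) := by
  rw [show 8 = 2 ^ 3 by rfl, sum_X_pow_pow_two_pow, mul_sum]
  refine sum_congr rfl fun s _ ↦ ?_
  have htriangular := Nat.div_mul_cancel (Nat.even_mul_succ_self s).two_dvd
  rw [← pow_succ']
  congr 1
  linear_combination 4 * htriangular

lemma X_pow_dvd_X_mul_eulerProd_pow_sub {n : ℕ} (hn : n ≠ 0) (m : ℕ) :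
    𝕏 ^ (n + 1) ∣ (𝕏 * eulerProd K n ^ 24) ^ (4 ^ m + 1) -
      ∑ s ∈ range (2 * n) ×ˢ range (2 * n),
        𝕏 ^ (4 ^ m * (2 * s.1 + 1) ^ 2 + (2 * s.2 + 1) ^ 2) := by
  have htheta : (𝕏 * (∑ s ∈ range (2 * n), (𝕏 : PowerSeries K) ^ (s * (s + 1) / 2)) ^ 8) ^
      (4 ^ m + 1) = ∑ s ∈ range (2 * n) ×ˢ range (2 * n),
        𝕏 ^ (4 ^ m * (2 * s.1 + 1) ^ 2 + (2 * s.2 + 1) ^ 2) := by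
    rw [X_mul_sum_X_pow_triangular_pow_eight, pow_succ, show 4 ^ m = 2 ^ (2 * m) by
      rw [pow_mul]; rfl, sum_X_pow_pow_two_pow, sum_mul_sum, sum_product]
    simp_rw [pow_add]
  rw [← htheta]
  refine dvd_trans ?_ (sub_dvd_pow_sub_pow _ _ _)
  rw [← mul_sub, show 24 = 3 * 8 by rfl, pow_mul (eulerProd K n)]
  exact ((X_pow_dvd_eulerProd_pow_three_sub hn).trans (sub_dvd_pow_sub_pow _ _ _)).mul_left _

end CharTwo

lemma etaCoeff_twentyFour_mul (w N : ℕ) :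
    etaCoeff (24 * w) N =
      PowerSeries.coeff N ((𝕏 * eulerProd (ZMod 2) N ^ 24) ^ w) := by
  have hg : Nat.gcd 24 (24 * w) = 24 := by simp
  rw [etaCoeff, hg, Nat.mul_div_cancel_left _ (by norm_num), Nat.div_self (by norm_num),
    ← Polynomial.coeff_coe, prod_pow, mul_pow, ← pow_mul, Polynomial.coe_mul, Polynomial.coe_pow,
    Polynomial.coe_pow, Polynomial.coe_X, eulerProd, ← Polynomial.coeToPowerSeries.ringHom_apply,
    map_prod]
  simp

lemma etaCoeff_eq_card (m : ℕ) {N : ℕ} (hN : N ≠ 0) :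
    etaCoeff (24 * (4 ^ m + 1)) N =
      (#{s ∈ range (2 * N) ×ˢ range (2 * N) |
        4 ^ m * (2 * s.1 + 1) ^ 2 + (2 * s.2 + 1) ^ 2 = N} : ZMod 2) := by
  have hcoeff := PowerSeries.X_pow_dvd_iff.mp
    (X_pow_dvd_X_mul_eulerProd_pow_sub (K := ZMod 2) hN m) N (by lia)
  rw [map_sub, sub_eq_zero] at hcoeff
  rw [etaCoeff_twentyFour_mul, hcoeff, map_sum, natCast_card_filter]
  exact sum_congr rfl fun s _ ↦ (PowerSeries.coeff_X_pow _ _).trans (if_congr eq_comm rfl rfl)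

lemma nuR_eq_self {w ℓ : ℕ} (hw : 0 < w) (hℓ : w ≤ ℓ) : nuR (24 * w) ℓ = ℓ := by
  have hg : Nat.gcd 24 (24 * w) = 24 := by simp
  rw [nuR, hg, Nat.mul_div_cancel_left _ (by norm_num), Nat.div_self (by norm_num)]
  have hmem : ℓ ∣ ℓ ∧ w ≤ ℓ ∧ ℓ % 1 = w % 1 := ⟨dvd_rfl, hℓ, by simp [Nat.mod_one]⟩
  exact le_antisymm (Nat.sInf_le hmem)
    (le_csInf ⟨ℓ, hmem⟩ fun N hN ↦ Nat.le_of_dvd (hw.trans_le hN.2.1) hN.1)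

end EtaModTwo

section RepresentedPrimes

/-- `ℓ` is represented by the quadratic form `x² + 4^k y²`. -/
def IsSqAddFourPowMulSq (k ℓ : ℕ) : Prop := ∃ a b : ℕ, a ^ 2 + (2 ^ k * b) ^ 2 = ℓ

lemma IsSqAddFourPowMulSq.of_succ {k ℓ : ℕ} (h : IsSqAddFourPowMulSq (k + 1) ℓ) :
    IsSqAddFourPowMulSq k ℓ := by
  obtain ⟨a, b, h⟩ := h
  exact ⟨a, 2 * b, by rw [← h]; ring⟩

lemma eq_zero_of_sq_add_sq_eq_sq_of_dvd {p u v : ℤ} (hp : 0 ≤ p) (h : u ^ 2 + v ^ 2 = p ^ 2)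
    (hu : u ≠ 0) (hv : p ∣ v) : v = 0 := by
  have hlt : v ^ 2 < p ^ 2 := by linarith [sq_pos_of_ne_zero hu]
  exact Int.eq_zero_of_abs_lt_dvd hv ((sq_lt_sq.mp hlt).trans_eq (abs_of_nonneg hp))

-- Brahmagupta's identity writes `p²` as `(ac ± bd)² + (ad ∓ bc)²`, and `p` divides
-- `(ad - bc)(ad + bc)`, so one of the two cross terms vanishes; parity decides which.
lemma sq_add_sq_unique {p a b c d : ℕ} (hp : p.Prime) (hab : a ^ 2 + b ^ 2 = p)
    (hcd : c ^ 2 + d ^ 2 = p) (ha : Odd a) (hb : Even b) (hc : Odd c) :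
    a = c ∧ b = d := by
  zify at hab hcd
  have hdvd : (p : ℤ) ∣ (a * d - b * c) * (a * d + b * c) :=
    ⟨d ^ 2 - b ^ 2, by linear_combination (d : ℤ) ^ 2 * hab - (b : ℤ) ^ 2 * hcd⟩
  have hodd : Odd ((a : ℤ) * c) := mod_cast ha.mul hc
  have heven : Even ((b : ℤ) * d) := mod_cast hb.mul_right d
  rcases (Nat.prime_iff_prime_int.mp hp).dvd_or_dvd hdvd with hminus | hplus
  · have hcross : (a : ℤ) * d - b * c = 0 :=
      eq_zero_of_sq_add_sq_eq_sq_of_dvd (Int.natCast_nonneg p)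
        (u := a * c + b * d) (by linear_combination ((c : ℤ) ^ 2 + d ^ 2) * hab + p * hcd)
        (fun h ↦ by simpa [h] using hodd.add_even heven) hminus
    have hsq : (a : ℤ) ^ 2 * p = c ^ 2 * p := by
      linear_combination (c : ℤ) ^ 2 * hab - (a : ℤ) ^ 2 * hcd + (a * d + b * c) * hcross
    have hac := mul_right_cancel₀ (mod_cast hp.ne_zero) hsq
    have hbd : (b : ℤ) ^ 2 = d ^ 2 := by linear_combination hab - hcd - hac
    norm_cast at hac hbd
    exact ⟨Nat.pow_left_injective two_ne_zero hac, Nat.pow_left_injective two_ne_zero hbd⟩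
  · have hcross : (a : ℤ) * d + b * c = 0 :=
      eq_zero_of_sq_add_sq_eq_sq_of_dvd (Int.natCast_nonneg p)
        (u := a * c - b * d) (by linear_combination ((c : ℤ) ^ 2 + d ^ 2) * hab + p * hcd)
        (fun h ↦ by simpa [h] using hodd.sub_even heven) hplus
    norm_cast at hcross hcd
    have hd0 : d = 0 := by simpa [ha.pos.ne'] using (Nat.add_eq_zero_iff.mp hcross).1
    rw [hd0, zero_pow two_ne_zero, add_zero] at hcd
    exact absurd (hcd ▸ hp) (Nat.Prime.not_prime_pow le_rfl)

lemma four_pow_mul_sq (n c : ℕ) : 4 ^ n * c ^ 2 = (2 ^ n * c) ^ 2 := by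
  rw [mul_pow, ← pow_mul, mul_comm n 2, pow_mul, show 2 ^ 2 = 4 by rfl]

section

variable {n ℓ : ℕ} (hn : n ≠ 0)
include hn

lemma even_two_pow_mul (b : ℕ) : Even (2 ^ n * b) :=
  (Nat.even_pow.mpr ⟨even_two, hn⟩).mul_right b

lemma odd_of_sq_add_two_pow_mul_sq (hℓ : Odd ℓ) {a b : ℕ} (h : a ^ 2 + (2 ^ n * b) ^ 2 = ℓ) :
    Odd a := by
  rw [← h, Nat.odd_add] at hℓ
  exact (Nat.odd_pow_iff two_ne_zero).mp
    (hℓ.mpr ((even_two_pow_mul hn b).pow_of_ne_zero two_ne_zero))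

lemma sq_add_two_pow_mul_sq_unique (hp : ℓ.Prime) (hℓ : Odd ℓ) {a b c d : ℕ}
    (hab : a ^ 2 + (2 ^ n * b) ^ 2 = ℓ) (hcd : c ^ 2 + (2 ^ n * d) ^ 2 = ℓ) :
    a = c ∧ b = d := by
  obtain ⟨hac, hbd⟩ := sq_add_sq_unique hp hab hcd (odd_of_sq_add_two_pow_mul_sq hn hℓ hab)
    (even_two_pow_mul hn b) (odd_of_sq_add_two_pow_mul_sq hn hℓ hcd)
  exact ⟨hac, Nat.eq_of_mul_eq_mul_left (by positivity) hbd⟩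

lemma exists_odd_sq_add_sq_iff (hp : ℓ.Prime) (hℓ : Odd ℓ) :
    (∃ i j : ℕ, 4 ^ n * (2 * i + 1) ^ 2 + (2 * j + 1) ^ 2 = ℓ) ↔
      IsSqAddFourPowMulSq n ℓ ∧ ¬ IsSqAddFourPowMulSq (n + 1) ℓ := by
  constructor
  · rintro ⟨i, j, hij⟩
    rw [four_pow_mul_sq, add_comm] at hij
    refine ⟨⟨_, _, hij⟩, fun ⟨a, b, hab⟩ ↦ ?_⟩
    rw [pow_succ 2, mul_assoc] at hab
    have := (sq_add_two_pow_mul_sq_unique hn hp hℓ hij hab).2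
    lia
  · rintro ⟨⟨a, b, hab⟩, hsucc⟩
    obtain ⟨j, rfl⟩ := odd_of_sq_add_two_pow_mul_sq hn hℓ hab
    obtain ⟨i, rfl⟩ : Odd b := by
      refine Nat.not_even_iff_odd.mp fun heven ↦ hsucc ?_
      obtain ⟨c, rfl⟩ := heven.two_dvd
      exact ⟨2 * j + 1, c, by rw [← hab]; ring⟩
    exact ⟨i, j, by rw [four_pow_mul_sq, add_comm, hab]⟩

lemma card_odd_sq_add_sq_le_one (hp : ℓ.Prime) (hℓ : Odd ℓ) (S : Finset (ℕ × ℕ)) :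
    (S.filter fun s ↦ 4 ^ n * (2 * s.1 + 1) ^ 2 + (2 * s.2 + 1) ^ 2 = ℓ).card ≤ 1 := by
  refine Finset.card_le_one.mpr fun s hs t ht ↦ ?_
  have hs := (Finset.mem_filter.mp hs).2
  have ht := (Finset.mem_filter.mp ht).2
  rw [four_pow_mul_sq, add_comm] at hs ht
  obtain ⟨hsnd, hfst⟩ := sq_add_two_pow_mul_sq_unique hn hp hℓ hs ht
  ext <;> lia

theorem etaCoeff_nuR_eq_one_iff (hp : ℓ.Prime) (hℓ : 4 ^ n + 1 ≤ ℓ) :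
    etaCoeff (24 * (4 ^ n + 1)) (nuR (24 * (4 ^ n + 1)) ℓ) = 1 ↔
      IsSqAddFourPowMulSq n ℓ ∧ ¬ IsSqAddFourPowMulSq (n + 1) ℓ := by
  have hodd : Odd ℓ := hp.odd_of_ne_two (by have := Nat.le_self_pow hn 4; lia)
  have hcard := card_odd_sq_add_sq_le_one hn hp hodd (.range (2 * ℓ) ×ˢ .range (2 * ℓ))
  rw [nuR_eq_self (by positivity) hℓ, etaCoeff_eq_card n hp.ne_zero,
    ← exists_odd_sq_add_sq_iff hn hp hodd]
  set S := (Finset.range (2 * ℓ) ×ˢ Finset.range (2 * ℓ)).filter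
    fun s ↦ 4 ^ n * (2 * s.1 + 1) ^ 2 + (2 * s.2 + 1) ^ 2 = ℓ
  have hone : (S.card : ZMod 2) = 1 ↔ 0 < S.card := by
    interval_cases S.card <;> simp
  rw [hone, Finset.card_pos]
  refine ⟨fun ⟨s, hs⟩ ↦ ⟨_, _, (Finset.mem_filter.mp hs).2⟩, fun ⟨i, j, hij⟩ ↦ ⟨(i, j), ?_⟩⟩
  have hi : 2 * i + 1 ≤ 4 ^ n * (2 * i + 1) ^ 2 :=
    (Nat.le_self_pow two_ne_zero _).trans (Nat.le_mul_of_pos_left _ (by positivity))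
  simp only [S, Finset.mem_filter, Finset.mem_product, Finset.mem_range]
  refine ⟨⟨?_, ?_⟩, hij⟩ <;> lia

end

end RepresentedPrimes

section GaussianCoefficients

open Zsqrtd

lemma associated_pow_multiplicity_succ {M : Type*} [CommMonoidWithZero M] [IsCancelMulZero M]
    {p r a : M} {k : ℕ} (hp : Prime p) (hr : Prime r) (hdvd : r ^ k ∣ p * a)
    (hndvd : ¬ r ^ k ∣ a) : Associated (p ^ (multiplicity p a + 1)) (r ^ k) := by
  have hrp : Associated r p := (hr.dvd_prime_iff_associated hp).mp <| by
    by_contra hrp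
    exact hndvd (hr.pow_dvd_of_dvd_mul_left k hrp hdvd)
  rw [hrp.pow_pow.dvd_iff_dvd_left] at hdvd hndvd
  obtain _ | k := k
  · simp at hndvd
  rw [pow_succ', mul_dvd_mul_iff_left hp.ne_zero] at hdvd
  rw [multiplicity_eq_of_dvd_of_not_dvd hdvd hndvd]
  exact hrp.symm.pow_pow

lemma finite_setOf_gaussian_norm_eq (n : ℕ) : {z : GaussianInt | z.norm = n}.Finite := by
  refine ((Finset.Icc (-(n : ℤ)) n ×ˢ Finset.Icc (-(n : ℤ)) n).finite_toSet.image
    fun p ↦ (⟨p.1, p.2⟩ : GaussianInt)).subset fun z hz ↦ ⟨(z.re, z.im), ?_, rfl⟩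
  simp only [Set.mem_ofPred_eq, norm_def] at hz
  simp only [Finset.coe_product, Finset.coe_Icc, Set.mem_prod, Set.mem_Icc]
  refine ⟨⟨?_, ?_⟩, ?_, ?_⟩ <;> nlinarith [mul_self_nonneg z.re, mul_self_nonneg z.im]

/-- The Gaussian integers of norm `n`. -/
noncomputable def normFiber (n : ℕ) : Finset GaussianInt :=
  (finite_setOf_gaussian_norm_eq n).toFinset

lemma mem_normFiber {n : ℕ} {z : GaussianInt} : z ∈ normFiber n ↔ z.norm = n := by
  simp [normFiber]

lemma normFiber_one : normFiber 1 = {1, -1, ⟨0, 1⟩, ⟨0, -1⟩} := by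
  ext ⟨a, b⟩
  rw [mem_normFiber, norm_def]
  simp only [Finset.mem_insert, Finset.mem_singleton, Zsqrtd.ext_iff, re_one, im_one, re_neg,
    im_neg]
  constructor
  · intro h
    rw [Nat.cast_one] at h
    have ha : -1 ≤ a ∧ a ≤ 1 := by constructor <;> nlinarith [mul_self_nonneg b]
    have hb : -1 ≤ b ∧ b ≤ 1 := by constructor <;> nlinarith [mul_self_nonneg a]
    obtain ⟨ha1, ha2⟩ := ha
    obtain ⟨hb1, hb2⟩ := hb
    interval_cases a <;> interval_cases b <;> simp_all
  · rintro (⟨rfl, rfl⟩ | ⟨rfl, rfl⟩ | ⟨rfl, rfl⟩ | ⟨rfl, rfl⟩) <;> simp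

lemma card_normFiber_one : (normFiber 1).card = 4 := by
  rw [normFiber_one]
  decide

lemma mem_normFiber_one {z : GaussianInt} : z ∈ normFiber 1 ↔ IsUnit z := by
  rw [mem_normFiber, ← norm_eq_one_iff' (by norm_num)]
  simp

open Classical in
/-- The von Mangoldt function of the Gaussian integers: `log (N p)` on the associates of the
positive powers of a prime `p`, and `0` elsewhere. -/
noncomputable def gaussianMangoldt (y : GaussianInt) : ℝ :=
  if h : ∃ p : GaussianInt, Prime p ∧ ∃ k : ℕ, 0 < k ∧ Associated (p ^ k) y then
    Real.log h.choose.norm else 0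

lemma gaussianMangoldt_eq_log {y p : GaussianInt} (hp : Prime p) {k : ℕ} (hk : 0 < k)
    (h : Associated (p ^ k) y) : gaussianMangoldt y = Real.log p.norm := by
  have hex : ∃ p : GaussianInt, Prime p ∧ ∃ k : ℕ, 0 < k ∧ Associated (p ^ k) y :=
    ⟨p, hp, k, hk, h⟩
  rw [gaussianMangoldt, dif_pos hex]
  obtain ⟨hq, j, hj, hqj⟩ := hex.choose_spec
  have h1 : hex.choose ∣ p := hq.dvd_of_dvd_pow (n := k)
    ((dvd_pow_self _ hj.ne').trans (hqj.trans h.symm).dvd)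
  rw [norm_eq_of_associated (by norm_num) ((hq.dvd_prime_iff_associated hp).mp h1)]

lemma exists_prime_of_gaussianMangoldt_ne_zero {y : GaussianInt} (h : gaussianMangoldt y ≠ 0) :
    ∃ p : GaussianInt, Prime p ∧ ∃ k : ℕ, 0 < k ∧ Associated (p ^ k) y := by
  by_contra h'
  exact h (dif_neg h')

lemma one_le_gaussian_norm {z : GaussianInt} (hz : z ≠ 0) : (1 : ℤ) ≤ z.norm :=
  GaussianInt.norm_pos.mpr hz

lemma gaussianMangoldt_nonneg (y : GaussianInt) : 0 ≤ gaussianMangoldt y := by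
  by_cases h : gaussianMangoldt y = 0
  · rw [h]
  · obtain ⟨p, hp, k, hk, hy⟩ := exists_prime_of_gaussianMangoldt_ne_zero h
    rw [gaussianMangoldt_eq_log hp hk hy]
    exact Real.log_nonneg (by exact_mod_cast one_le_gaussian_norm hp.ne_zero)

lemma gaussianMangoldt_of_isUnit {y : GaussianInt} (hy : IsUnit y) : gaussianMangoldt y = 0 := by
  by_contra h
  obtain ⟨p, hp, k, hk, hpk⟩ := exists_prime_of_gaussianMangoldt_ne_zero h
  exact hp.not_isUnit (isUnit_of_dvd_unit ((dvd_pow_self _ hk.ne').trans hpk.dvd) hy)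

lemma gaussian_norm_dvd {y z : GaussianInt} (h : y ∣ z) : y.norm ∣ z.norm := by
  obtain ⟨w, rfl⟩ := h
  exact ⟨_, norm_mul _ _⟩

lemma finite_setOf_gaussian_dvd {z : GaussianInt} (hz : z ≠ 0) : {y | y ∣ z}.Finite := by
  refine ((Finset.range (z.norm.natAbs + 1)).biUnion normFiber).finite_toSet.subset fun y hy ↦ ?_
  have h1 := Int.le_of_dvd (one_le_gaussian_norm hz) (gaussian_norm_dvd hy)
  have h2 := GaussianInt.norm_nonneg y
  simp only [Finset.coe_biUnion, Set.mem_iUnion, Finset.mem_coe, Finset.mem_range, mem_normFiber]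
  exact ⟨y.norm.natAbs, by lia, by lia⟩

open Classical in
/-- The divisors of a nonzero Gaussian integer; by convention `0` has none. -/
noncomputable def gaussianDivisors (z : GaussianInt) : Finset GaussianInt :=
  if hz : z = 0 then ∅ else (finite_setOf_gaussian_dvd hz).toFinset

lemma mem_gaussianDivisors {y z : GaussianInt} (hz : z ≠ 0) :
    y ∈ gaussianDivisors z ↔ y ∣ z := by
  simp [gaussianDivisors, hz]

open Classical in
lemma sum_gaussianMangoldt_gaussianDivisors_prime_mul {p a : GaussianInt} (hp : Prime p)
    (ha : a ≠ 0) :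
    ∑ y ∈ gaussianDivisors (p * a), gaussianMangoldt y =
      4 * Real.log p.norm + ∑ y ∈ gaussianDivisors a, gaussianMangoldt y := by
  have hpa := mul_ne_zero hp.ne_zero ha
  have hsub : gaussianDivisors a ⊆ gaussianDivisors (p * a) := fun y hy ↦
    (mem_gaussianDivisors hpa).mpr (((mem_gaussianDivisors ha).mp hy).mul_left p)
  set q := p ^ (multiplicity p a + 1) with hq
  have himage : (normFiber 1).image (· * q) ⊆
      gaussianDivisors (p * a) \ gaussianDivisors a := by
    refine Finset.image_subset_iff.mpr fun u hu ↦ ?_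
    rw [Finset.mem_sdiff, mem_gaussianDivisors hpa, mem_gaussianDivisors ha,
      (mem_normFiber_one.mp hu).mul_left_dvd, (mem_normFiber_one.mp hu).mul_left_dvd, hq]
    exact ⟨pow_succ' p _ ▸ mul_dvd_mul_left p (pow_multiplicity_dvd p a),
      (FiniteMultiplicity.of_prime_left hp ha).not_pow_dvd_of_multiplicity_lt (Nat.lt_succ_self _)⟩
  have hzero : ∀ y ∈ gaussianDivisors (p * a) \ gaussianDivisors a,
      y ∉ (normFiber 1).image (· * q) → gaussianMangoldt y = 0 := by
    intro y hy hyq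
    by_contra hne
    obtain ⟨r, hr, k, -, hrk⟩ := exists_prime_of_gaussianMangoldt_ne_zero hne
    rw [Finset.mem_sdiff, mem_gaussianDivisors hpa, mem_gaussianDivisors ha,
      ← hrk.dvd_iff_dvd_left, ← hrk.dvd_iff_dvd_left] at hy
    obtain ⟨u, rfl⟩ := (associated_pow_multiplicity_succ hp hr hy.1 hy.2).trans hrk
    exact hyq (Finset.mem_image.mpr ⟨u, mem_normFiber_one.mpr u.isUnit, mul_comm _ _⟩)
  have hlog : ∀ u ∈ normFiber 1, gaussianMangoldt (u * q) = Real.log p.norm := by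
    intro u hu
    obtain ⟨v, rfl⟩ := mem_normFiber_one.mp hu
    exact gaussianMangoldt_eq_log hp (Nat.succ_pos _) ⟨v, mul_comm _ _⟩
  rw [← Finset.sum_sdiff hsub, ← Finset.sum_subset himage hzero,
    Finset.sum_image (mul_left_injective₀ (pow_ne_zero _ hp.ne_zero)).injOn,
    Finset.sum_congr rfl hlog, Finset.sum_const, card_normFiber_one, nsmul_eq_mul, Nat.cast_ofNat]

lemma sum_gaussianMangoldt_gaussianDivisors {z : GaussianInt} (hz : z ≠ 0) :
    ∑ y ∈ gaussianDivisors z, gaussianMangoldt y = 4 * Real.log z.norm := by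
  induction z using UniqueFactorizationMonoid.induction_on_prime with
  | h₁ => exact absurd rfl hz
  | h₂ x hx =>
    rw [(norm_eq_one_iff' (by norm_num) x).mpr hx, Int.cast_one, Real.log_one, mul_zero]
    exact Finset.sum_eq_zero fun y hy ↦ gaussianMangoldt_of_isUnit
      (isUnit_of_dvd_unit ((mem_gaussianDivisors hz).mp hy) hx)
  | h₃ a p ha hp ih =>
    rw [sum_gaussianMangoldt_gaussianDivisors_prime_mul hp ha, ih ha, norm_mul, Int.cast_mul,
      Real.log_mul (mod_cast (GaussianInt.norm_pos.mpr hp.ne_zero).ne')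
        (mod_cast (GaussianInt.norm_pos.mpr ha).ne'), mul_add]

end GaussianCoefficients

section GaussianConvolution

open Zsqrtd hiding norm_mul norm_natCast

/-- The coefficients of the Dirichlet series `¼ ∑ f z / N z ^ s` over nonzero Gaussian integers. The
factor `¼` makes it a sum over ideals when `f` is invariant under the four units. -/
noncomputable def gaussianCoeff (f : GaussianInt → ℂ) : ArithmeticFunction ℂ :=
  ⟨fun n ↦ if n = 0 then 0 else (∑ z ∈ normFiber n, f z) / 4, if_pos rfl⟩

lemma gaussianCoeff_apply (f : GaussianInt → ℂ) {n : ℕ} (hn : n ≠ 0) :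
    gaussianCoeff f n = (∑ z ∈ normFiber n, f z) / 4 :=
  if_neg hn

/-- The coefficients of the negative logarithmic derivative attached to `gaussianCoeff f`. -/
noncomputable def gaussianMangoldtCoeff (f : GaussianInt → ℂ) : ArithmeticFunction ℂ :=
  gaussianCoeff fun z ↦ f z * gaussianMangoldt z

lemma ne_zero_of_mem_normFiber {n : ℕ} (hn : n ≠ 0) {z : GaussianInt} (hz : z ∈ normFiber n) :
    z ≠ 0 := by
  rintro rfl
  rw [mem_normFiber, norm_zero] at hz
  exact hn (by exact_mod_cast hz.symm)

lemma sum_normFiber_gaussianDivisors {M : Type*} [AddCommMonoid M]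
    (F : GaussianInt → GaussianInt → M) {n : ℕ} (hn : n ≠ 0) :
    ∑ z ∈ normFiber n, ∑ y ∈ gaussianDivisors z, F (z / y) y =
      ∑ d ∈ n.divisorsAntidiagonal, ∑ w ∈ normFiber d.1, ∑ y ∈ normFiber d.2, F w y := by
  simp_rw [← Finset.sum_product', Finset.sum_sigma']
  have hdiv : ∀ q ∈ (normFiber n).sigma gaussianDivisors,
      q.2 ≠ 0 ∧ q.1 / q.2 * q.2 = q.1 ∧ q.1.norm = n := by
    rintro ⟨z, y⟩ hq
    obtain ⟨hz : z ∈ _, hy : y ∈ gaussianDivisors z⟩ := Finset.mem_sigma.mp hq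
    have hz0 := ne_zero_of_mem_normFiber hn hz
    obtain ⟨w, rfl⟩ := (mem_gaussianDivisors hz0).mp hy
    have hy0 := left_ne_zero_of_mul hz0
    exact ⟨hy0, by simp only [mul_div_cancel_left₀ _ hy0, mul_comm], mem_normFiber.mp hz⟩
  refine Finset.sum_bij' (fun q _ ↦ ⟨((q.1 / q.2).norm.natAbs, q.2.norm.natAbs),
    (q.1 / q.2, q.2)⟩) (fun q _ ↦ ⟨q.2.1 * q.2.2, q.2.2⟩) ?_ ?_ ?_ ?_ fun _ _ ↦ rfl
  · rintro ⟨z, y⟩ hq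
    obtain ⟨-, hzy, hz⟩ := hdiv _ hq
    dsimp only at hzy hz ⊢
    simp only [Finset.mem_sigma, Nat.mem_divisorsAntidiagonal, Finset.mem_product, mem_normFiber,
      GaussianInt.natCast_natAbs_norm, Int.cast_id, and_true, ← Int.natAbs_mul,
      ← Zsqrtd.norm_mul, hzy, hz, Int.natAbs_natCast, true_and]
    exact hn
  · rintro ⟨⟨d, e⟩, ⟨w, y⟩⟩ hq
    simp only [Finset.mem_sigma, Nat.mem_divisorsAntidiagonal, Finset.mem_product,
      mem_normFiber] at hq ⊢
    obtain ⟨⟨rfl, hde⟩, hw, hy⟩ := hq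
    have hwy : (w * y).norm = (d * e : ℕ) := by rw [Zsqrtd.norm_mul, hw, hy, Nat.cast_mul]
    exact ⟨hwy, (mem_gaussianDivisors (ne_zero_of_mem_normFiber hde (mem_normFiber.mpr hwy))).mpr
      (dvd_mul_left _ _)⟩
  · rintro ⟨z, y⟩ hq
    exact Sigma.ext (hdiv _ hq).2.1 HEq.rfl
  · rintro ⟨⟨d, e⟩, ⟨w, y⟩⟩ hq
    simp only [Finset.mem_sigma, Nat.mem_divisorsAntidiagonal, Finset.mem_product,
      mem_normFiber] at hq
    obtain ⟨⟨rfl, hde⟩, hw, hy⟩ := hq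
    have hy0 := ne_zero_of_mem_normFiber (right_ne_zero_of_mul hde) (mem_normFiber.mpr hy)
    simp only [mul_div_cancel_right₀ _ hy0, hw, hy, Int.natAbs_natCast]

lemma gaussianCoeff_mul_apply (f g : GaussianInt → ℂ) {n : ℕ} (hn : n ≠ 0) :
    (gaussianCoeff f * gaussianCoeff g) n =
      (∑ z ∈ normFiber n, ∑ y ∈ gaussianDivisors z, f (z / y) * g y) / 16 := by
  rw [sum_normFiber_gaussianDivisors (fun w y ↦ f w * g y) hn, ArithmeticFunction.mul_apply,
    Finset.sum_div]
  refine Finset.sum_congr rfl fun d hd ↦ ?_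
  obtain ⟨rfl, hd0⟩ := Nat.mem_divisorsAntidiagonal.mp hd
  rw [gaussianCoeff_apply _ (left_ne_zero_of_mul hd0),
    gaussianCoeff_apply _ (right_ne_zero_of_mul hd0), div_mul_div_comm, Finset.sum_mul_sum]
  norm_num

lemma gaussianCoeff_mul_gaussianMangoldtCoeff (ψ : GaussianInt →* ℂ) (n : ℕ) :
    (gaussianCoeff ψ * gaussianMangoldtCoeff ψ) n = gaussianCoeff ψ n * Real.log n := by
  rcases eq_or_ne n 0 with rfl | hn
  · simp
  have hsum : ∀ z ∈ normFiber n, ∑ y ∈ gaussianDivisors z, ψ (z / y) * (ψ y * gaussianMangoldt y) =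
      ψ z * (4 * Real.log n) := by
    intro z hz
    have hz0 := ne_zero_of_mem_normFiber hn hz
    have hterm : ∀ y ∈ gaussianDivisors z,
        ψ (z / y) * (ψ y * gaussianMangoldt y) = ψ z * gaussianMangoldt y := by
      intro y hy
      obtain ⟨w, rfl⟩ := (mem_gaussianDivisors hz0).mp hy
      rw [mul_div_cancel_left₀ _ (left_ne_zero_of_mul hz0), map_mul]
      ring
    rw [Finset.sum_congr rfl hterm, ← Finset.mul_sum, ← Complex.ofReal_sum,
      sum_gaussianMangoldt_gaussianDivisors hz0, mem_normFiber.mp hz]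
    push_cast
    rfl
  rw [gaussianMangoldtCoeff, gaussianCoeff_mul_apply _ _ hn, Finset.sum_congr rfl hsum,
    ← Finset.sum_mul, gaussianCoeff_apply _ hn]
  ring

lemma gaussianCoeff_one {f : GaussianInt → ℂ} (hf : ∀ u, IsUnit u → f u = 1) :
    gaussianCoeff f 1 = 1 := by
  rw [gaussianCoeff_apply _ one_ne_zero, Finset.sum_congr rfl (g := fun _ ↦ 1)
    fun u hu ↦ hf u (mem_normFiber_one.mp hu)]
  simp [card_normFiber_one]

lemma gaussianMangoldtCoeff_one (f : GaussianInt → ℂ) : gaussianMangoldtCoeff f 1 = 0 := by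
  rw [gaussianMangoldtCoeff, gaussianCoeff_apply _ one_ne_zero, Finset.sum_eq_zero, zero_div]
  intro u hu
  rw [gaussianMangoldt_of_isUnit (mem_normFiber_one.mp hu), Complex.ofReal_zero, mul_zero]

lemma exists_nat_prime_dvd_of_gaussian_prime {p : GaussianInt} (hp : Prime p) :
    ∃ ℓ : ℕ, ℓ.Prime ∧ p ∣ (ℓ : GaussianInt) := by
  have hdvd : p ∣ ((p.norm.natAbs.primeFactorsList.prod : ℕ) : GaussianInt) := by
    rw [Nat.prod_primeFactorsList (by simpa using hp.ne_zero),
      GaussianInt.natCast_natAbs_norm, norm_eq_mul_conj]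
    exact dvd_mul_right p _
  rw [Nat.cast_list_prod, hp.dvd_prod_iff] at hdvd
  obtain ⟨_, hmem, hpa⟩ := hdvd
  obtain ⟨ℓ, hℓ, rfl⟩ := List.mem_map.mp hmem
  exact ⟨ℓ, Nat.prime_of_mem_primeFactorsList hℓ, hpa⟩

lemma exists_gaussian_norm_eq_prime_pow {p : GaussianInt} (hp : Prime p) :
    ∃ ℓ j : ℕ, ℓ.Prime ∧ j ≠ 0 ∧ j ≤ 2 ∧ p.norm = (ℓ : ℤ) ^ j := by
  obtain ⟨ℓ, hℓ, hpℓ⟩ := exists_nat_prime_dvd_of_gaussian_prime hp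
  have hdvd : p.norm.natAbs ∣ ℓ ^ 2 := by
    have h := Int.natAbs_dvd_natAbs.mpr (gaussian_norm_dvd hpℓ)
    rwa [Zsqrtd.norm_natCast, Int.natAbs_mul, Int.natAbs_natCast, ← sq] at h
  obtain ⟨j, hj, hpj⟩ := (Nat.dvd_prime_pow hℓ).mp hdvd
  have hnorm : p.norm = (ℓ : ℤ) ^ j := by
    rw [← Nat.cast_pow, ← hpj, GaussianInt.natCast_natAbs_norm, Int.cast_id]
  refine ⟨ℓ, j, hℓ, ?_, hj, hnorm⟩
  rintro rfl
  exact hp.not_isUnit ((norm_eq_one_iff' (by norm_num) p).mp (by simpa using hnorm))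

lemma gaussian_norm_pow (z : GaussianInt) (k : ℕ) : (z ^ k).norm = z.norm ^ k :=
  map_pow normMonoidHom z k

lemma gaussianMangoldt_le {n : ℕ} {y : GaussianInt} (hy : y ∈ normFiber n) :
    gaussianMangoldt y ≤ 2 * ArithmeticFunction.vonMangoldt n := by
  by_cases h : gaussianMangoldt y = 0
  · rw [h]
    exact mul_nonneg zero_le_two ArithmeticFunction.vonMangoldt_nonneg
  obtain ⟨p, hp, k, hk, hpk⟩ := exists_prime_of_gaussianMangoldt_ne_zero h
  obtain ⟨ℓ, j, hℓ, hj0, hj2, hnorm⟩ := exists_gaussian_norm_eq_prime_pow hp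
  have hn : n = ℓ ^ (j * k) := by
    rw [mem_normFiber, ← norm_eq_of_associated (by norm_num) hpk, gaussian_norm_pow, hnorm,
      ← pow_mul] at hy
    exact_mod_cast hy.symm
  rw [gaussianMangoldt_eq_log hp hk hpk, hn, hnorm,
    ArithmeticFunction.vonMangoldt_apply_pow (mul_ne_zero hj0 hk.ne'),
    ArithmeticFunction.vonMangoldt_apply_prime hℓ, Int.cast_pow, Int.cast_natCast, Real.log_pow]
  exact mul_le_mul_of_nonneg_right (mod_cast hj2) (Real.log_natCast_nonneg ℓ)

lemma associated_of_prime_dvd_of_norm_eq {p r x y : GaussianInt} {j k : ℕ} (hp : Prime p)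
    (hr : Prime r) (hx : Associated (p ^ k) x) (hy : Associated (r ^ j) y) (hrx : r ∣ x)
    (hnorm : x.norm = y.norm) : Associated x y := by
  have hpr : Associated p r := ((hr.dvd_prime_iff_associated hp).mp
    (hr.dvd_of_dvd_pow (hrx.trans hx.symm.dvd))).symm
  have hpow : p.norm ^ k = p.norm ^ j := by
    rw [← gaussian_norm_pow, ← gaussian_norm_pow, norm_eq_of_associated (by norm_num) hx,
      norm_eq_of_associated (by norm_num) (hpr.pow_pow.trans hy), hnorm]
  have hlt : 1 < p.norm := (one_le_gaussian_norm hp.ne_zero).lt_of_ne' fun h ↦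
    hp.not_isUnit ((norm_eq_one_iff' (by norm_num) p).mp h)
  obtain rfl := Int.pow_right_injective (by lia : 2 ≤ p.norm.natAbs) hpow
  exact hx.symm.trans (hpr.pow_pow.trans hy)

open Classical in
lemma card_filter_gaussianMangoldt_ne_zero_le (n : ℕ) :
    ((normFiber n).filter fun y ↦ gaussianMangoldt y ≠ 0).card ≤ 8 := by
  rcases Finset.eq_empty_or_nonempty ((normFiber n).filter fun y ↦ gaussianMangoldt y ≠ 0)
    with h | ⟨x, hx⟩
  · simp [h]
  obtain ⟨hxn, hx⟩ := Finset.mem_filter.mp hx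
  obtain ⟨p, hp, k, -, hpx⟩ := exists_prime_of_gaussianMangoldt_ne_zero hx
  have hp_star : Prime (star p) :=
    (MulEquiv.prime_iff (starRingAut : GaussianInt ≃+* GaussianInt)).mpr hp
  have hpx_star : Associated (star p ^ k) (star x) := by
    simpa using hpx.map (starRingAut : GaussianInt ≃+* GaussianInt)
  have hsub : ((normFiber n).filter fun y ↦ gaussianMangoldt y ≠ 0) ⊆
      (normFiber 1).image (x * ·) ∪ (normFiber 1).image (star x * ·) := by
    intro y hy
    obtain ⟨hyn, hy⟩ := Finset.mem_filter.mp hy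
    obtain ⟨r, hr, j, hj, hry⟩ := exists_prime_of_gaussianMangoldt_ne_zero hy
    have hxy : x.norm = y.norm := (mem_normFiber.mp hxn).trans (mem_normFiber.mp hyn).symm
    have hrx : r ∣ x * star x := by
      rw [← norm_eq_mul_conj, hxy, norm_eq_mul_conj]
      exact ((dvd_pow_self r hj.ne').trans hry.dvd).mul_right _
    refine Finset.mem_union.mpr ((hr.dvd_or_dvd hrx).imp (fun h ↦ ?_) fun h ↦ ?_)
    · obtain ⟨u, hu⟩ := associated_of_prime_dvd_of_norm_eq hp hr hpx hry h hxy
      exact Finset.mem_image.mpr ⟨u, mem_normFiber_one.mpr u.isUnit, hu⟩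
    · obtain ⟨u, hu⟩ := associated_of_prime_dvd_of_norm_eq hp_star hr hpx_star hry h
        ((norm_conj x).trans hxy)
      exact Finset.mem_image.mpr ⟨u, mem_normFiber_one.mpr u.isUnit, hu⟩
  calc ((normFiber n).filter fun y ↦ gaussianMangoldt y ≠ 0).card
      ≤ ((normFiber 1).image (x * ·)).card + ((normFiber 1).image (star x * ·)).card :=
        (Finset.card_le_card hsub).trans (Finset.card_union_le _ _)
    _ ≤ 4 + 4 := by
        rw [← card_normFiber_one]
        exact add_le_add Finset.card_image_le Finset.card_image_le

lemma sum_gaussianMangoldt_normFiber_le (n : ℕ) :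
    ∑ y ∈ normFiber n, gaussianMangoldt y ≤ 16 * ArithmeticFunction.vonMangoldt n := by
  rw [← Finset.sum_filter_ne_zero]
  refine (Finset.sum_le_card_nsmul _ _ _ fun y hy ↦
    gaussianMangoldt_le (Finset.mem_filter.mp hy).1).trans ?_
  rw [nsmul_eq_mul]
  have : (((normFiber n).filter fun y ↦ gaussianMangoldt y ≠ 0).card : ℝ) ≤ 8 := by
    exact_mod_cast card_filter_gaussianMangoldt_ne_zero_le n
  nlinarith [ArithmeticFunction.vonMangoldt_nonneg (n := n)]

lemma norm_gaussianMangoldtCoeff_le {f : GaussianInt → ℂ} (hf : ∀ z, ‖f z‖ ≤ 1) (n : ℕ) :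
    ‖gaussianMangoldtCoeff f n‖ ≤ 4 * ArithmeticFunction.vonMangoldt n := by
  rcases eq_or_ne n 0 with rfl | hn
  · simp
  rw [gaussianMangoldtCoeff, gaussianCoeff_apply _ hn, norm_div, div_le_iff₀ (by simp)]
  refine (norm_sum_le _ _).trans ((Finset.sum_le_sum fun z _ ↦ ?_).trans
    ((sum_gaussianMangoldt_normFiber_le n).trans_eq (by norm_num; ring)))
  rw [norm_mul, Complex.norm_real, Real.norm_of_nonneg (gaussianMangoldt_nonneg z)]
  exact mul_le_of_le_one_left (gaussianMangoldt_nonneg z) (hf z)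

lemma lSeriesSummable_gaussianMangoldtCoeff {f : GaussianInt → ℂ} (hf : ∀ z, ‖f z‖ ≤ 1) {s : ℂ}
    (hs : 1 < s.re) : LSeriesSummable (gaussianMangoldtCoeff f) s := by
  have h := (ArithmeticFunction.LSeriesSummable_vonMangoldt hs).norm.mul_left 4
  refine Summable.of_norm_bounded h fun n ↦ ?_
  rcases eq_or_ne n 0 with rfl | hn
  · simp
  rw [LSeries.term_of_ne_zero hn, LSeries.term_of_ne_zero hn, norm_div, norm_div, ← mul_div_assoc]
  gcongr
  refine (norm_gaussianMangoldtCoeff_le hf n).trans_eq ?_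
  rw [Complex.norm_real, Real.norm_of_nonneg ArithmeticFunction.vonMangoldt_nonneg]

end GaussianConvolution

section GaussianLattice

open Zsqrtd hiding norm_mul norm_natCast
open HurwitzZeta

lemma gaussian_norm_eq_sq_add_sq (z : GaussianInt) : z.norm = z.re ^ 2 + z.im ^ 2 := by
  rw [norm_def]
  ring

/-- Coordinates of Gaussian integers. -/
def gaussianEquivProd : GaussianInt ≃ ℤ × ℤ where
  toFun z := (z.re, z.im)
  invFun p := ⟨p.1, p.2⟩
  left_inv _ := rfl
  right_inv _ := rfl

lemma summable_int_prod_norm_rpow {σ : ℝ} (hσ : 2 < σ) :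
    Summable fun p : ℤ × ℤ ↦ ‖p‖ ^ (-σ) := by
  refine ((finTwoArrowEquiv ℤ).symm.summable_iff.mpr
    (EisensteinSeries.summable_one_div_norm_rpow hσ)).congr fun p ↦ ?_
  simp [EisensteinSeries.norm_eq_max_natAbs, Prod.norm_def, Int.norm_eq_abs]

lemma summable_sq_add_sq_rpow (α β : ℝ) {σ : ℝ} (hσ : 1 < σ) :
    Summable fun p : ℤ × ℤ ↦ ((p.1 + α) ^ 2 + (p.2 + β) ^ 2) ^ (-σ) := by
  have hbound := (summable_int_prod_norm_rpow (σ := 2 * σ) (by linarith)).mul_left (4 ^ σ)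
  have hlarge : ∀ᶠ p : ℤ × ℤ in cofinite, 2 * max |α| |β| + 1 ≤ ‖p‖ := by
    rw [← cocompact_eq_cofinite]
    exact tendsto_norm_cocompact_atTop.eventually_ge_atTop _
  refine Summable.of_norm_bounded_eventually hbound (hlarge.mono fun p hp ↦ ?_)
  have hp0 : 0 < ‖p‖ := by linarith [abs_nonneg α, le_max_left |α| |β|]
  have hα := le_max_left |α| |β|
  have hβ := le_max_right |α| |β|
  have hle : ‖p‖ ^ 2 / 4 ≤ (p.1 + α) ^ 2 + (p.2 + β) ^ 2 := by
    have hcoord : ∀ (m : ℤ) (γ : ℝ), ‖p‖ = |(m : ℝ)| → |γ| ≤ max |α| |β| →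
        ‖p‖ ^ 2 / 4 ≤ (m + γ) ^ 2 := by
      intro m γ hm hγ
      have htri : |(m : ℝ)| - |γ| ≤ |m + γ| := by simpa using abs_sub_abs_le_abs_sub (m : ℝ) (-γ)
      rw [← sq_abs (m + γ)]
      nlinarith
    rcases max_choice ‖p.1‖ ‖p.2‖ with hmax | hmax
    · exact (hcoord p.1 α hmax hα).trans (le_add_of_nonneg_right (sq_nonneg _))
    · exact (hcoord p.2 β hmax hβ).trans (le_add_of_nonneg_left (sq_nonneg _))
  rw [Real.norm_of_nonneg (by positivity)]
  refine (Real.rpow_le_rpow_of_nonpos (by positivity) hle (by linarith)).trans_eq ?_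
  rw [Real.div_rpow (by positivity) (by positivity), Real.rpow_neg (by norm_num : (0 : ℝ) ≤ 4),
    div_inv_eq_mul, mul_comm, ← Real.rpow_natCast, ← Real.rpow_mul hp0.le]
  norm_num

lemma summable_gaussian_norm_rpow {σ : ℝ} (hσ : 1 < σ) :
    Summable fun z : GaussianInt ↦ (z.norm : ℝ) ^ (-σ) := by
  refine (gaussianEquivProd.summable_iff.mpr (summable_sq_add_sq_rpow 0 0 hσ)).congr fun z ↦ ?_
  simp [gaussianEquivProd, gaussian_norm_eq_sq_add_sq]

lemma summable_gaussian_norm_cpow {f : GaussianInt → ℂ} {M : ℝ} (hf : ∀ z, ‖f z‖ ≤ M) {s : ℂ}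
    (hs : 1 < s.re) : Summable fun z : GaussianInt ↦ f z * (z.norm : ℂ) ^ (-s) := by
  refine Summable.of_norm_bounded ((summable_gaussian_norm_rpow hs).mul_left M) fun z ↦ ?_
  rw [norm_mul]
  rcases eq_or_ne z 0 with rfl | hz
  · have hs0 : -s ≠ 0 := neg_ne_zero.mpr fun h ↦ by norm_num [h] at hs
    rw [norm_zero, Int.cast_zero, Int.cast_zero, Complex.zero_cpow hs0,
      Real.zero_rpow (by linarith)]
    simp
  have hz0 : (0 : ℝ) < z.norm := by exact_mod_cast one_le_gaussian_norm hz
  rw [← Complex.ofReal_intCast, Complex.norm_cpow_eq_rpow_re_of_pos hz0, Complex.neg_re]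
  exact mul_le_mul_of_nonneg_right (hf z) (by positivity)

lemma lSeriesHasSum_gaussianCoeff {f : GaussianInt → ℂ} {s a : ℂ} (hs : s ≠ 0)
    (h : HasSum (fun z : GaussianInt ↦ f z * (z.norm : ℂ) ^ (-s)) a) :
    LSeriesHasSum (gaussianCoeff f) s (a / 4) := by
  have h1 := (h.tsum_fiberwise fun z ↦ z.norm.natAbs).div_const 4
  refine h1.congr_fun fun n ↦ ?_
  have hset : (fun z : GaussianInt ↦ z.norm.natAbs) ⁻¹' {n} = (normFiber n : Set GaussianInt) := by
    ext z
    rw [Set.mem_preimage, Set.mem_singleton_iff, Finset.mem_coe, mem_normFiber]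
    have := GaussianInt.norm_nonneg z
    lia
  rw [hset, Finset.tsum_subtype' (normFiber n) fun z : GaussianInt ↦ f z * (z.norm : ℂ) ^ (-s)]
  rcases eq_or_ne n 0 with rfl | hn
  · rw [LSeries.term_zero, Finset.sum_eq_zero, zero_div]
    intro z hz
    rw [mem_normFiber.mp hz, Nat.cast_zero, Int.cast_zero, Complex.zero_cpow (neg_ne_zero.mpr hs),
      mul_zero]
  · rw [LSeries.term_of_ne_zero hn, gaussianCoeff_apply _ hn, div_right_comm, Finset.sum_div]
    congr 1
    refine Finset.sum_congr rfl fun z hz ↦ ?_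
    rw [mem_normFiber.mp hz, Complex.cpow_neg, Int.cast_natCast, div_eq_mul_inv]

lemma lSeriesSummable_gaussianCoeff {f : GaussianInt → ℂ} {M : ℝ} (hf : ∀ z, ‖f z‖ ≤ M) {s : ℂ}
    (hs : 1 < s.re) : LSeriesSummable (gaussianCoeff f) s :=
  (lSeriesHasSum_gaussianCoeff (by rintro rfl; norm_num at hs)
    (summable_gaussian_norm_cpow hf hs).hasSum).LSeriesSummable

lemma isBigO_mul_sub_mul_rpow {f g : ℝ → ℂ} {a b : ℂ}
    (hf : ∀ r : ℝ, (f · - a) =O[atTop] (· ^ r)) (hg : ∀ r : ℝ, (g · - b) =O[atTop] (· ^ r))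
    (r : ℝ) : (fun x ↦ f x * g x - a * b) =O[atTop] (· ^ r) := by
  have hg_bdd : g =O[atTop] fun _ ↦ (1 : ℝ) := by
    simpa using ((hg 0).congr_right Real.rpow_zero).add
      (Asymptotics.isBigO_const_const b (one_ne_zero (α := ℝ)) atTop)
  refine ((((hf r).mul hg_bdd).congr_right fun x ↦ mul_one _).add
    ((hg r).const_mul_left a)).congr_left fun x ↦ ?_
  ring

/-- The product of two theta kernels, paired with its dual. Its Mellin transform is the completed
Epstein zeta function of the shifted lattice `ℤ² + (a, b)`. -/
noncomputable def evenKernelMulFEPair (a b : UnitAddCircle) : WeakFEPair ℂ where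
  f x := evenKernel a x * evenKernel b x
  g x := cosKernel a x * cosKernel b x
  hf_int := ((Complex.continuous_ofReal.comp_continuousOn (continuousOn_evenKernel a)).mul
    (Complex.continuous_ofReal.comp_continuousOn
      (continuousOn_evenKernel b))).locallyIntegrableOn measurableSet_Ioi
  hg_int := ((Complex.continuous_ofReal.comp_continuousOn (continuousOn_cosKernel a)).mul
    (Complex.continuous_ofReal.comp_continuousOn
      (continuousOn_cosKernel b))).locallyIntegrableOn measurableSet_Ioi
  k := 1
  hk := one_pos
  ε := 1
  hε := one_ne_zero
  f₀ := (hurwitzEvenFEPair a).f₀ * (hurwitzEvenFEPair b).f₀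
  g₀ := 1 * 1
  h_feq x hx := by
    have ha := (hurwitzEvenFEPair a).h_feq x hx
    have hb := (hurwitzEvenFEPair b).h_feq x hx
    simp only [hurwitzEvenFEPair, Function.comp_apply, smul_eq_mul, one_mul] at ha hb
    rw [ha, hb, mul_mul_mul_comm, ← Complex.ofReal_mul, ← Real.rpow_add hx, smul_eq_mul]
    norm_num
  hf_top := isBigO_mul_sub_mul_rpow (hurwitzEvenFEPair a).hf_top (hurwitzEvenFEPair b).hf_top
  hg_top := isBigO_mul_sub_mul_rpow (hurwitzEvenFEPair a).hg_top (hurwitzEvenFEPair b).hg_top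

lemma evenKernelMulFEPair_f₀ {a b : UnitAddCircle} (h : ¬ (a = 0 ∧ b = 0)) :
    (evenKernelMulFEPair a b).f₀ = 0 := by
  simp only [evenKernelMulFEPair, hurwitzEvenFEPair]
  split_ifs with ha hb
  · exact absurd ⟨ha, hb⟩ h
  all_goals simp

lemma hasSum_evenKernelMulFEPair_f (α β : ℝ) {t : ℝ} (ht : 0 < t) :
    HasSum (fun p : ℤ × ℤ ↦
        ((Real.exp (-Real.pi * ((p.1 + α) ^ 2 + (p.2 + β) ^ 2) * t) : ℝ) : ℂ))
      ((evenKernelMulFEPair α β).f t) := by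
  have hα := hasSum_int_evenKernel α ht
  have hβ := hasSum_int_evenKernel β ht
  have hmul := hα.mul hβ (hα.summable.mul_of_nonneg hβ.summable (fun _ ↦ Real.exp_nonneg _)
    fun _ ↦ Real.exp_nonneg _)
  simp only [evenKernelMulFEPair]
  rw [← Complex.ofReal_mul]
  refine (Complex.hasSum_ofReal.mpr hmul).congr_fun fun p ↦ ?_
  rw [← Real.exp_add]
  congr 2
  ring

lemma sq_add_sq_pos_of_coe_ne_zero {α β : ℝ}
    (h : ¬ ((α : UnitAddCircle) = 0 ∧ (β : UnitAddCircle) = 0)) (p : ℤ × ℤ) :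
    0 < (p.1 + α) ^ 2 + (p.2 + β) ^ 2 := by
  refine (by positivity : 0 ≤ (p.1 + α) ^ 2 + (p.2 + β) ^ 2).lt_of_ne' fun h0 ↦ h ?_
  have h1 : p.1 + α = 0 := by nlinarith [sq_nonneg (p.1 + α), sq_nonneg (p.2 + β)]
  have h2 : p.2 + β = 0 := by nlinarith [sq_nonneg (p.1 + α), sq_nonneg (p.2 + β)]
  rw [AddCircle.coe_eq_zero_iff, AddCircle.coe_eq_zero_iff]
  exact ⟨⟨-p.1, by simp; linarith⟩, ⟨-p.2, by simp; linarith⟩⟩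

lemma hasSum_sq_add_sq_cpow {α β : ℝ}
    (h : ¬ ((α : UnitAddCircle) = 0 ∧ (β : UnitAddCircle) = 0)) {s : ℂ} (hs : 1 < s.re) :
    HasSum (fun p : ℤ × ℤ ↦ (((p.1 + α) ^ 2 + (p.2 + β) ^ 2 : ℝ) : ℂ) ^ (-s))
      (Real.pi ^ s * (Complex.Gamma s)⁻¹ * (evenKernelMulFEPair α β).Λ s) := by
  have hpos := sq_add_sq_pos_of_coe_ne_zero h
  have hmellin : mellin (evenKernelMulFEPair α β).f s = (evenKernelMulFEPair α β).Λ s := by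
    simpa [evenKernelMulFEPair_f₀ h] using ((evenKernelMulFEPair α β).hasMellin (s := s) hs).2
  have hsummable : Summable fun p : ℤ × ℤ ↦
      ‖(1 : ℂ)‖ / ((p.1 + α) ^ 2 + (p.2 + β) ^ 2) ^ s.re := by
    refine (summable_sq_add_sq_rpow α β hs).congr fun p ↦ ?_
    rw [Real.rpow_neg (hpos p).le, NormOneClass.norm_one, one_div]
  have hsum := hasSum_mellin_pi_mul (F := (evenKernelMulFEPair α β).f) (fun p ↦ Or.inr (hpos p))
    (by linarith) (fun t ht ↦ by simpa using hasSum_evenKernelMulFEPair_f α β ht) hsummable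
  rw [hmellin] at hsum
  refine (hsum.mul_left _).congr_fun fun p ↦ ?_
  have hΓ : Complex.Gamma s ≠ 0 := Complex.Gamma_ne_zero_of_re_pos (by linarith)
  have hπ : (Real.pi : ℂ) ^ s ≠ 0 := by simp [Complex.cpow_eq_zero_iff, Real.pi_ne_zero]
  rw [Complex.cpow_neg (Real.pi : ℂ), Complex.cpow_neg (((p.1 + α) ^ 2 + (p.2 + β) ^ 2 : ℝ) : ℂ)]
  field_simp

lemma exists_entire_hasSum_sq_add_sq {α β : ℝ}
    (h : ¬ ((α : UnitAddCircle) = 0 ∧ (β : UnitAddCircle) = 0)) :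
    ∃ E : ℂ → ℂ, Differentiable ℂ E ∧ E 1 = Real.pi ∧ E (-1) = 0 ∧ ∀ s : ℂ, 1 < s.re →
      HasSum (fun p : ℤ × ℤ ↦ (((p.1 + α) ^ 2 + (p.2 + β) ^ 2 : ℝ) : ℂ) ^ (-s))
        (E s / (s - 1)) := by
  set P := evenKernelMulFEPair α β with hP
  refine ⟨fun s ↦ Real.pi ^ s * (Complex.Gamma s)⁻¹ * ((s - 1) * P.Λ₀ s + 1),
    ?_, ?_, ?_, fun s hs ↦ ?_⟩
  · refine (Differentiable.mul (fun s ↦ ?_) Complex.differentiable_one_div_Gamma).mul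
      (((differentiable_id.sub_const 1).mul P.differentiable_Λ₀).add_const 1)
    exact differentiableAt_id.const_cpow (Or.inl (by exact_mod_cast Real.pi_ne_zero))
  · simp
  · simp [show Complex.Gamma (-1) = 0 by simpa using Complex.Gamma_neg_nat_eq_zero 1]
  · have hs1 : s - 1 ≠ 0 := fun hs1 ↦ by
      rw [sub_eq_zero.mp hs1] at hs
      exact lt_irrefl _ hs
    have hΛ : P.Λ s = P.Λ₀ s + 1 / (s - 1) := by
      have hΛ₀ := P.Λ₀_eq s
      rw [evenKernelMulFEPair_f₀ h, smul_zero, add_zero] at hΛ₀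
      simp only [hP, evenKernelMulFEPair, Complex.ofReal_one, mul_one, smul_eq_mul] at hΛ₀ ⊢
      rw [hΛ₀, ← neg_sub s 1, one_div_neg_eq_neg_one_div]
      ring
    convert hasSum_sq_add_sq_cpow h hs using 1
    rw [← hP, hΛ]
    field_simp

end GaussianLattice

section GaussianContinuation

open Zsqrtd hiding norm_mul norm_natCast
open HurwitzZeta

/-- Parametrization of the Gaussian integers congruent to `z` modulo `q` by `ℤ²`. -/
def gaussianShift (q : ℕ) (z : GaussianInt) (p : ℤ × ℤ) : GaussianInt :=
  ⟨p.1 * q + z.re, p.2 * q + z.im⟩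

lemma gaussianShift_norm (q : ℕ) [NeZero q] (z : GaussianInt) (p : ℤ × ℤ) :
    ((gaussianShift q z p).norm : ℝ) =
      (q : ℝ) ^ 2 * ((p.1 + (z.re / q : ℝ)) ^ 2 + (p.2 + (z.im / q : ℝ)) ^ 2) := by
  have hq : (q : ℝ) ≠ 0 := by exact_mod_cast NeZero.ne q
  rw [gaussian_norm_eq_sq_add_sq, gaussianShift]
  push_cast
  field_simp

lemma coe_int_div_eq_zero_iff (q : ℕ) [NeZero q] (m : ℤ) :
    ((m / q : ℝ) : UnitAddCircle) = 0 ↔ (q : ℤ) ∣ m := by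
  have hq : (q : ℝ) ≠ 0 := by exact_mod_cast NeZero.ne q
  simp only [AddCircle.coe_eq_zero_iff, zsmul_eq_mul, mul_one, eq_div_iff hq]
  exact ⟨fun ⟨n, hn⟩ ↦ ⟨n, by rw [mul_comm]; exact_mod_cast hn.symm⟩,
    fun ⟨n, hn⟩ ↦ ⟨n, by rw [mul_comm]; exact_mod_cast hn.symm⟩⟩

lemma exists_entire_hasSum_gaussianShift (q : ℕ) [NeZero q] (z : GaussianInt)
    (hz : ¬ ((q : ℤ) ∣ z.re ∧ (q : ℤ) ∣ z.im)) :
    ∃ E : ℂ → ℂ, Differentiable ℂ E ∧ E 1 = Real.pi / q ^ 2 ∧ E (-1) = 0 ∧ ∀ s : ℂ, 1 < s.re →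
      HasSum (fun p ↦ ((gaussianShift q z p).norm : ℂ) ^ (-s)) (E s / (s - 1)) := by
  have hq : (q : ℂ) ^ 2 ≠ 0 := pow_ne_zero 2 (by exact_mod_cast NeZero.ne q)
  rw [← coe_int_div_eq_zero_iff q z.re, ← coe_int_div_eq_zero_iff q z.im] at hz
  obtain ⟨E, hE, hE_one, hE_neg_one, hsum⟩ := exists_entire_hasSum_sq_add_sq hz
  refine ⟨fun s ↦ ((q : ℂ) ^ 2) ^ (-s) * E s, ?_, ?_, by simp [hE_neg_one], fun s hs ↦ ?_⟩
  · exact Differentiable.mul (fun s ↦ differentiableAt_id.neg.const_cpow (Or.inl hq)) hE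
  · beta_reduce
    rw [hE_one, Complex.cpow_neg_one, div_eq_inv_mul]
  · rw [mul_div_assoc]
    refine ((hsum s hs).mul_left _).congr_fun fun p ↦ ?_
    rw [← Complex.ofReal_intCast, gaussianShift_norm, Complex.ofReal_mul,
      Complex.mul_cpow_ofReal_nonneg (by positivity) (by positivity)]
    norm_cast

end GaussianContinuation

section GaussianPeriodic

open Zsqrtd hiding norm_mul norm_natCast

lemma apply_gaussianShift_of_periodic {q : ℕ} {α : Type*} {f : GaussianInt → α}
    (hper : ∀ z w, f (z + q * w) = f z) (z : GaussianInt) (p : ℤ × ℤ) :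
    f (gaussianShift q z p) = f z := by
  rw [← hper z ⟨p.1, p.2⟩]
  congr 1
  ext <;> simp [gaussianShift] <;> ring

lemma exists_entire_hasSum_gaussianShift_smul (q : ℕ) [NeZero q] {f : GaussianInt → ℂ}
    (hper : ∀ z w, f (z + q * w) = f z) (h0 : f 0 = 0) (z : GaussianInt) :
    ∃ E : ℂ → ℂ, Differentiable ℂ E ∧ E 1 = f z * (Real.pi / q ^ 2) ∧ E (-1) = 0 ∧
      ∀ s : ℂ, 1 < s.re → HasSum (fun p ↦ f (gaussianShift q z p) *
        ((gaussianShift q z p).norm : ℂ) ^ (-s)) (E s / (s - 1)) := by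
  have hshift := apply_gaussianShift_of_periodic hper z
  by_cases hz : (q : ℤ) ∣ z.re ∧ (q : ℤ) ∣ z.im
  · obtain ⟨⟨a, ha⟩, b, hb⟩ := hz
    have hfz : f z = 0 := by
      rw [← h0, ← hper 0 ⟨a, b⟩]
      congr 1
      ext <;> simp [ha, hb]
    refine ⟨0, differentiable_const 0, by simp [hfz], rfl, fun s _ ↦ ?_⟩
    simp only [hshift, hfz, zero_mul, Pi.zero_apply, zero_div]
    exact hasSum_zero
  · obtain ⟨E, hE, hE_one, hE_neg_one, hsum⟩ := exists_entire_hasSum_gaussianShift q z hz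
    refine ⟨fun s ↦ f z * E s, hE.const_mul _, by simp [hE_one], by simp [hE_neg_one],
      fun s hs ↦ ?_⟩
    simp only [hshift, mul_div_assoc]
    exact (hsum s hs).mul_left _

/-- Division with remainder by `q` of both coordinates. -/
def gaussianDivModEquiv (q : ℕ) [NeZero q] : GaussianInt ≃ (Fin q × Fin q) × (ℤ × ℤ) :=
  (gaussianEquivProd.trans ((Int.divModEquiv q).prodCongr (Int.divModEquiv q))).trans
    ((Equiv.prodProdProdComm _ _ _ _).trans (Equiv.prodComm _ _))

lemma gaussianDivModEquiv_symm (q : ℕ) [NeZero q] (x : Fin q × Fin q) (p : ℤ × ℤ) :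
    (gaussianDivModEquiv q).symm (x, p) = gaussianShift q ⟨(x.1 : ℕ), (x.2 : ℕ)⟩ p :=
  rfl

lemma exists_norm_le_of_periodic (q : ℕ) [NeZero q] {f : GaussianInt → ℂ}
    (hper : ∀ z w, f (z + q * w) = f z) : ∃ M, ∀ z, ‖f z‖ ≤ M := by
  refine ⟨∑ x : Fin q × Fin q, ‖f ⟨(x.1 : ℕ), (x.2 : ℕ)⟩‖, fun z ↦ ?_⟩
  obtain ⟨⟨x, p⟩, rfl⟩ := (gaussianDivModEquiv q).symm.surjective z
  rw [gaussianDivModEquiv_symm, apply_gaussianShift_of_periodic hper]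
  exact Finset.single_le_sum (f := fun x : Fin q × Fin q ↦ ‖f ⟨(x.1 : ℕ), (x.2 : ℕ)⟩‖)
    (fun _ _ ↦ norm_nonneg _) (Finset.mem_univ x)

lemma exists_entire_eqOn_lSeries_gaussianCoeff (q : ℕ) [NeZero q] {f : GaussianInt → ℂ}
    (hper : ∀ z w, f (z + q * w) = f z) (h0 : f 0 = 0) :
    ∃ E : ℂ → ℂ, Differentiable ℂ E ∧
      E 1 = Real.pi / (4 * q ^ 2) * ∑ x : Fin q × Fin q, f ⟨(x.1 : ℕ), (x.2 : ℕ)⟩ ∧ E (-1) = 0 ∧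
      ∀ s : ℂ, 1 < s.re → LSeries (gaussianCoeff f) s = E s / (s - 1) := by
  choose E hE hE_one hE_neg_one hsum using fun x : Fin q × Fin q ↦
    exists_entire_hasSum_gaussianShift_smul q hper h0 ⟨(x.1 : ℕ), (x.2 : ℕ)⟩
  refine ⟨fun s ↦ (∑ x, E x s) / 4, (Differentiable.fun_sum fun x _ ↦ hE x).div_const 4, ?_, ?_,
    fun s hs ↦ ?_⟩
  · simp only [hE_one, ← Finset.sum_mul]
    ring
  · simp [hE_neg_one]
  · obtain ⟨M, hM⟩ := exists_norm_le_of_periodic q hper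
    have htotal := (summable_gaussian_norm_cpow hM hs).hasSum
    have hresidues := ((gaussianDivModEquiv q).symm.hasSum_iff.mpr htotal).prod_fiberwise
      fun x ↦ hsum x s hs
    rw [(lSeriesHasSum_gaussianCoeff (by rintro rfl; norm_num at hs) htotal).LSeries_eq,
      hresidues.unique (hasSum_fintype _), ← Finset.sum_div]
    ring

end GaussianPeriodic

section LogarithmicDerivative

open ArithmeticFunction
open scoped ComplexOrder

lemma mul_apply_mul_log {f g u v : ArithmeticFunction ℂ}
    (hf : ∀ n, (f * u) n = f n * Real.log n) (hg : ∀ n, (g * v) n = g n * Real.log n) (n : ℕ) :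
    (f * g * (u + v)) n = (f * g) n * Real.log n := by
  rw [show f * g * (u + v) = (f * u) * g + f * (g * v) by ring,
    ArithmeticFunction.add_apply, mul_apply, mul_apply, mul_apply,
    ← Finset.sum_add_distrib, Finset.sum_mul]
  refine Finset.sum_congr rfl fun d hd ↦ ?_
  obtain ⟨rfl, hd0⟩ := Nat.mem_divisorsAntidiagonal.mp hd
  rw [hf, hg, Nat.cast_mul, Real.log_mul (by exact_mod_cast left_ne_zero_of_mul hd0)
    (by exact_mod_cast right_ne_zero_of_mul hd0)]
  push_cast
  ring

lemma abscissaOfAbsConv_le_one {f : ℕ → ℂ} (hf : ∀ s : ℂ, 1 < s.re → LSeriesSummable f s) :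
    LSeries.abscissaOfAbsConv f ≤ 1 :=
  LSeries.abscissaOfAbsConv_le_of_forall_lt_LSeriesSummable (x := 1) fun y hy ↦
    hf y (by simpa using hy)

lemma abscissaOfAbsConv_lt_re {f : ℕ → ℂ} (hf : ∀ s : ℂ, 1 < s.re → LSeriesSummable f s) {s : ℂ}
    (hs : 1 < s.re) : LSeries.abscissaOfAbsConv f < s.re :=
  (abscissaOfAbsConv_le_one hf).trans_lt (by exact_mod_cast hs)

lemma differentiableAt_lSeries {f : ℕ → ℂ} (hf : ∀ s : ℂ, 1 < s.re → LSeriesSummable f s) {s : ℂ}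
    (hs : 1 < s.re) : DifferentiableAt ℂ (LSeries f) s :=
  (LSeries_hasDerivAt (abscissaOfAbsConv_lt_re hf hs)).differentiableAt

lemma deriv_lSeries_eq_neg_mul {f u : ArithmeticFunction ℂ}
    (hfu : ∀ n, (f * u) n = f n * Real.log n)
    (hf : ∀ s : ℂ, 1 < s.re → LSeriesSummable f s)
    (hu : ∀ s : ℂ, 1 < s.re → LSeriesSummable u s) {s : ℂ} (hs : 1 < s.re) :
    deriv (LSeries f) s = -(LSeries f s * LSeries u s) := by
  rw [LSeries_deriv (abscissaOfAbsConv_lt_re hf hs), ← LSeries_mul' (hf s hs) (hu s hs)]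
  congr 2
  funext n
  rw [LSeries.logMul, hfu, mul_comm, Complex.natCast_log]

lemma logMul_div_log {u : ℕ → ℂ} (hu0 : u 0 = 0) (hu1 : u 1 = 0) :
    LSeries.logMul (fun n ↦ u n / Real.log n) = u := by
  funext n
  rw [LSeries.logMul, ← Complex.natCast_log]
  obtain rfl | rfl | hn : n = 0 ∨ n = 1 ∨ 1 < n := by lia
  · simp [hu0]
  · simp [hu1]
  · have hlog : (Real.log n : ℂ) ≠ 0 := by
      exact_mod_cast (Real.log_pos (by exact_mod_cast hn)).ne'
    field_simp

lemma lSeriesSummable_div_log {u : ℕ → ℂ} {s : ℂ} (hu : LSeriesSummable u s) :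
    LSeriesSummable (fun n ↦ u n / Real.log n) s := by
  refine Summable.of_norm_bounded (hu.norm.mul_left (Real.log 2)⁻¹) fun n ↦ ?_
  have hlog_two : 0 < Real.log 2 := Real.log_pos one_lt_two
  obtain rfl | rfl | hn : n = 0 ∨ n = 1 ∨ 1 < n := by lia
  · simp
  · simpa using by positivity
  · have hlog : Real.log 2 ≤ Real.log n := Real.log_le_log two_pos (by exact_mod_cast hn)
    rw [LSeries.term_of_ne_zero (by lia), LSeries.term_of_ne_zero (by lia), norm_div, norm_div,
      norm_div, Complex.norm_real, Real.norm_of_nonneg (hlog_two.le.trans hlog), mul_comm,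
      ← div_eq_mul_inv, div_right_comm]
    gcongr

-- With `v` the Dirichlet series having coefficients `u n / log n`, the function `f * exp (-v)` has
-- zero derivative, so a zero of `f` would make `f` vanish identically.
lemma lSeries_ne_zero_of_mul_eq_log {f u : ArithmeticFunction ℂ}
    (hfu : ∀ n, (f * u) n = f n * Real.log n) (hf0 : f ≠ 0) (hu1 : u 1 = 0)
    (hf : ∀ s : ℂ, 1 < s.re → LSeriesSummable f s)
    (hu : ∀ s : ℂ, 1 < s.re → LSeriesSummable u s) {s : ℂ} (hs : 1 < s.re) :
    LSeries f s ≠ 0 := by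
  set v : ℕ → ℂ := fun n ↦ u n / Real.log n with hv
  have hv_summable : ∀ s : ℂ, 1 < s.re → LSeriesSummable v s := fun s hs ↦
    lSeriesSummable_div_log (hu s hs)
  have hderiv {s : ℂ} (hs : 1 < s.re) :
      HasDerivAt (fun z ↦ LSeries f z * Complex.exp (-LSeries v z)) 0 s := by
    have hf_deriv := (differentiableAt_lSeries hf hs).hasDerivAt
    have hv_deriv := LSeries_hasDerivAt (abscissaOfAbsConv_lt_re hv_summable hs)
    rw [hv, logMul_div_log u.map_zero hu1] at hv_deriv
    rw [deriv_lSeries_eq_neg_mul hfu hf hu hs] at hf_deriv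
    exact (hf_deriv.mul hv_deriv.neg.cexp).congr_deriv (by ring)
  have hopen : IsOpen {s : ℂ | 1 < s.re} := isOpen_lt continuous_const Complex.continuous_re
  intro hzero
  have hvanish : (fun x : ℝ ↦ LSeries f x) =ᶠ[atTop] 0 := by
    filter_upwards [eventually_gt_atTop 1] with x hx
    have hconst := hopen.is_const_of_deriv_eq_zero (convex_halfSpace_re_gt 1).isPreconnected
      (fun z hz ↦ (hderiv hz).differentiableAt.differentiableWithinAt)
      (fun z hz ↦ (hderiv hz).deriv) hs (show 1 < (x : ℂ).re from hx)
    rw [hzero, zero_mul, eq_comm] at hconst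
    exact (mul_eq_zero.mp hconst).resolve_right (Complex.exp_ne_zero _)
  rcases LSeries_eventually_eq_zero_iff'.mp hvanish with h | h
  · exact hf0 (ext fun n ↦ (eq_or_ne n 0).elim (by rintro rfl; simp) (h n))
  · exact absurd (h ▸ abscissaOfAbsConv_le_one hf) (by decide)

lemma nonneg_of_mul_eq_log {f u : ArithmeticFunction ℂ}
    (hfu : ∀ n, (f * u) n = f n * Real.log n) (hf1 : 0 ≤ f 1) (hu1 : u 1 = 0)
    (hu : ∀ n, 0 ≤ u n) (n : ℕ) : 0 ≤ f n := by
  induction n using Nat.strong_induction_on with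
  | _ n ih =>
    obtain rfl | rfl | hn : n = 0 ∨ n = 1 ∨ 1 < n := by lia
    · simp
    · exact hf1
    · have hlog : 0 < Real.log n := Real.log_pos (by exact_mod_cast hn)
      have hmul : 0 ≤ f n * Real.log n := by
        rw [← hfu, mul_apply]
        refine Finset.sum_nonneg fun ⟨a, b⟩ hab ↦ ?_
        obtain ⟨rfl, hab0⟩ := Nat.mem_divisorsAntidiagonal.mp hab
        rcases eq_or_ne b 1 with rfl | hb
        · rw [hu1, mul_zero]
        · have hb0 : b ≠ 0 := right_ne_zero_of_mul hab0
          exact mul_nonneg (ih a (lt_mul_of_one_lt_right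
            (Nat.pos_of_ne_zero (left_ne_zero_of_mul hab0)) (by lia))) (hu b)
      rw [← mul_inv_cancel_right₀ (b := (Real.log n : ℂ)) (by exact_mod_cast hlog.ne') (f n)]
      exact mul_nonneg hmul (by exact_mod_cast (inv_pos.mpr hlog).le)

end LogarithmicDerivative

section GaussianCharacters

open Zsqrtd hiding norm_mul norm_natCast
open ComplexConjugate
open scoped ComplexOrder

/-- The unramified character `z ↦ N z ^ (-it)`; multiplying by it shifts an L-function by `it`. -/
noncomputable def gaussianTwist (t : ℝ) : GaussianInt →* ℂ where
  toFun z := (z.norm : ℂ) ^ (-(t * Complex.I))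
  map_one' := by simp
  map_mul' z w := by
    have hnonneg (z : GaussianInt) : (0 : ℝ) ≤ z.norm := by
      exact_mod_cast GaussianInt.norm_nonneg z
    simpa using Complex.mul_cpow_ofReal_nonneg (hnonneg z) (hnonneg w) (-(t * Complex.I))

lemma gaussianTwist_apply (t : ℝ) (z : GaussianInt) :
    gaussianTwist t z = (z.norm : ℂ) ^ (-(t * Complex.I)) :=
  rfl

lemma norm_gaussianTwist_le (t : ℝ) (z : GaussianInt) : ‖gaussianTwist t z‖ ≤ 1 := by
  rw [gaussianTwist_apply]
  rcases eq_or_ne z 0 with rfl | hz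
  · rw [norm_zero, Int.cast_zero]
    rcases eq_or_ne (-(t * Complex.I)) 0 with h | h
    · simp [h]
    · simp [Complex.zero_cpow h]
  · have hz0 : (0 : ℝ) < z.norm := by exact_mod_cast one_le_gaussian_norm hz
    rw [← Complex.ofReal_intCast, Complex.norm_cpow_eq_rpow_re_of_pos hz0]
    simp

/-- `ψ` is a bounded multiplicative function on `ℤ[i]` trivial on units, hence a function of
principal ideals. -/
structure IsUnitTrivialCharacter (ψ : GaussianInt →* ℂ) : Prop where
  map_unit : ∀ u, IsUnit u → ψ u = 1
  norm_le_one : ∀ z, ‖ψ z‖ ≤ 1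

lemma IsUnitTrivialCharacter.mul_gaussianTwist {ψ : GaussianInt →* ℂ}
    (hψ : IsUnitTrivialCharacter ψ) (t : ℝ) : IsUnitTrivialCharacter (ψ * gaussianTwist t) where
  map_unit u hu := by
    rw [MonoidHom.mul_apply, hψ.map_unit u hu, gaussianTwist_apply,
      (norm_eq_one_iff' (by norm_num) u).mpr hu]
    simp
  norm_le_one z := by
    rw [MonoidHom.mul_apply, norm_mul]
    exact mul_le_one₀ (hψ.norm_le_one z) (norm_nonneg _) (norm_gaussianTwist_le t z)

/-- The complex conjugate character. -/
noncomputable def conjGaussian (ψ : GaussianInt →* ℂ) : GaussianInt →* ℂ :=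
  ((starRingEnd ℂ : ℂ →+* ℂ) : ℂ →* ℂ).comp ψ

lemma conjGaussian_apply (ψ : GaussianInt →* ℂ) (z : GaussianInt) :
    conjGaussian ψ z = conj (ψ z) :=
  rfl

lemma IsUnitTrivialCharacter.conj {ψ : GaussianInt →* ℂ} (hψ : IsUnitTrivialCharacter ψ) :
    IsUnitTrivialCharacter (conjGaussian ψ) where
  map_unit u hu := by rw [conjGaussian_apply, hψ.map_unit u hu, map_one]
  norm_le_one z := by
    rw [conjGaussian_apply, RCLike.norm_conj]
    exact hψ.norm_le_one z

lemma lSeries_gaussianCoeff_mul_gaussianTwist (ψ : GaussianInt →* ℂ) (t : ℝ) (s : ℂ) :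
    LSeries (gaussianCoeff (ψ * gaussianTwist t : GaussianInt →* ℂ)) s =
      LSeries (gaussianCoeff ψ) (s + t * Complex.I) := by
  refine tsum_congr fun n ↦ ?_
  rcases eq_or_ne n 0 with rfl | hn
  · simp
  rw [LSeries.term_of_ne_zero hn, LSeries.term_of_ne_zero hn,
    Complex.cpow_add _ _ (by exact_mod_cast hn), gaussianCoeff_apply _ hn, gaussianCoeff_apply _ hn,
    mul_comm ((n : ℂ) ^ s), ← div_div, div_left_inj' (by simp [Complex.cpow_eq_zero_iff, hn]),
    Finset.sum_div, Finset.sum_div, Finset.sum_div]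
  refine Finset.sum_congr rfl fun z hz ↦ ?_
  rw [MonoidHom.mul_apply, gaussianTwist_apply, mem_normFiber.mp hz, Complex.cpow_neg,
    ← div_eq_mul_inv, Int.cast_natCast, div_right_comm]

lemma lSeries_gaussianCoeff_conjGaussian (ψ : GaussianInt →* ℂ) (s : ℂ) :
    LSeries (gaussianCoeff (conjGaussian ψ)) s = conj (LSeries (gaussianCoeff ψ) (conj s)) := by
  rw [LSeries, LSeries, Complex.conj_tsum]
  refine tsum_congr fun n ↦ ?_
  rcases eq_or_ne n 0 with rfl | hn
  · simp
  rw [LSeries.term_of_ne_zero hn, LSeries.term_of_ne_zero hn, map_div₀, gaussianCoeff_apply _ hn,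
    gaussianCoeff_apply _ hn, map_div₀, map_sum,
      Complex.cpow_conj _ _ (by simp [Real.pi_ne_zero.symm]),
    Complex.conj_conj, Complex.conj_natCast,
    show conj (4 : ℂ) = 4 from Complex.conj_ofNat 4]
  simp [conjGaussian_apply]

lemma gaussianMangoldtCoeff_nonneg_combination {ψ φ : GaussianInt →* ℂ}
    (h : ∀ z, (‖φ z‖ : ℂ) ≤ ψ z) (n : ℕ) :
    0 ≤ (gaussianMangoldtCoeff ψ + gaussianMangoldtCoeff ψ +
      (gaussianMangoldtCoeff φ + gaussianMangoldtCoeff (conjGaussian φ))) n := by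
  rcases eq_or_ne n 0 with rfl | hn
  · simp
  simp only [ArithmeticFunction.add_apply, gaussianMangoldtCoeff, gaussianCoeff_apply _ hn,
    ← add_div, ← Finset.sum_add_distrib, ← add_mul]
  refine div_nonneg (Finset.sum_nonneg fun z _ ↦ mul_nonneg ?_
    (by exact_mod_cast gaussianMangoldt_nonneg z)) (by norm_num)
  have hφ : 0 ≤ (‖φ z‖ : ℂ) + ‖φ z‖ + (φ z + conjGaussian φ z) := by
    rw [conjGaussian_apply, Complex.add_conj]
    exact_mod_cast (by linarith [neg_le_of_abs_le (Complex.abs_re_le_norm (φ z))] :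
      0 ≤ ‖φ z‖ + ‖φ z‖ + 2 * (φ z).re)
  exact hφ.trans (add_le_add_left (add_le_add (h z) (h z)) _)

-- The product of the four L-functions has nonnegative coefficients because its logarithmic
-- derivative does, so by Landau's theorem an entire continuation is positive on the real axis.
lemma pos_of_eqOn_lSeries_mul_conj {ψ φ : GaussianInt →* ℂ} (hψ : IsUnitTrivialCharacter ψ)
    (hφ : IsUnitTrivialCharacter φ) (h : ∀ z, (‖φ z‖ : ℂ) ≤ ψ z) {F : ℂ → ℂ}
    (hF : Differentiable ℂ F)
    (hFL : ∀ s : ℂ, 1 < s.re → F s = LSeries (gaussianCoeff ψ) s ^ 2 *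
      (LSeries (gaussianCoeff φ) s * LSeries (gaussianCoeff (conjGaussian φ)) s)) (x : ℝ) :
    0 < F x := by
  set a := (gaussianCoeff ψ * gaussianCoeff ψ) * (gaussianCoeff φ *
    gaussianCoeff (conjGaussian φ)) with ha
  have hlog := mul_apply_mul_log (mul_apply_mul_log (gaussianCoeff_mul_gaussianMangoldtCoeff ψ)
      (gaussianCoeff_mul_gaussianMangoldtCoeff ψ)) (mul_apply_mul_log
      (gaussianCoeff_mul_gaussianMangoldtCoeff φ)
      (gaussianCoeff_mul_gaussianMangoldtCoeff (conjGaussian φ)))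
  have ha_one : a 1 = 1 := by
    simp only [ha, ArithmeticFunction.mul_apply_one, gaussianCoeff_one hψ.map_unit,
      gaussianCoeff_one hφ.map_unit, gaussianCoeff_one hφ.conj.map_unit, mul_one]
  have ha_nonneg : (0 : ℕ → ℂ) ≤ a :=
    nonneg_of_mul_eq_log hlog (ha_one.symm ▸ zero_le_one)
      (by simp [ArithmeticFunction.add_apply, gaussianMangoldtCoeff_one])
      (gaussianMangoldtCoeff_nonneg_combination h)
  have hsum_ψ {s : ℂ} (hs : 1 < s.re) := ArithmeticFunction.LSeriesSummable_mul
    (lSeriesSummable_gaussianCoeff hψ.norm_le_one hs)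
    (lSeriesSummable_gaussianCoeff hψ.norm_le_one hs)
  have hsum_φ {s : ℂ} (hs : 1 < s.re) := ArithmeticFunction.LSeriesSummable_mul
    (lSeriesSummable_gaussianCoeff hφ.norm_le_one hs)
    (lSeriesSummable_gaussianCoeff hφ.conj.norm_le_one hs)
  have hFa (s : ℂ) (hs : 1 < s.re) : F s = LSeries a s := by
    rw [ha, ArithmeticFunction.LSeries_mul' (hsum_ψ hs) (hsum_φ hs), hFL s hs, sq,
      ArithmeticFunction.LSeries_mul' (lSeriesSummable_gaussianCoeff hψ.norm_le_one hs)
        (lSeriesSummable_gaussianCoeff hψ.norm_le_one hs),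
      ArithmeticFunction.LSeries_mul' (lSeriesSummable_gaussianCoeff hφ.norm_le_one hs)
        (lSeriesSummable_gaussianCoeff hφ.conj.norm_le_one hs)]
  exact LSeries.positive_of_differentiable_of_eqOn ha_nonneg (ha_one.symm ▸ one_pos) hF (x := 1)
    (abscissaOfAbsConv_le_one fun s hs ↦
      ArithmeticFunction.LSeriesSummable_mul (hsum_ψ hs) (hsum_φ hs)) hFa x

lemma pos_of_eqOn_lSeries_shift_mul_conj {ψ ψ₁ : GaussianInt →* ℂ}
    (hψ : IsUnitTrivialCharacter ψ) (hψ₁ : IsUnitTrivialCharacter ψ₁) (h : ∀ z, ψ₁ z = ‖ψ z‖)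
    (t : ℝ) {F : ℂ → ℂ} (hF : Differentiable ℂ F)
    (hFL : ∀ s : ℂ, 1 < s.re → F s = LSeries (gaussianCoeff ψ₁) s ^ 2 *
      (LSeries (gaussianCoeff ψ) (s + t * Complex.I) *
        conj (LSeries (gaussianCoeff ψ) (conj s + t * Complex.I)))) (x : ℝ) :
    0 < F x := by
  refine pos_of_eqOn_lSeries_mul_conj hψ₁ (hψ.mul_gaussianTwist t) (fun z ↦ ?_) hF
    (fun s hs ↦ ?_) x
  · rw [h, MonoidHom.mul_apply, norm_mul]
    exact_mod_cast mul_le_of_le_one_right (norm_nonneg _) (norm_gaussianTwist_le t z)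
  · rw [hFL s hs, lSeries_gaussianCoeff_conjGaussian, lSeries_gaussianCoeff_mul_gaussianTwist,
      lSeries_gaussianCoeff_mul_gaussianTwist]

end GaussianCharacters

section GaussianNonvanishing

open ComplexConjugate

/-- Characters of the Gaussian integers modulo `q` that are trivial on units. -/
structure IsRayCharacter (q : ℕ) (ψ : GaussianInt →* ℂ) : Prop
    extends IsUnitTrivialCharacter ψ where
  periodic : ∀ z w, ψ (z + q * w) = ψ z
  map_zero : ψ 0 = 0

lemma differentiable_dslope {f : ℂ → ℂ} (hf : Differentiable ℂ f) (c : ℂ) :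
    Differentiable ℂ (dslope f c) :=
  differentiableOn_univ.mp ((Complex.differentiableOn_dslope univ_mem).mpr hf.differentiableOn)

lemma differentiable_conj_comp_conj {f : ℂ → ℂ} (hf : Differentiable ℂ f) :
    Differentiable ℂ fun s ↦ conj (f (conj s)) := fun s ↦ by
  simpa [Function.comp_def] using (hf (conj s)).conj_conj

lemma sub_mul_dslope_of_eq_zero {f : ℂ → ℂ} {c : ℂ} (hc : f c = 0) (s : ℂ) :
    (s - c) * dslope f c s = f s := by
  rw [← smul_eq_mul, sub_smul_dslope, hc, sub_zero]

lemma ne_of_re_lt_re {s c : ℂ} (h : c.re < s.re) : s ≠ c :=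
  fun hsc ↦ h.ne (congrArg Complex.re hsc.symm)

lemma lSeries_gaussianCoeff_ne_zero {ψ : GaussianInt →* ℂ} (hψ : IsUnitTrivialCharacter ψ) {s : ℂ}
    (hs : 1 < s.re) : LSeries (gaussianCoeff ψ) s ≠ 0 :=
  lSeries_ne_zero_of_mul_eq_log (gaussianCoeff_mul_gaussianMangoldtCoeff ψ)
    (fun h ↦ by simpa [h] using gaussianCoeff_one hψ.map_unit) (gaussianMangoldtCoeff_one _)
    (fun _ ↦ lSeriesSummable_gaussianCoeff hψ.norm_le_one)
    (fun _ ↦ lSeriesSummable_gaussianMangoldtCoeff hψ.norm_le_one) hs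

lemma lSeries_gaussianMangoldtCoeff_of_eqOn {ψ : GaussianInt →* ℂ} (hψ : IsUnitTrivialCharacter ψ)
    {f : ℂ → ℂ} (hf : ∀ s : ℂ, 1 < s.re → LSeries (gaussianCoeff ψ) s = f s) {s : ℂ}
    (hs : 1 < s.re) : LSeries (gaussianMangoldtCoeff ψ) s = -deriv f s / f s := by
  have hf_nhds : LSeries (gaussianCoeff ψ) =ᶠ[nhds s] f :=
    eventuallyEq_of_mem ((isOpen_lt continuous_const Complex.continuous_re).mem_nhds hs) hf
  rw [← hf_nhds.deriv_eq, ← hf s hs,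
    deriv_lSeries_eq_neg_mul (gaussianCoeff_mul_gaussianMangoldtCoeff ψ)
      (fun _ ↦ lSeriesSummable_gaussianCoeff hψ.norm_le_one)
      (fun _ ↦ lSeriesSummable_gaussianMangoldtCoeff hψ.norm_le_one) hs, neg_neg,
    mul_div_cancel_left₀ _ (lSeries_gaussianCoeff_ne_zero hψ hs)]

lemma eq_one_add_im_mul_I {s : ℂ} (hs : s.re = 1) : s = 1 + s.im * Complex.I := by
  conv_lhs => rw [← Complex.re_add_im s, hs, Complex.ofReal_one]

-- A zero of `M` at `1 + it` would cancel the double pole of `L(ψ₁, s)²` at `1`, and the resulting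
-- entire function would vanish at `-1`, where `E₁` does.
lemma ne_zero_of_eqOn_lSeries_of_entire {ψ ψ₁ : GaussianInt →* ℂ}
    (hψ : IsUnitTrivialCharacter ψ) (hψ₁ : IsUnitTrivialCharacter ψ₁) (h : ∀ z, ψ₁ z = ‖ψ z‖)
    {M E₁ : ℂ → ℂ} (hM : Differentiable ℂ M) (hE₁ : Differentiable ℂ E₁)
    (hML : ∀ s : ℂ, 1 < s.re → LSeries (gaussianCoeff ψ) s = M s)
    (hE₁L : ∀ s : ℂ, 1 < s.re → LSeries (gaussianCoeff ψ₁) s = E₁ s / (s - 1))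
    (hE₁_zero : E₁ (-1) = 0) {s : ℂ} (hs : 1 ≤ s.re) : M s ≠ 0 := by
  intro hMs
  rcases hs.lt_or_eq with hs | hs
  · exact lSeries_gaussianCoeff_ne_zero hψ hs (by rw [hML s hs, hMs])
  rw [eq_one_add_im_mul_I hs.symm] at hMs
  set t := s.im
  set U := dslope (fun s ↦ M (s + t * Complex.I)) 1
  have hU : Differentiable ℂ U :=
    differentiable_dslope (hM.comp (differentiable_id.add_const _)) 1
  have hUL (s : ℂ) (hs : 1 < s.re) :
      LSeries (gaussianCoeff ψ) (s + t * Complex.I) = (s - 1) * U s := by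
    rw [hML _ (by simpa using hs)]
    exact (sub_mul_dslope_of_eq_zero (f := fun s ↦ M (s + t * Complex.I)) hMs s).symm
  have hpos := pos_of_eqOn_lSeries_shift_mul_conj hψ hψ₁ h t
    (F := fun s ↦ E₁ s ^ 2 * (U s * conj (U (conj s))))
    ((hE₁.pow 2).mul (hU.mul (differentiable_conj_comp_conj hU))) (fun s hs ↦ by
      have hs_sub : s - 1 ≠ 0 := sub_ne_zero.mpr (ne_of_re_lt_re (by simpa using hs))
      rw [hUL s hs, hUL (conj s) (by simpa using hs), hE₁L s hs, map_mul, map_sub,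
        Complex.conj_conj, map_one]
      field_simp) (-1)
  simp [hE₁_zero] at hpos

lemma conj_apply_conj_of_eqOn_lSeries {ψ : GaussianInt →* ℂ} (h : ∀ z, ψ z = ‖ψ z‖) {E : ℂ → ℂ}
    (hEL : ∀ s : ℂ, 1 < s.re → LSeries (gaussianCoeff ψ) s = E s / (s - 1)) {s : ℂ}
    (hs : 1 < s.re) : conj (E (conj s)) = E s := by
  have hψ : conjGaussian ψ = ψ := MonoidHom.ext fun z ↦ by
    rw [conjGaussian_apply, h z, Complex.conj_ofReal]
  have hL := lSeries_gaussianCoeff_conjGaussian ψ s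
  rw [hψ, hEL s hs, hEL (conj s) (by simpa using hs), map_div₀, map_sub, Complex.conj_conj,
    map_one] at hL
  exact ((div_left_inj' (sub_ne_zero.mpr (ne_of_re_lt_re (by simpa using hs)))).mp hL).symm

-- A zero of `E` at `1 + it` comes with one at `1 - it`; dividing both out of `L(ψ, s)²` cancels
-- the poles of `L(ψ, s ± it)`, whose zeros at `1` cancel the double pole of `L(ψ, s)²`.
lemma ne_zero_of_eqOn_lSeries_of_pole {ψ : GaussianInt →* ℂ} (hψ : IsUnitTrivialCharacter ψ)
    (h : ∀ z, ψ z = ‖ψ z‖) {E : ℂ → ℂ} (hE : Differentiable ℂ E)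
    (hEL : ∀ s : ℂ, 1 < s.re → LSeries (gaussianCoeff ψ) s = E s / (s - 1))
    (hE_zero : E (-1) = 0) {s : ℂ} (hs : 1 ≤ s.re) : E s ≠ 0 := by
  intro hEs
  rcases hs.lt_or_eq with hs | hs
  · exact lSeries_gaussianCoeff_ne_zero hψ hs (by rw [hEL s hs, hEs, zero_div])
  rw [eq_one_add_im_mul_I hs.symm] at hEs
  set t := s.im
  set U := dslope E (1 + t * Complex.I)
  have hU : Differentiable ℂ U := differentiable_dslope hE _
  have hUE := sub_mul_dslope_of_eq_zero hEs
  have hU_zero : U (-1) = 0 :=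
    (mul_eq_zero.mp ((hUE (-1)).trans hE_zero)).resolve_left
      (sub_ne_zero.mpr fun h ↦ by norm_num [Complex.ext_iff] at h)
  have hU_shift : Differentiable ℂ fun s ↦ U (s + t * Complex.I) :=
    hU.comp (differentiable_id.add_const _)
  have hpos := pos_of_eqOn_lSeries_shift_mul_conj hψ hψ h t
    (F := fun s ↦ (U s * conj (U (conj s))) * (U (s + t * Complex.I) *
      conj (U (conj s + t * Complex.I))))
    ((hU.mul (differentiable_conj_comp_conj hU)).mul
      (hU_shift.mul (differentiable_conj_comp_conj hU_shift))) (fun s hs ↦ by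
      have hsub_ne (u : ℝ) : s + u * Complex.I - 1 ≠ 0 :=
        sub_ne_zero.mpr (ne_of_re_lt_re (by simpa using hs))
      have hs_sub : s - 1 ≠ 0 := by simpa using hsub_ne 0
      have hs_add_sub := hsub_ne t
      have hs_sub_sub : s - t * Complex.I - 1 ≠ 0 := by simpa [sub_eq_add_neg] using hsub_ne (-t)
      have hE_sq : E s ^ 2 = E s * conj (E (conj s)) := by
        rw [conj_apply_conj_of_eqOn_lSeries h hEL hs, sq]
      rw [hEL s hs, hEL _ (by simpa using hs), hEL _ (by simpa using hs), div_pow, hE_sq,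
        ← hUE s, ← hUE (conj s), ← hUE (s + t * Complex.I), ← hUE (conj s + t * Complex.I)]
      simp only [map_div₀, map_sub, map_add, map_mul, map_one, Complex.conj_conj,
        Complex.conj_ofReal, Complex.conj_I, mul_neg, ← sub_eq_add_neg]
      field_simp
      ring) (-1)
  simp [hU_zero] at hpos

lemma exists_continuousOn_of_nonprincipal {q : ℕ} [NeZero q] {ψ ψ₁ : GaussianInt →* ℂ}
    (hψ : IsRayCharacter q ψ) (hψ₁ : IsRayCharacter q ψ₁) (h : ∀ z, ψ₁ z = ‖ψ z‖)
    (hsum : ∑ x : Fin q × Fin q, ψ ⟨(x.1 : ℕ), (x.2 : ℕ)⟩ = 0) :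
    ∃ G : ℂ → ℂ, ContinuousOn G {s | 1 ≤ s.re} ∧
      ∀ s, 1 < s.re → LSeries (gaussianMangoldtCoeff ψ) s = G s := by
  obtain ⟨E, hE, hE_one, -, hEL⟩ :=
    exists_entire_eqOn_lSeries_gaussianCoeff q hψ.periodic hψ.map_zero
  obtain ⟨E₁, hE₁, -, hE₁_zero, hE₁L⟩ :=
    exists_entire_eqOn_lSeries_gaussianCoeff q hψ₁.periodic hψ₁.map_zero
  rw [hsum, mul_zero] at hE_one
  have hM := differentiable_dslope hE 1
  have hML (s : ℂ) (hs : 1 < s.re) : LSeries (gaussianCoeff ψ) s = dslope E 1 s := by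
    rw [hEL s hs, ← sub_mul_dslope_of_eq_zero hE_one s,
      mul_div_cancel_left₀ _ (sub_ne_zero.mpr (ne_of_re_lt_re (by simpa using hs)))]
  refine ⟨fun s ↦ -deriv (dslope E 1) s / dslope E 1 s, ?_,
    fun s ↦ lSeries_gaussianMangoldtCoeff_of_eqOn hψ.toIsUnitTrivialCharacter hML⟩
  exact ((hM.contDiff.continuous_deriv le_rfl).neg.continuousOn).div hM.continuous.continuousOn
    fun s ↦ ne_zero_of_eqOn_lSeries_of_entire hψ.toIsUnitTrivialCharacter
      hψ₁.toIsUnitTrivialCharacter h hM hE₁ hML hE₁L hE₁_zero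

lemma exists_continuousOn_of_principal {q : ℕ} [NeZero q] {ψ : GaussianInt →* ℂ}
    (hψ : IsRayCharacter q ψ) (h : ∀ z, ψ z = ‖ψ z‖) :
    ∃ G : ℂ → ℂ, ContinuousOn G {s | 1 ≤ s.re} ∧
      ∀ s, 1 < s.re → LSeries (gaussianMangoldtCoeff ψ) s - 1 / (s - 1) = G s := by
  obtain ⟨E, hE, -, hE_zero, hEL⟩ :=
    exists_entire_eqOn_lSeries_gaussianCoeff q hψ.periodic hψ.map_zero
  have hE_ne (s : ℂ) (hs : 1 ≤ s.re) : E s ≠ 0 :=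
    ne_zero_of_eqOn_lSeries_of_pole hψ.toIsUnitTrivialCharacter h hE hEL hE_zero hs
  refine ⟨fun s ↦ -deriv E s / E s, ?_, fun s hs ↦ ?_⟩
  · exact ((hE.contDiff.continuous_deriv le_rfl).neg.continuousOn).div
      hE.continuous.continuousOn hE_ne
  · have hs_sub : s - 1 ≠ 0 := sub_ne_zero.mpr (ne_of_re_lt_re (by simpa using hs))
    have hE_s := hE_ne s hs.le
    have hderiv : HasDerivAt (fun s ↦ E s / (s - 1))
        ((deriv E s * (s - 1) - E s) / (s - 1) ^ 2) s :=
      ((hE s).hasDerivAt.div ((hasDerivAt_id s).sub_const 1) hs_sub).congr_deriv (by simp)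
    rw [lSeries_gaussianMangoldtCoeff_of_eqOn hψ.toIsUnitTrivialCharacter hEL hs, hderiv.deriv]
    field_simp
    ring

end GaussianNonvanishing

section RayClassGroup

open QuadraticAlgebra

/-- The Gaussian integers modulo `q`, encoded as `ZMod q` with a square root of `-1` adjoined. -/
abbrev GaussianMod (q : ℕ) : Type := QuadraticAlgebra (ZMod q) (-1) 0

variable {q : ℕ}

instance [NeZero q] : Finite (GaussianMod q) := Finite.of_equiv _ (equivProd _ _).symm

/-- Reduction of Gaussian integers modulo `q`. -/
def gaussianReduction (q : ℕ) : GaussianInt →* GaussianMod q where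
  toFun z := ⟨z.re, z.im⟩
  map_one' := by ext <;> simp
  map_mul' z w := by ext <;> simp [add_comm]

lemma gaussianReduction_apply (z : GaussianInt) : gaussianReduction q z = ⟨z.re, z.im⟩ := rfl

lemma bijective_gaussianMod_mk [NeZero q] :
    Function.Bijective fun x : Fin q × Fin q ↦ (⟨(x.1 : ℕ), (x.2 : ℕ)⟩ : GaussianMod q) := by
  have hcard : Nat.card (Fin q × Fin q) = Nat.card (GaussianMod q) := by
    rw [Nat.card_congr (equivProd (-1 : ZMod q) 0)]
    simp
  have cast_injective (a b : Fin q) (h : ((a : ℕ) : ZMod q) = (b : ℕ)) : a = b := by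
    rw [ZMod.natCast_eq_natCast_iff', Nat.mod_eq_of_lt a.2, Nat.mod_eq_of_lt b.2] at h
    exact Fin.ext h
  exact (Nat.bijective_iff_injective_and_card _).mpr
    ⟨fun x y h ↦ Prod.ext (cast_injective _ _ (congrArg QuadraticAlgebra.re h))
      (cast_injective _ _ (congrArg QuadraticAlgebra.im h)), hcard⟩

/-- Units of the Gaussian integers modulo `q` which are real or purely imaginary. -/
def axisUnits (q : ℕ) : Subgroup (GaussianMod q)ˣ where
  carrier := {u | u.1.re = 0 ∨ u.1.im = 0}
  one_mem' := by simp
  mul_mem' {u v} hu hv := by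
    simp only [Set.mem_ofPred_eq, Units.val_mul, re_mul, im_mul] at *
    rcases hu with hu | hu <;> rcases hv with hv | hv <;> simp [hu, hv]
  inv_mem' {u} hu := by
    have hre := congrArg QuadraticAlgebra.re u.inv_mul
    have him := congrArg QuadraticAlgebra.im u.inv_mul
    simp only [Set.mem_ofPred_eq, re_mul, im_mul, re_one, im_one] at *
    rcases hu with hu | hu
    · simp only [hu, mul_zero, zero_mul, add_zero, zero_add] at hre him
      exact Or.inl (by grind)
    · simp only [hu, mul_zero, zero_mul, add_zero, zero_add] at hre him
      exact Or.inr (by grind)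

lemma mem_axisUnits {u : (GaussianMod q)ˣ} : u ∈ axisUnits q ↔ u.1.re = 0 ∨ u.1.im = 0 := Iff.rfl

/-- The ray class group modulo `q` of the Gaussian integers, modulo rational residues. -/
abbrev RingClassGroup (q : ℕ) : Type := (GaussianMod q)ˣ ⧸ axisUnits q

instance [NeZero q] : Finite (RingClassGroup q →* ℂˣ) :=
  have finite_monoidHom (G : Type) [CommGroup G] [Finite G] : Finite (G →* ℂˣ) := inferInstance
  finite_monoidHom (RingClassGroup q)

/-- The ring class character `χ` on residue classes, extended by zero to non-units. -/
noncomputable def ringClassMulChar (χ : RingClassGroup q →* ℂˣ) : MulChar (GaussianMod q) ℂ :=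
  MulChar.ofUnitHom (χ.comp (QuotientGroup.mk' (axisUnits q)))

/-- The multiplicative map on the Gaussian integers attached to a ring class character. -/
noncomputable def ringClassCharacter (χ : RingClassGroup q →* ℂˣ) : GaussianInt →* ℂ :=
  (ringClassMulChar χ).toMonoidHom.comp (gaussianReduction q)

lemma ringClassCharacter_apply (χ : RingClassGroup q →* ℂˣ) (z : GaussianInt) :
    ringClassCharacter χ z = ringClassMulChar χ (gaussianReduction q z) := rfl

lemma ringClassMulChar_coe (χ : RingClassGroup q →* ℂˣ) (u : (GaussianMod q)ˣ) :
    ringClassMulChar χ u = χ u :=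
  MulChar.ofUnitHom_coe _ _

lemma ringClassCharacter_of_unit (χ : RingClassGroup q →* ℂˣ) {z : GaussianInt}
    {u : (GaussianMod q)ˣ} (h : (u : GaussianMod q) = gaussianReduction q z) :
    ringClassCharacter χ z = χ u := by
  rw [ringClassCharacter_apply, ← h, ringClassMulChar_coe]

lemma ringClassCharacter_of_not_isUnit (χ : RingClassGroup q →* ℂˣ) {z : GaussianInt}
    (h : ¬ IsUnit (gaussianReduction q z)) : ringClassCharacter χ z = 0 :=
  MulChar.map_nonunit (ringClassMulChar χ) h

lemma norm_monoidHom_units_apply {G : Type*} [Group G] [Finite G] (χ : G →* ℂˣ) (x : G) :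
    ‖(χ x : ℂ)‖ = 1 :=
  (((Units.coeHom ℂ).comp χ).isOfFinOrder (isOfFinOrder_of_finite x)).norm_eq_one

lemma ringClassCharacter_one_apply [NeZero q] (χ : RingClassGroup q →* ℂˣ) (z : GaussianInt) :
    ringClassCharacter (1 : RingClassGroup q →* ℂˣ) z = ‖ringClassCharacter χ z‖ := by
  by_cases h : IsUnit (gaussianReduction q z)
  · obtain ⟨u, hu⟩ := h
    rw [ringClassCharacter_of_unit _ hu, ringClassCharacter_of_unit _ hu,
      norm_monoidHom_units_apply]
    simp
  · rw [ringClassCharacter_of_not_isUnit _ h, ringClassCharacter_of_not_isUnit _ h]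
    simp

lemma gaussian_re_eq_zero_or_im_eq_zero {z : GaussianInt} (hz : IsUnit z) :
    z.re = 0 ∨ z.im = 0 := by
  have hnorm := (Zsqrtd.norm_eq_one_iff' (by norm_num) z).mpr hz
  rw [Zsqrtd.norm_def] at hnorm
  by_contra! h
  nlinarith [sq_abs z.re, sq_abs z.im, Int.one_le_abs h.1, Int.one_le_abs h.2]

lemma isRayCharacter_ringClassCharacter (hq : 1 < q) (χ : RingClassGroup q →* ℂˣ) :
    IsRayCharacter q (ringClassCharacter χ) where
  map_unit z hz := by
    obtain ⟨u, hu⟩ := hz.map (gaussianReduction q)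
    have hu_mem : u ∈ axisUnits q := by
      rw [mem_axisUnits, hu, gaussianReduction_apply]
      exact (gaussian_re_eq_zero_or_im_eq_zero hz).imp (by simp +contextual) (by simp +contextual)
    rw [ringClassCharacter_of_unit _ hu, (QuotientGroup.eq_one_iff u).mpr hu_mem, map_one,
      Units.val_one]
  norm_le_one z := by
    have : NeZero q := ⟨by lia⟩
    by_cases h : IsUnit (gaussianReduction q z)
    · obtain ⟨u, hu⟩ := h
      rw [ringClassCharacter_of_unit _ hu, norm_monoidHom_units_apply]
    · rw [ringClassCharacter_of_not_isUnit _ h]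
      simp
  periodic z w := by
    have hred : gaussianReduction q (z + q * w) = gaussianReduction q z := by
      ext <;> simp [gaussianReduction_apply]
    rw [ringClassCharacter_apply, hred, ← ringClassCharacter_apply]
  map_zero := by
    have : Fact (1 < q) := ⟨hq⟩
    have hred : gaussianReduction q 0 = 0 := by ext <;> simp [gaussianReduction_apply]
    rw [ringClassCharacter_apply, hred, MulChar.map_zero]

lemma sum_ringClassCharacter [NeZero q] [Fintype (GaussianMod q)] (χ : RingClassGroup q →* ℂˣ) :
    ∑ x : Fin q × Fin q, ringClassCharacter χ ⟨(x.1 : ℕ), (x.2 : ℕ)⟩ =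
      ∑ x, ringClassMulChar χ x := by
  rw [← bijective_gaussianMod_mk.sum_comp]
  refine Finset.sum_congr rfl fun x _ ↦ ?_
  rw [ringClassCharacter_apply]
  congr 1
  ext <;> simp [gaussianReduction_apply]

lemma ringClassMulChar_ne_one {χ : RingClassGroup q →* ℂˣ} (hχ : χ ≠ 1) :
    ringClassMulChar χ ≠ 1 := by
  contrapose! hχ
  ext u
  rw [MonoidHom.comp_apply, QuotientGroup.mk'_apply, ← ringClassMulChar_coe, hχ,
    MulChar.one_apply_coe]
  simp

lemma sum_ringClassCharacter_of_ne_one [NeZero q] {χ : RingClassGroup q →* ℂˣ} (hχ : χ ≠ 1) :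
    ∑ x : Fin q × Fin q, ringClassCharacter χ ⟨(x.1 : ℕ), (x.2 : ℕ)⟩ = 0 := by
  have := Fintype.ofFinite (GaussianMod q)
  rw [sum_ringClassCharacter, MulChar.sum_eq_zero_of_ne_one (ringClassMulChar_ne_one hχ)]

lemma exists_continuousOn_ringClassCharacter (hq : 1 < q) (χ : RingClassGroup q →* ℂˣ)
    [Decidable (χ = 1)] :
    ∃ G : ℂ → ℂ, ContinuousOn G {s | 1 ≤ s.re} ∧ ∀ s, 1 < s.re →
      LSeries (gaussianMangoldtCoeff (ringClassCharacter χ)) s -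
        (if χ = 1 then 1 else 0) / (s - 1) = G s := by
  have : NeZero q := ⟨by lia⟩
  have h := isRayCharacter_ringClassCharacter hq χ
  split_ifs with hχ
  · subst hχ
    exact exists_continuousOn_of_principal h (ringClassCharacter_one_apply 1)
  · obtain ⟨G, hG, hGL⟩ := exists_continuousOn_of_nonprincipal h
      (isRayCharacter_ringClassCharacter hq 1) (ringClassCharacter_one_apply χ)
      (sum_ringClassCharacter_of_ne_one hχ)
    exact ⟨G, hG, fun s hs ↦ by rw [zero_div, sub_zero, hGL s hs]⟩

end RayClassGroup

section RingClassCharacters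

open QuadraticAlgebra

lemma sum_monoidHom_apply_eq_ite {G : Type*} [CommGroup G] [Finite G] [Fintype (G →* ℂˣ)] (x : G)
    [Decidable (x = 1)] :
    ∑ χ : G →* ℂˣ, (χ x : ℂ) = if x = 1 then (Nat.card G : ℂ) else 0 := by
  split_ifs with hx
  · simp only [hx, map_one, Units.val_one, Finset.sum_const, Finset.card_univ, nsmul_eq_mul,
      mul_one]
    rw [← Nat.card_eq_fintype_card,
      Nat.card_congr (CommGroup.monoidHom_mulEquiv_of_hasEnoughRootsOfUnity G ℂ).some.toEquiv]
  · obtain ⟨χ₀, hχ₀⟩ := CommGroup.exists_apply_ne_one_of_hasEnoughRootsOfUnity G ℂ hx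
    refine eq_zero_of_mul_eq_self_left (b := (χ₀ x : ℂ)) (by simpa using hχ₀) ?_
    rw [Finset.mul_sum]
    exact Fintype.sum_equiv (Equiv.mulLeft χ₀) _ _ fun χ ↦ by simp

variable {q : ℕ}

lemma isUnit_gaussianReduction_iff {z : GaussianInt} :
    IsUnit (gaussianReduction q z) ↔ IsUnit (z.norm : ZMod q) := by
  rw [isUnit_iff_norm_isUnit, gaussianReduction_apply, norm_def, Zsqrtd.norm_def]
  simp

open scoped Classical in
/-- The indicator function of the Gaussian integers coprime to `q` which are congruent to a
rational integer or a multiple of `i` modulo `q`. -/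
noncomputable def axisIndicator (q : ℕ) (z : GaussianInt) : ℝ :=
  if IsUnit (gaussianReduction q z) ∧ ((q : ℤ) ∣ z.re ∨ (q : ℤ) ∣ z.im) then 1 else 0

lemma axisIndicator_nonneg (z : GaussianInt) : 0 ≤ axisIndicator q z := by
  unfold axisIndicator
  split_ifs <;> simp

lemma axisIndicator_le_one (z : GaussianInt) : axisIndicator q z ≤ 1 := by
  unfold axisIndicator
  split_ifs <;> simp

lemma sum_ringClassCharacter_apply [NeZero q] [Fintype (RingClassGroup q →* ℂˣ)] (z : GaussianInt) :
    ∑ χ : RingClassGroup q →* ℂˣ, ringClassCharacter χ z =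
      Nat.card (RingClassGroup q) * axisIndicator q z := by
  classical
  rw [axisIndicator]
  by_cases h : IsUnit (gaussianReduction q z)
  · obtain ⟨u, hu⟩ := h
    simp only [ringClassCharacter_of_unit _ hu]
    rw [sum_monoidHom_apply_eq_ite (u : RingClassGroup q), ← hu]
    have hu_one : (u : RingClassGroup q) = 1 ↔ ((q : ℤ) ∣ z.re ∨ (q : ℤ) ∣ z.im) := by
      rw [QuotientGroup.eq_one_iff, mem_axisUnits, hu, gaussianReduction_apply,
        ← ZMod.intCast_zmod_eq_zero_iff_dvd, ← ZMod.intCast_zmod_eq_zero_iff_dvd]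
    simp only [hu_one, u.isUnit, true_and]
    split_ifs <;> simp
  · simp [ringClassCharacter_of_not_isUnit _ h, h]

lemma isUnit_or_exists_fin_eq_two_mul {n : ℕ} (x : ZMod (2 ^ (n + 1))) :
    IsUnit x ∨ ∃ j : Fin (2 ^ n), x = 2 * (j : ℕ) := by
  have hlt : x.val < 2 ^ n * 2 := (ZMod.val_lt x).trans_eq (pow_succ 2 n)
  rw [← ZMod.natCast_zmod_val x]
  rcases Nat.even_or_odd' x.val with ⟨y, hy | hy⟩
  · exact Or.inr ⟨⟨y, by lia⟩, by rw [hy]; push_cast; rfl⟩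
  · rw [ZMod.isUnit_iff_coprime]
    exact Or.inl ((Nat.coprime_two_right.mpr ⟨y, hy⟩).pow_right _)

lemma not_isUnit_two_mul {n : ℕ} (x : ZMod (2 ^ (n + 1))) : ¬ IsUnit (2 * x) := fun h ↦ by
  have not_isUnit : ∀ y : ZMod 2, ¬ IsUnit (2 * y) := by decide
  have hmap := h.map (ZMod.castHom (dvd_pow_self 2 n.succ_ne_zero) (ZMod 2))
  rw [map_mul, map_ofNat] at hmap
  exact not_isUnit _ hmap

lemma not_isUnit_sq_add_sq {n : ℕ} {x y : ZMod (2 ^ (n + 1))} (hx : IsUnit x) (hy : IsUnit y) :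
    ¬ IsUnit (x ^ 2 + y ^ 2) := fun h ↦ by
  have not_isUnit : ∀ a b : ZMod 2, IsUnit a → IsUnit b → ¬ IsUnit (a ^ 2 + b ^ 2) := by decide
  let φ := ZMod.castHom (dvd_pow_self 2 n.succ_ne_zero) (ZMod 2)
  exact not_isUnit _ _ (hx.map φ) (hy.map φ) (by simpa using h.map φ)

lemma isUnit_gaussianReduction_one_two_mul (n : ℕ) (j : Fin (2 ^ n)) :
    IsUnit (gaussianReduction (2 ^ (n + 1)) ⟨1, 2 * (j : ℕ)⟩) := by
  have hnorm : (⟨1, 2 * (j : ℕ)⟩ : GaussianInt).norm = (2 * (2 * j ^ 2) + 1 : ℕ) := by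
    rw [Zsqrtd.norm_def]
    push_cast
    ring
  rw [isUnit_gaussianReduction_iff, hnorm, Int.cast_natCast, ZMod.isUnit_iff_coprime]
  exact (Nat.coprime_two_right.mpr ⟨_, rfl⟩).pow_right _

lemma ringClassGroup_mk_eq_mk {u v : (GaussianMod q)ˣ} :
    (u : RingClassGroup q) = v ↔ ∃ w : GaussianMod q, (w.re = 0 ∨ w.im = 0) ∧ u * w = v := by
  rw [QuotientGroup.eq, mem_axisUnits, Units.val_mul]
  refine ⟨fun h ↦ ⟨_, h, Units.mul_inv_cancel_left u _⟩, fun ⟨w, hw, hwv⟩ ↦ ?_⟩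
  rwa [← hwv, Units.inv_mul_cancel_left]

lemma injective_ringClassGroup_mk (n : ℕ) :
    Function.Injective fun j : Fin (2 ^ n) ↦
      ((isUnit_gaussianReduction_one_two_mul n j).unit : RingClassGroup (2 ^ (n + 1))) := by
  intro j k hjk
  obtain ⟨w, hw, hjw⟩ := ringClassGroup_mk_eq_mk.mp hjk
  have hre := congrArg QuadraticAlgebra.re hjw
  have him := congrArg QuadraticAlgebra.im hjw
  simp only [IsUnit.unit_spec, gaussianReduction_apply, re_mul, im_mul] at hre him
  push_cast at hre him
  rcases hw with hw | hw
  · have hone : 2 * (-(((j : ℕ) : ZMod (2 ^ (n + 1))) * w.im)) = 1 := by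
      rw [hw] at hre
      linear_combination hre
    exact absurd (hone ▸ isUnit_one) (not_isUnit_two_mul _)
  · have hcast : ((2 * (j : ℕ) : ℕ) : ZMod (2 ^ (n + 1))) = (2 * (k : ℕ) : ℕ) := by
      push_cast
      rw [hw] at hre him
      linear_combination him - 2 * (j : ℕ) * hre
    have hj := j.2
    have hk := k.2
    rw [ZMod.natCast_eq_natCast_iff', Nat.mod_eq_of_lt (by rw [pow_succ]; lia),
      Nat.mod_eq_of_lt (by rw [pow_succ]; lia)] at hcast
    exact Fin.ext (Nat.eq_of_mul_eq_mul_left two_pos hcast)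

-- Exactly one coordinate of a unit is a unit; dividing by it yields the representative.
lemma exists_gaussianReduction_one_two_mul_mul_eq {n : ℕ} (u : (GaussianMod (2 ^ (n + 1)))ˣ) :
    ∃ j : Fin (2 ^ n), ∃ w : GaussianMod (2 ^ (n + 1)), (w.re = 0 ∨ w.im = 0) ∧
      gaussianReduction (2 ^ (n + 1)) ⟨1, 2 * (j : ℕ)⟩ * w = u := by
  set a := u.1.re with ha
  set b := u.1.im with hb
  have hnorm : IsUnit (a ^ 2 + b ^ 2) := by
    have h := isUnit_iff_norm_isUnit.mp u.isUnit
    rw [norm_def] at h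
    convert h using 1
    ring
  by_cases ha_unit : IsUnit a
  · obtain ⟨c, hc⟩ := ha_unit.exists_right_inv
    rcases isUnit_or_exists_fin_eq_two_mul (c * b) with hcb | ⟨j, hj⟩
    · exact absurd hnorm (not_isUnit_sq_add_sq ha_unit (isUnit_of_mul_isUnit_right hcb))
    · refine ⟨j, ⟨a, 0⟩, Or.inr rfl, ?_⟩
      ext
      · simp [gaussianReduction_apply, ← ha]
      · simp [gaussianReduction_apply, ← hj, ← hb]
        linear_combination b * hc
  · obtain ⟨i, hi⟩ := (isUnit_or_exists_fin_eq_two_mul a).resolve_left ha_unit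
    rcases isUnit_or_exists_fin_eq_two_mul b with hb_unit | ⟨k, hk⟩
    · obtain ⟨c, hc⟩ := hb_unit.exists_right_inv
      obtain ⟨j, hj⟩ := (isUnit_or_exists_fin_eq_two_mul (-(c * a))).resolve_left fun h ↦
        ha_unit (isUnit_of_mul_isUnit_right (by simpa using h.neg))
      refine ⟨j, ⟨0, b⟩, Or.inl rfl, ?_⟩
      ext
      · simp [gaussianReduction_apply, ← hj, ← ha]
        linear_combination a * hc
      · simp [gaussianReduction_apply, ← hb]
    · rw [hi, hk, mul_pow, mul_pow, ← mul_add, sq, mul_assoc] at hnorm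
      exact absurd hnorm (not_isUnit_two_mul _)

lemma surjective_ringClassGroup_mk (n : ℕ) :
    Function.Surjective fun j : Fin (2 ^ n) ↦
      ((isUnit_gaussianReduction_one_two_mul n j).unit : RingClassGroup (2 ^ (n + 1))) := by
  intro x
  induction x using QuotientGroup.induction_on with | H u
  obtain ⟨j, w, hw, hjw⟩ := exists_gaussianReduction_one_two_mul_mul_eq u
  exact ⟨j, ringClassGroup_mk_eq_mk.mpr ⟨w, hw, hjw⟩⟩

lemma card_ringClassGroup_two_pow (n : ℕ) : Nat.card (RingClassGroup (2 ^ (n + 1))) = 2 ^ n := by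
  rw [← Nat.card_congr (Equiv.ofBijective _
    ⟨injective_ringClassGroup_mk n, surjective_ringClassGroup_mk n⟩), Nat.card_fin]

end RingClassCharacters

section AxisCoefficients

open ArithmeticFunction

variable {q : ℕ}

/-- The weight of the Gaussian prime powers of norm `k` that lie on the axes modulo `q`. -/
noncomputable def axisMangoldt (q k : ℕ) : ℝ :=
  (∑ z ∈ normFiber k, axisIndicator q z * gaussianMangoldt z) / 4

lemma axisMangoldt_nonneg (k : ℕ) : 0 ≤ axisMangoldt q k :=
  div_nonneg (Finset.sum_nonneg fun _ _ ↦
    mul_nonneg (axisIndicator_nonneg _) (gaussianMangoldt_nonneg _)) zero_le_four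

lemma axisMangoldt_le (k : ℕ) : axisMangoldt q k ≤ 4 * vonMangoldt k := by
  have hsum : ∑ z ∈ normFiber k, axisIndicator q z * gaussianMangoldt z ≤ 16 * vonMangoldt k :=
    (Finset.sum_le_sum fun z _ ↦ mul_le_of_le_one_left (gaussianMangoldt_nonneg z)
      (axisIndicator_le_one z)).trans (sum_gaussianMangoldt_normFiber_le k)
  rw [axisMangoldt]
  linarith

lemma card_mul_axisMangoldt [NeZero q] [Fintype (RingClassGroup q →* ℂˣ)] {k : ℕ} (hk : k ≠ 0) :
    Nat.card (RingClassGroup q) * (axisMangoldt q k : ℂ) =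
      ∑ χ : RingClassGroup q →* ℂˣ, gaussianMangoldtCoeff (ringClassCharacter χ) k := by
  simp only [gaussianMangoldtCoeff, gaussianCoeff_apply _ hk]
  rw [← Finset.sum_div, Finset.sum_comm, axisMangoldt]
  push_cast
  rw [mul_div_assoc', Finset.mul_sum]
  simp only [← Finset.sum_mul, sum_ringClassCharacter_apply, mul_assoc]

lemma sum_Icc_vonMangoldt_le (n : ℕ) :
    ∑ k ∈ Finset.Icc 1 n, vonMangoldt k ≤ (Real.log 4 + 4) * n := by
  have hpsi := Chebyshev.psi_le_const_mul_self n.cast_nonneg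
  rwa [Chebyshev.psi, Nat.floor_natCast] at hpsi

lemma tendsto_sum_axisMangoldt_div (hq : 1 < q) :
    Tendsto (fun n : ℕ ↦ (∑ k ∈ Finset.Icc 1 n, axisMangoldt q k) / n) atTop
      (nhds (Nat.card (RingClassGroup q) : ℝ)⁻¹) := by
  classical
  have : NeZero q := ⟨by lia⟩
  have := Fintype.ofFinite (RingClassGroup q →* ℂˣ)
  choose G hG hGL using fun χ : RingClassGroup q →* ℂˣ ↦ exists_continuousOn_ringClassCharacter hq χ
  have hcard : (Nat.card (RingClassGroup q) : ℂ) ≠ 0 := by exact_mod_cast Nat.card_pos.ne'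
  refine tendsto_sum_div_of_continuousOn_LSeries_sub axisMangoldt_nonneg
    (M := 4 * (Real.log 4 + 4)) (fun n ↦ ?_)
    (G := fun s ↦ (Nat.card (RingClassGroup q) : ℂ)⁻¹ * ∑ χ, G χ s)
    (continuousOn_const.mul (continuousOn_finsetSum _ fun χ _ ↦ hG χ)) fun s hs ↦ ?_
  · calc ∑ k ∈ Finset.Icc 1 n, axisMangoldt q k ≤ ∑ k ∈ Finset.Icc 1 n, 4 * vonMangoldt k :=
        Finset.sum_le_sum fun k _ ↦ axisMangoldt_le k
      _ ≤ _ := by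
        rw [← Finset.mul_sum, mul_assoc]
        exact mul_le_mul_of_nonneg_left (sum_Icc_vonMangoldt_le n) zero_le_four
  · have hsum : ∑ χ : RingClassGroup q →* ℂˣ, LSeries (gaussianMangoldtCoeff
        (ringClassCharacter χ)) s = Nat.card (RingClassGroup q) *
          LSeries (fun n ↦ (axisMangoldt q n : ℂ)) s := by
      rw [← LSeries_sum fun χ _ ↦
        lSeriesSummable_gaussianMangoldtCoeff
          (isRayCharacter_ringClassCharacter hq χ).norm_le_one hs, ← LSeries_smul]
      refine LSeries_congr (fun {n} hn ↦ ?_) s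
      rw [Pi.smul_apply, smul_eq_mul, card_mul_axisMangoldt hn, Finset.sum_apply]
    rw [eq_inv_mul_iff_mul_eq₀ hcard, ← Finset.sum_congr rfl fun χ _ ↦ hGL χ s hs,
      Finset.sum_sub_distrib, hsum, ← Finset.sum_div, Finset.sum_ite_eq' Finset.univ]
    push_cast
    simp only [Finset.mem_univ, if_true]
    field_simp

lemma tendsto_sum_vonMangoldt_div :
    Tendsto (fun n : ℕ ↦ (∑ k ∈ Finset.Icc 1 n, vonMangoldt k) / n) atTop (nhds 1) := by
  refine tendsto_sum_div_of_continuousOn_LSeries_sub (fun _ ↦ vonMangoldt_nonneg)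
    sum_Icc_vonMangoldt_le (vonMangoldt.continuousOn_LFunctionResidueClassAux (1 : ZMod 1))
    fun s hs ↦ ?_
  rw [vonMangoldt.eqOn_LFunctionResidueClassAux isUnit_one hs]
  have residueClass_apply (n : ℕ) : vonMangoldt.residueClass (1 : ZMod 1) n = vonMangoldt n :=
    Set.indicator_of_mem (s := {n : ℕ | (n : ZMod 1) = 1}) (Subsingleton.elim _ _) _
  simp only [residueClass_apply, Nat.totient_one, Nat.cast_one, inv_one, Complex.ofReal_one]

end AxisCoefficients

section AxisPrimes

open ArithmeticFunction

lemma gaussian_prime_of_prime_norm {z : GaussianInt} {p : ℕ} (hp : p.Prime) (hz : z.norm = p) :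
    Prime z := by
  refine Irreducible.prime ⟨fun h ↦ ?_, fun {x y} hxy ↦ ?_⟩
  · rw [← Zsqrtd.norm_eq_one_iff, hz, Int.natAbs_natCast] at h
    exact hp.one_lt.ne' h
  · have hnorm : x.norm.natAbs * y.norm.natAbs = p := by
      rw [← Int.natAbs_mul, ← Zsqrtd.norm_mul, ← hxy, hz, Int.natAbs_natCast]
    rw [← Zsqrtd.norm_eq_one_iff, ← Zsqrtd.norm_eq_one_iff]
    rcases (Nat.dvd_prime hp).mp (Dvd.intro _ hnorm) with hx | hx
    · exact Or.inl hx
    · rw [hx] at hnorm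
      exact Or.inr (Nat.eq_of_mul_eq_mul_left hp.pos (hnorm.trans (mul_one p).symm))

lemma gaussianMangoldt_of_mem_normFiber {p : ℕ} (hp : p.Prime) {z : GaussianInt}
    (hz : z ∈ normFiber p) : gaussianMangoldt z = Real.log p := by
  rw [mem_normFiber] at hz
  rw [gaussianMangoldt_eq_log (gaussian_prime_of_prime_norm hp hz) one_pos (by rw [pow_one]), hz,
    Int.cast_natCast]

lemma mem_normFiber_iff_sq_add_sq {m : ℕ} {z : GaussianInt} :
    z ∈ normFiber m ↔ z.re.natAbs ^ 2 + z.im.natAbs ^ 2 = m := by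
  rw [mem_normFiber, Zsqrtd.norm_def, ← Int.natCast_inj]
  push_cast
  rw [sq_abs, sq_abs]
  ring_nf

open scoped Classical in
lemma axisIndicator_two_pow_of_mem_normFiber {n m : ℕ} (hn : n ≠ 0) {z : GaussianInt}
    (hz : z ∈ normFiber m) :
    axisIndicator (2 ^ n) z =
      if Odd m ∧ (2 ^ n ∣ z.re.natAbs ∨ 2 ^ n ∣ z.im.natAbs) then 1 else 0 := by
  have isUnit_iff_odd : IsUnit (gaussianReduction (2 ^ n) z) ↔ Odd m := by
    rw [isUnit_gaussianReduction_iff, mem_normFiber.mp hz, Int.cast_natCast,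
      ZMod.isUnit_iff_coprime, Nat.coprime_pow_right_iff hn.bot_lt, Nat.coprime_two_right]
  simp only [axisIndicator, isUnit_iff_odd, Int.natCast_dvd]

lemma card_filter_natAbs_eq {a b : ℕ} (ha : a ≠ 0) (hb : b ≠ 0) :
    ((normFiber (a ^ 2 + b ^ 2)).filter fun z ↦ z.re.natAbs = a ∧ z.im.natAbs = b).card = 4 := by
  have card_pair_neg {c : ℕ} (hc : c ≠ 0) : ({(c : ℤ), -(c : ℤ)} : Finset ℤ).card = 2 :=
    Finset.card_pair (by lia)
  have hcard : (({(a : ℤ), -(a : ℤ)} : Finset ℤ) ×ˢ ({(b : ℤ), -(b : ℤ)} : Finset ℤ)).card = 4 := by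
    rw [Finset.card_product, card_pair_neg ha, card_pair_neg hb]
  rw [← hcard]
  refine Finset.card_nbij' (fun z ↦ (z.re, z.im)) (fun x ↦ ⟨x.1, x.2⟩) ?_ ?_
    (fun _ _ ↦ rfl) fun _ _ ↦ rfl
  · intro z hz
    simpa [← Int.natAbs_eq_iff] using (Finset.mem_filter.mp hz).2
  · rintro ⟨x, y⟩ hxy
    have h : x.natAbs = a ∧ y.natAbs = b := by simpa [← Int.natAbs_eq_iff] using hxy
    exact Finset.mem_filter.mpr ⟨mem_normFiber_iff_sq_add_sq.mpr (by rw [h.1, h.2]), h⟩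

lemma card_filter_two_pow_dvd_natAbs {n p : ℕ} (hn : n ≠ 0) (hp : p.Prime) (hodd : Odd p)
    (h : IsSqAddFourPowMulSq n p) :
    ((normFiber p).filter fun z ↦ 2 ^ n ∣ z.re.natAbs ∨ 2 ^ n ∣ z.im.natAbs).card = 8 := by
  obtain ⟨a, b, rfl⟩ := h
  have ha : Odd a := odd_of_sq_add_two_pow_mul_sq hn hodd rfl
  have heven : Even (2 ^ n * b) := even_two_pow_mul hn b
  have hb : 2 ^ n * b ≠ 0 := fun hzero ↦
    Nat.Prime.not_prime_pow le_rfl (by simpa [hzero] using hp)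
  have dvd_iff {x y : ℕ} (hxy : x ^ 2 + y ^ 2 = a ^ 2 + (2 ^ n * b) ^ 2) :
      2 ^ n ∣ y ↔ x = a ∧ y = 2 ^ n * b := by
    refine ⟨?_, fun h ↦ h.2 ▸ dvd_mul_right _ _⟩
    rintro ⟨c, rfl⟩
    obtain ⟨rfl, rfl⟩ := sq_add_two_pow_mul_sq_unique hn hp hodd hxy rfl
    exact ⟨rfl, rfl⟩
  have hfilter : ((normFiber (a ^ 2 + (2 ^ n * b) ^ 2)).filter
      fun z ↦ 2 ^ n ∣ z.re.natAbs ∨ 2 ^ n ∣ z.im.natAbs) =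
      (normFiber ((2 ^ n * b) ^ 2 + a ^ 2)).filter
        (fun z ↦ z.re.natAbs = 2 ^ n * b ∧ z.im.natAbs = a) ∪
      (normFiber (a ^ 2 + (2 ^ n * b) ^ 2)).filter
        (fun z ↦ z.re.natAbs = a ∧ z.im.natAbs = 2 ^ n * b) := by
    rw [add_comm ((2 ^ n * b) ^ 2), ← Finset.filter_or]
    refine Finset.filter_congr fun z hz ↦ ?_
    rw [mem_normFiber_iff_sq_add_sq] at hz
    rw [dvd_iff hz, dvd_iff ((add_comm _ _).trans hz), and_comm]
  rw [hfilter, Finset.card_union_of_disjoint, card_filter_natAbs_eq hb ha.pos.ne',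
    card_filter_natAbs_eq ha.pos.ne' hb]
  refine Finset.disjoint_left.mpr fun z hz hz' ↦ ?_
  have hab : a = 2 ^ n * b := (Finset.mem_filter.mp hz').2.1 ▸ (Finset.mem_filter.mp hz).2.1
  exact Nat.not_even_iff_odd.mpr ha (hab ▸ heven)

lemma IsSqAddFourPowMulSq.odd_of_prime {n p : ℕ} (hn : n ≠ 0) (h : IsSqAddFourPowMulSq n p)
    (hp : p.Prime) : Odd p := by
  obtain ⟨a, b, hab⟩ := h
  refine hp.odd_of_ne_two fun htwo ↦ ?_
  have hb := even_two_pow_mul hn b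
  have hsum : Even (a ^ 2 + (2 ^ n * b) ^ 2) := hab ▸ htwo ▸ even_two
  have ha : Even a := (Nat.even_pow' two_ne_zero).mp
    ((Nat.even_add.mp hsum).mpr (hb.pow_of_ne_zero two_ne_zero))
  have hdvd : 4 ∣ a ^ 2 + (2 ^ n * b) ^ 2 := by
    simpa using dvd_add (pow_dvd_pow_of_dvd ha.two_dvd 2) (pow_dvd_pow_of_dvd hb.two_dvd 2)
  rw [hab, htwo] at hdvd
  exact absurd hdvd (by decide)

open scoped Classical in
lemma axisMangoldt_of_prime {n p : ℕ} (hn : n ≠ 0) (hp : p.Prime) :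
    axisMangoldt (2 ^ n) p = if IsSqAddFourPowMulSq n p then 2 * Real.log p else 0 := by
  have hsum : axisMangoldt (2 ^ n) p = (((normFiber p).filter fun z ↦
      Odd p ∧ (2 ^ n ∣ z.re.natAbs ∨ 2 ^ n ∣ z.im.natAbs)).card * Real.log p) / 4 := by
    rw [axisMangoldt, ← nsmul_eq_mul, ← Finset.sum_const, Finset.sum_filter]
    congr 1
    refine Finset.sum_congr rfl fun z hz ↦ ?_
    rw [axisIndicator_two_pow_of_mem_normFiber hn hz, gaussianMangoldt_of_mem_normFiber hp hz,
      ite_mul, one_mul, zero_mul]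
  rw [hsum]
  split_ifs with h
  · have hodd := h.odd_of_prime hn hp
    simp only [hodd, true_and]
    rw [card_filter_two_pow_dvd_natAbs hn hp hodd h]
    push_cast
    ring
  · rw [Finset.filter_false_of_mem, Finset.card_empty, Nat.cast_zero, zero_mul, zero_div]
    rintro z hz ⟨-, ⟨c, hc⟩ | ⟨c, hc⟩⟩ <;> rw [mem_normFiber_iff_sq_add_sq] at hz
    · exact h ⟨_, c, by rw [← hc, add_comm, hz]⟩
    · exact h ⟨_, c, by rw [← hc, hz]⟩

open scoped Classical in
/-- The sum of `log p` over the primes `p ≤ N` satisfying `P`: Chebyshev's `θ` restricted to `P`. -/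
noncomputable def thetaOn (P : ℕ → Prop) (N : ℕ) : ℝ :=
  ∑ p ∈ N.primesLE with P p, Real.log p

lemma thetaOn_true (N : ℕ) : thetaOn (fun _ ↦ True) N = Chebyshev.theta N := by
  rw [thetaOn, Finset.filter_true, Chebyshev.theta_eq_sum_primesLE_log]

open scoped Classical in
lemma abs_sum_sub_mul_thetaOn_le {a : ℕ → ℝ} {P : ℕ → Prop} {C D : ℝ}
    (ha : ∀ k, ¬ k.Prime → |a k| ≤ C * vonMangoldt k)
    (hprime : ∀ k, k.Prime → a k = if P k then D * Real.log k else 0) (N : ℕ) :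
    |∑ k ∈ Finset.Icc 1 N, a k - D * thetaOn P N| ≤
      C * (Chebyshev.psi N - Chebyshev.theta N) := by
  have sum_prime : D * thetaOn P N = ∑ k ∈ Finset.Icc 1 N with k.Prime, a k := by
    rw [thetaOn, Finset.mul_sum, Finset.sum_filter, Nat.primesLE_eq_filter_Icc_one]
    exact Finset.sum_congr rfl fun k hk ↦ (hprime k (Finset.mem_filter.mp hk).2).symm
  rw [sum_prime, ← Finset.sum_filter_add_sum_filter_not (Finset.Icc 1 N) Nat.Prime,
    add_sub_cancel_left, Chebyshev.psi_sub_theta_eq_sum_not_prime, Nat.floor_natCast,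
    Finset.mul_sum]
  exact (Finset.abs_sum_le_sum_abs _ _).trans
    (Finset.sum_le_sum fun k hk ↦ ha k (Finset.mem_filter.mp hk).2)

open scoped Classical in
lemma tendsto_mul_thetaOn_div {a : ℕ → ℝ} {P : ℕ → Prop} {c C D : ℝ} (hC : 0 ≤ C)
    (ha : ∀ k, ¬ k.Prime → |a k| ≤ C * vonMangoldt k)
    (hprime : ∀ k, k.Prime → a k = if P k then D * Real.log k else 0)
    (h : Tendsto (fun N : ℕ ↦ (∑ k ∈ Finset.Icc 1 N, a k) / N) atTop (nhds c)) :
    Tendsto (fun N : ℕ ↦ D * thetaOn P N / N) atTop (nhds c) := by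
  obtain ⟨K, hK⟩ := Chebyshev.psi_sub_theta_le_mul_sqrt
  have hsqrt : Tendsto (fun N : ℕ ↦ C * K * (√(N : ℝ) / N)) atTop (nhds 0) := by
    simp only [Real.sqrt_div_self]
    simpa using (Real.tendsto_sqrt_atTop.comp
      tendsto_natCast_atTop_atTop).inv_tendsto_atTop.const_mul (C * K)
  have hdiff : Tendsto (fun N : ℕ ↦ (∑ k ∈ Finset.Icc 1 N, a k) / N - D * thetaOn P N / N) atTop
      (nhds 0) := by
    refine squeeze_zero_norm (fun N ↦ ?_) hsqrt
    rw [← sub_div, norm_div, Real.norm_natCast, Real.norm_eq_abs, mul_div_assoc', mul_assoc]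
    gcongr
    exact (abs_sum_sub_mul_thetaOn_le ha hprime N).trans (mul_le_mul_of_nonneg_left (hK N) hC)
  simpa using h.sub hdiff

lemma tendsto_thetaOn_isSqAddFourPowMulSq_div {n : ℕ} (hn : n ≠ 0) :
    Tendsto (fun N ↦ thetaOn (IsSqAddFourPowMulSq n) N / N) atTop (nhds ((1 / 2) ^ n)) := by
  obtain ⟨n, rfl⟩ := Nat.exists_eq_succ_of_ne_zero hn
  have h := tendsto_sum_axisMangoldt_div (q := 2 ^ (n + 1)) (Nat.one_lt_two_pow hn)
  rw [card_ringClassGroup_two_pow] at h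
  have htwo := tendsto_mul_thetaOn_div zero_le_four
    (fun k _ ↦ (abs_of_nonneg (axisMangoldt_nonneg k)).trans_le (axisMangoldt_le k))
    (fun k hk ↦ axisMangoldt_of_prime hn hk) h
  convert htwo.const_mul (1 / 2) using 2 with N
  · ring
  · push_cast
    rw [pow_succ', one_div_pow, one_div (2 ^ n)]

lemma tendsto_thetaOn_true_div :
    Tendsto (fun N ↦ thetaOn (fun _ ↦ True) N / N) atTop (nhds 1) := by
  simpa using tendsto_mul_thetaOn_div (P := fun _ ↦ True) (D := 1) zero_le_one
    (fun k _ ↦ by rw [abs_of_nonneg vonMangoldt_nonneg, one_mul])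
    (fun k hk ↦ by rw [vonMangoldt_apply_prime hk, one_mul, if_pos trivial])
    tendsto_sum_vonMangoldt_div

end AxisPrimes

section PrimeDensity

open scoped Classical in
/-- The number of primes `p ≤ N` satisfying `P`. -/
noncomputable def primeCountOn (P : ℕ → Prop) (N : ℕ) : ℕ := (N.primesLE.filter P).card

/-- The set of primes satisfying `P` has natural density `c` among all primes. -/
def HasPrimeDensity (P : ℕ → Prop) (c : ℝ) : Prop :=
  Tendsto (fun N ↦ (primeCountOn P N : ℝ) / primePi N) atTop (nhds c)

lemma primePi_eq_primeCounting (N : ℕ) : primePi N = N.primeCounting :=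
  N.primesLE_card_eq_primeCounting

lemma primeCountOn_true (N : ℕ) : primeCountOn (fun _ ↦ True) N = primePi N := by
  rw [primeCountOn, Finset.filter_true, primePi, Nat.primesLE_eq_filter_range]

lemma tendsto_primePi_atTop : Tendsto (fun N ↦ (primePi N : ℝ)) atTop atTop := by
  simp only [primePi_eq_primeCounting]
  exact tendsto_natCast_atTop_atTop.comp Nat.tendsto_primeCounting

lemma etaDensityCount_eq_primeCountOn (r N : ℕ) :
    etaDensityCount r N = primeCountOn (fun ℓ ↦ 5 ≤ ℓ ∧ etaCoeff r (nuR r ℓ) = 1) N := by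
  rw [etaDensityCount, primeCountOn, Nat.primesLE_eq_filter_range, Finset.filter_filter]
  congr!

open scoped Classical in
lemma primeCountOn_mul_log_sub_thetaOn (P : ℕ → Prop) (N : ℕ) :
    primeCountOn P N * Real.log N - thetaOn P N =
      ∑ p ∈ N.primesLE with P p, (Real.log N - Real.log p) := by
  rw [Finset.sum_sub_distrib, Finset.sum_const, nsmul_eq_mul, primeCountOn, thetaOn]

lemma tendsto_primePi_mul_log_sub_theta_div :
    Tendsto (fun N : ℕ ↦ (primePi N * Real.log N - Chebyshev.theta N) / N) atTop (nhds 0) := by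
  have hlog : Tendsto (fun N : ℕ ↦ Real.log N) atTop atTop :=
    Real.tendsto_log_atTop.comp tendsto_natCast_atTop_atTop
  have hbigO := (Chebyshev.primeCounting_sub_theta_div_log_isBigO.comp_tendsto
    (tendsto_natCast_atTop_atTop (R := ℝ))).mul
      (Asymptotics.isBigO_refl (fun N : ℕ ↦ Real.log N / N) atTop)
  refine (hbigO.trans_tendsto (hlog.inv_tendsto_atTop.congr' ?_)).congr' ?_ <;>
    filter_upwards [hlog.eventually_gt_atTop 0, eventually_gt_atTop 0] with N hN hN0
  · simp only [Function.comp_apply, Pi.inv_apply]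
    field_simp
  · simp only [Function.comp_apply, Nat.floor_natCast, primePi_eq_primeCounting]
    field_simp

lemma tendsto_primeCountOn_mul_log_div {P : ℕ → Prop} {c : ℝ}
    (h : Tendsto (fun N ↦ thetaOn P N / N) atTop (nhds c)) :
    Tendsto (fun N ↦ primeCountOn P N * (Real.log N / N)) atTop (nhds c) := by
  classical
  have log_sub_nonneg {N p : ℕ} (hp : p ∈ N.primesLE) : 0 ≤ Real.log N - Real.log p :=
    sub_nonneg.mpr (Real.log_le_log (mod_cast (Nat.prime_of_mem_primesLE hp).pos)
      (mod_cast Nat.le_of_mem_primesLE hp))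
  have hdiff : Tendsto (fun N ↦ (primeCountOn P N * Real.log N - thetaOn P N) / N) atTop
      (nhds 0) := by
    refine squeeze_zero (fun N ↦ ?_) (fun N ↦ ?_) tendsto_primePi_mul_log_sub_theta_div
    · rw [primeCountOn_mul_log_sub_thetaOn]
      exact div_nonneg (Finset.sum_nonneg fun p hp ↦ log_sub_nonneg (Finset.mem_filter.mp hp).1)
        N.cast_nonneg
    · rw [← primeCountOn_true, ← thetaOn_true, primeCountOn_mul_log_sub_thetaOn,
        primeCountOn_mul_log_sub_thetaOn, Finset.filter_true]
      exact div_le_div_of_nonneg_right (Finset.sum_le_sum_of_subset_of_nonneg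
        (Finset.filter_subset _ _) fun p hp _ ↦ log_sub_nonneg hp) N.cast_nonneg
  refine (by simpa using hdiff.add h : Tendsto _ atTop (nhds c)).congr fun N ↦ ?_
  ring

lemma hasPrimeDensity_of_tendsto_thetaOn_div {P : ℕ → Prop} {c : ℝ}
    (h : Tendsto (fun N ↦ thetaOn P N / N) atTop (nhds c)) : HasPrimeDensity P c := by
  have hquot := (tendsto_primeCountOn_mul_log_div h).div
    (tendsto_primeCountOn_mul_log_div tendsto_thetaOn_true_div) one_ne_zero
  rw [div_one] at hquot
  refine hquot.congr' ?_
  filter_upwards [eventually_gt_atTop 1] with N hN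
  have hlog : Real.log N / N ≠ 0 :=
    (div_pos (Real.log_pos (mod_cast hN)) (mod_cast (zero_lt_one.trans hN))).ne'
  rw [Pi.div_apply, primeCountOn_true, mul_div_mul_right _ _ hlog]

lemma primeCountOn_and_add_primeCountOn_and_not (P Q : ℕ → Prop) (N : ℕ) :
    primeCountOn (fun p ↦ P p ∧ Q p) N + primeCountOn (fun p ↦ P p ∧ ¬ Q p) N =
      primeCountOn P N := by
  classical
  rw [primeCountOn, primeCountOn, primeCountOn,
    ← Finset.card_filter_add_card_filter_not (s := N.primesLE.filter P) Q,
    Finset.filter_filter, Finset.filter_filter]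
  congr!

lemma primeCountOn_le_add {P Q : ℕ → Prop} {m : ℕ} (hPQ : ∀ p, p.Prime → m ≤ p → P p → Q p)
    (N : ℕ) : primeCountOn P N ≤ primeCountOn Q N + m := by
  classical
  have hsubset : N.primesLE.filter P ⊆ N.primesLE.filter Q ∪ Finset.range m := fun p hp ↦ by
    rw [Finset.mem_filter] at hp
    rw [Finset.mem_union, Finset.mem_filter, Finset.mem_range]
    exact (lt_or_ge p m).symm.imp_left
      fun hm ↦ ⟨hp.1, hPQ p (Nat.prime_of_mem_primesLE hp.1) hm hp.2⟩
  simpa only [primeCountOn, Finset.card_range] using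
    (Finset.card_le_card hsubset).trans (Finset.card_union_le _ _)

namespace HasPrimeDensity

variable {P Q : ℕ → Prop} {c d : ℝ}

lemma sub (hP : HasPrimeDensity P c) (hQ : HasPrimeDensity Q d) (hQP : ∀ p, Q p → P p) :
    HasPrimeDensity (fun p ↦ P p ∧ ¬ Q p) (c - d) := by
  refine (Tendsto.sub hP hQ).congr fun N ↦ ?_
  have hQ_eq : (fun p ↦ P p ∧ Q p) = Q := funext fun p ↦ propext (and_iff_right_of_imp (hQP p))
  rw [← sub_div, ← primeCountOn_and_add_primeCountOn_and_not P Q, hQ_eq, Nat.cast_add,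
    add_sub_cancel_left]

lemma congr_of_le (hP : HasPrimeDensity P c) {m : ℕ}
    (hPQ : ∀ p, p.Prime → m ≤ p → (P p ↔ Q p)) : HasPrimeDensity Q c := by
  have hbound (N : ℕ) : |(primeCountOn Q N : ℝ) - primeCountOn P N| ≤ m := by
    rw [abs_sub_le_iff, sub_le_iff_le_add', sub_le_iff_le_add']
    exact_mod_cast And.intro (primeCountOn_le_add (fun p hp hm ↦ (hPQ p hp hm).mpr) N)
      (primeCountOn_le_add (fun p hp hm ↦ (hPQ p hp hm).mp) N)
  have hdiff : Tendsto (fun N ↦ ((primeCountOn Q N : ℝ) - primeCountOn P N) / primePi N) atTop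
      (nhds 0) := by
    refine squeeze_zero_norm (fun N ↦ ?_) (tendsto_primePi_atTop.const_div_atTop (m : ℝ))
    rw [norm_div, Real.norm_natCast, Real.norm_eq_abs]
    exact div_le_div_of_nonneg_right (hbound N) (Nat.cast_nonneg _)
  simpa [HasPrimeDensity, sub_div] using hdiff.add hP

end HasPrimeDensity

lemma hasPrimeDensity_isSqAddFourPowMulSq {n : ℕ} (hn : n ≠ 0) :
    HasPrimeDensity (IsSqAddFourPowMulSq n) ((1 / 2) ^ n) :=
  hasPrimeDensity_of_tendsto_thetaOn_div (tendsto_thetaOn_isSqAddFourPowMulSq_div hn)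

end PrimeDensity

/-- Theorem D, `ℚ(i)`-dihedral case: `D(24 ⬝ w_n) = 2^{-(n+1)}` for `n ≥ 1`,
where `w_n = 4^n + 1`. -/
theorem etaPowerDensity_dihedral_gaussian (n : ℕ) (hn : 1 ≤ n) :
    Tendsto
      (fun x : ℕ =>
        (etaDensityCount (24 * (4 ^ n + 1)) x : ℝ) / (primePi x : ℝ))
      atTop (nhds ((1 / 2 : ℝ) ^ (n + 1))) := by
  have hn0 : n ≠ 0 := Nat.one_le_iff_ne_zero.mp hn
  have hw : 5 ≤ 4 ^ n + 1 := Nat.succ_le_succ (Nat.le_self_pow hn0 4)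
  have hdensity := (hasPrimeDensity_isSqAddFourPowMulSq hn0).sub
    (hasPrimeDensity_isSqAddFourPowMulSq n.succ_ne_zero) fun _ ↦ IsSqAddFourPowMulSq.of_succ
  have hη : HasPrimeDensity (fun ℓ ↦
      5 ≤ ℓ ∧ etaCoeff (24 * (4 ^ n + 1)) (nuR (24 * (4 ^ n + 1)) ℓ) = 1) _ :=
    hdensity.congr_of_le fun ℓ hℓ hle ↦ by
      rw [etaCoeff_nuR_eq_one_iff hn0 hℓ hle, and_iff_right (hw.trans hle)]
  have hlimit : (1 / 2 : ℝ) ^ n - (1 / 2) ^ (n + 1) = (1 / 2) ^ (n + 1) := by ring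
  simpa only [HasPrimeDensity, hlimit, ← etaDensityCount_eq_primeCountOn] using hη
end

section
/- Mod-2 q-expansion of Δ (equation (2.3)): For all natural numbers N ≥ 1 and all m with 1 ≤ m ≤ N, the coefficient of X^m in the polynomial X · ∏_{n=1}^{N} (1 − X^n)^{24} over ZMod 2 equals 1 if and only if m = k² for some odd natural number k. -/
open Polynomial

/-!
Write `(a; q)_n = ∏_{k < n} (1 - a q^k)`. Shanks' finite form of Gauss's identity
`∏ (1 - q^{2n}) = ∏ (1 - q^{2n-1}) · ∑ q^{k(k+1)/2}` is a polynomial identity, so it holds in every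
commutative ring. In characteristic two `(q²; q²)_n = (q; q)_n ^ 2`, and since
`(q; q²)_n (q²; q²)_n = (q; q)_{2n}`, Gauss's identity becomes `∏ (1 - q^n)^3 = ∑ q^{k(k+1)/2}`;
for finite products it is a congruence modulo `q^{n+1}`, where `(q; q)_n` can be cancelled.
Raising this to the eighth power by Frobenius and multiplying by `q` turns the exponents into
`8 · k(k+1)/2 + 1 = (2k+1)^2`.
-/

open Finset

section qPochhammer

variable {R : Type*} [CommRing R]

/-- The finite `q`-Pochhammer symbol `(a; q)_n = ∏_{k < n} (1 - a q^k)`. The Euler product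
`∏_{k=1}^{n} (1 - q^k)` is `(q; q)_n`. -/
def qPochhammer (a q : R) (n : ℕ) : R :=
  ∏ k ∈ range n, (1 - a * q ^ k)

@[simp]
theorem qPochhammer_zero (a q : R) : qPochhammer a q 0 = 1 :=
  prod_range_zero _

theorem qPochhammer_succ (a q : R) (n : ℕ) :
    qPochhammer a q (n + 1) = qPochhammer a q n * (1 - a * q ^ n) :=
  prod_range_succ _ n

theorem qPochhammer_two_mul (a q : R) (n : ℕ) :
    qPochhammer a q (2 * n) = qPochhammer a (q ^ 2) n * qPochhammer (a * q) (q ^ 2) n := by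
  induction n with
  | zero => simp
  | succ n ih =>
    rw [mul_add_one, qPochhammer_succ, qPochhammer_succ, ih, qPochhammer_succ, qPochhammer_succ]
    ring

theorem qPochhammer_pow_char (p : ℕ) [Fact p.Prime] [CharP R p] (a q : R) (n : ℕ) :
    qPochhammer a q n ^ p = qPochhammer (a ^ p) (q ^ p) n := by
  simp only [qPochhammer, ← prod_pow, sub_pow_char, one_pow, mul_pow, pow_right_comm]

theorem mul_pow_dvd_qPochhammer_sub_qPochhammer (a q : R) {m n : ℕ} (h : m ≤ n) :
    a * q ^ m ∣ qPochhammer a q n - qPochhammer a q m := by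
  induction n, h using Nat.le_induction with
  | base => simp
  | succ n hmn ih =>
    have hlast : a * q ^ m ∣ qPochhammer a q n * (a * q ^ n) :=
      (mul_dvd_mul_left a (pow_dvd_pow q hmn)).mul_left _
    convert ih.sub hlast using 1
    rw [qPochhammer_succ]
    ring

theorem isCoprime_qPochhammer (a q : R) (n : ℕ) : IsCoprime a (qPochhammer a q n) :=
  IsCoprime.prod_right fun k _ ↦ ⟨q ^ k, 1, by ring⟩

theorem prod_Icc_one_sub_pow (q : R) (n : ℕ) :
    ∏ k ∈ Icc 1 n, (1 - q ^ k) = qPochhammer q q n := by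
  induction n with
  | zero => simp
  | succ n ih => rw [prod_Icc_succ_top (by simp), ih, qPochhammer_succ, pow_succ']

end qPochhammer

section Shanks

variable {R : Type*} [CommRing R]

/-- The coefficient `(q²; q²)_n (q; q²)_s / (q²; q²)_s` of `q ^ (s * (2 * n + 1))` in Shanks' finite
form of Gauss's identity, meant for `s ≤ n`. The quotient of the two even products is written as
the product over `s ≤ k < n`, so that no division is needed. -/
def shanksCoeff (q : R) (n s : ℕ) : R :=
  qPochhammer q (q ^ 2) s * ∏ k ∈ Ico s n, (1 - q ^ (2 * k + 2))

theorem shanksCoeff_zero_right (q : R) (n : ℕ) :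
    shanksCoeff q n 0 = qPochhammer (q ^ 2) (q ^ 2) n := by
  rw [shanksCoeff, qPochhammer_zero, one_mul, ← range_eq_Ico, qPochhammer]
  exact prod_congr rfl fun k _ ↦ by rw [← pow_mul, ← pow_add, add_comm]

theorem shanksCoeff_self (q : R) (n : ℕ) : shanksCoeff q n n = qPochhammer q (q ^ 2) n := by
  simp [shanksCoeff]

theorem shanksCoeff_succ_left (q : R) {n s : ℕ} (h : s ≤ n) :
    shanksCoeff q (n + 1) s = shanksCoeff q n s * (1 - q ^ (2 * n + 2)) := by
  rw [shanksCoeff, shanksCoeff, prod_Ico_succ_top h, mul_assoc]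

theorem shanksCoeff_succ_right (q : R) {n s : ℕ} (h : s < n) :
    shanksCoeff q n (s + 1) * (1 - q ^ (2 * s + 2)) =
      shanksCoeff q n s * (1 - q ^ (2 * s + 1)) := by
  rw [shanksCoeff, shanksCoeff, prod_eq_prod_Ico_succ_bot h, qPochhammer_succ]
  ring

theorem sum_shanksCoeff_mul_sub (q : R) {n m : ℕ} (h : m ≤ n) :
    ∑ s ∈ range (m + 1), shanksCoeff q n s *
        ((1 - q ^ (2 * n + 2)) * q ^ (s * (2 * n + 3)) -
          (1 - q ^ (2 * n + 1)) * q ^ (s * (2 * n + 1))) =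
      shanksCoeff q n m * (1 - q ^ (2 * m + 1)) * q ^ ((m + 1) * (2 * n + 1)) := by
  induction m with
  | zero =>
    simp only [zero_add, sum_range_one]
    ring
  | succ m ih =>
    rw [sum_range_succ, ih (by lia), ← shanksCoeff_succ_right q (by lia)]
    ring

theorem qPochhammer_mul_sum_triangular (q : R) (n : ℕ) :
    qPochhammer q (q ^ 2) n * ∑ k ∈ range (2 * n + 1), q ^ (k * (k + 1) / 2) =
      ∑ s ∈ range (n + 1), shanksCoeff q n s * q ^ (s * (2 * n + 1)) := by
  induction n with
  | zero => simp [shanksCoeff]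
  | succ n ih =>
    have hodd : (2 * n + 1) * (2 * n + 1 + 1) / 2 = (n + 1) * (2 * n + 1) :=
      Nat.div_eq_of_eq_mul_left two_pos (by ring)
    have heven : (2 * n + 1 + 1) * (2 * n + 1 + 1 + 1) / 2 = (n + 1) * (2 * n + 3) :=
      Nat.div_eq_of_eq_mul_left two_pos (by ring)
    have hrec : ∑ s ∈ range (n + 1), shanksCoeff q (n + 1) s * q ^ (s * (2 * n + 3)) =
        (1 - q ^ (2 * n + 1)) * ∑ s ∈ range (n + 1), shanksCoeff q n s * q ^ (s * (2 * n + 1)) +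
          qPochhammer q (q ^ 2) (n + 1) * q ^ ((n + 1) * (2 * n + 1)) := by
      have htelescope := sum_shanksCoeff_mul_sub q (le_refl n)
      rw [shanksCoeff_self] at htelescope
      rw [qPochhammer_succ, ← pow_mul, ← pow_succ', ← htelescope, mul_sum, ← sum_add_distrib]
      refine sum_congr rfl fun s hs ↦ ?_
      rw [shanksCoeff_succ_left q (mem_range_succ_iff.1 hs)]
      ring
    rw [mul_add_one 2 n, sum_range_succ _ (n + 1), shanksCoeff_self, hrec, ← ih, sum_range_succ,
      sum_range_succ, hodd, heven, qPochhammer_succ]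
    ring

theorem pow_dvd_qPochhammer_mul_sum_triangular_sub (q : R) (n : ℕ) :
    q ^ (2 * n + 1) ∣ qPochhammer q (q ^ 2) n * ∑ k ∈ range (2 * n + 1), q ^ (k * (k + 1) / 2) -
      qPochhammer (q ^ 2) (q ^ 2) n := by
  rw [qPochhammer_mul_sum_triangular, sum_range_succ', shanksCoeff_zero_right, zero_mul, pow_zero,
    mul_one, add_sub_cancel_right]
  exact dvd_sum fun s _ ↦
    (pow_dvd_pow q (Nat.le_mul_of_pos_left _ s.succ_pos)).mul_left _

end Shanks

theorem mul_sum_triangular_pow_eight {R : Type*} [CommSemiring R] [CharP R 2] (q : R)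
    (n : ℕ) :
    q * (∑ k ∈ range n, q ^ (k * (k + 1) / 2)) ^ 8 = ∑ k ∈ range n, q ^ (2 * k + 1) ^ 2 := by
  rw [show 8 = 2 ^ 3 by rfl, sum_pow_char_pow, mul_sum]
  refine sum_congr rfl fun k _ ↦ ?_
  have htriangular := Nat.div_mul_cancel (Nat.even_mul_succ_self k).two_dvd
  rw [← pow_mul, ← pow_succ']
  congr 1
  linear_combination 4 * htriangular

section CharTwo

variable {R : Type*} [CommRing R] [CharP R 2]

theorem pow_dvd_qPochhammer_cube_sub_sum_triangular (q : R) (n : ℕ) :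
    q ^ (n + 1) ∣ qPochhammer q q n ^ 3 - ∑ k ∈ range (2 * n + 1), q ^ (k * (k + 1) / 2) := by
  set S := ∑ k ∈ range (2 * n + 1), q ^ (k * (k + 1) / 2)
  set A := qPochhammer q (q ^ 2) n
  set Q := qPochhammer q q n
  have hAS : q ^ (n + 1) ∣ A * S - Q ^ 2 := by
    rw [qPochhammer_pow_char]
    exact (pow_dvd_pow q (by lia)).trans (pow_dvd_qPochhammer_mul_sum_triangular_sub q n)
  have hAQ : q ^ (n + 1) ∣ A * Q ^ 2 - Q := by
    have h := mul_pow_dvd_qPochhammer_sub_qPochhammer q q (show n ≤ 2 * n by lia)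
    rwa [qPochhammer_two_mul, ← sq, ← qPochhammer_pow_char, ← pow_succ'] at h
  refine (isCoprime_qPochhammer q q n).pow_left.dvd_of_dvd_mul_left ?_
  convert (hAQ.mul_right S).sub (hAS.mul_left (Q ^ 2)) using 1
  ring

theorem pow_dvd_mul_qPochhammer_pow_sub_sum_odd_sq (q : R) (n : ℕ) :
    q ^ (8 * (n + 1) + 1) ∣
      q * qPochhammer q q n ^ 24 - ∑ k ∈ range (2 * n + 1), q ^ (2 * k + 1) ^ 2 := by
  have h := pow_dvd_pow_of_dvd (pow_dvd_qPochhammer_cube_sub_sum_triangular q n) (2 ^ 3)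
  rw [sub_pow_char_pow, ← pow_mul, ← pow_mul, mul_comm (n + 1)] at h
  rw [← mul_sum_triangular_pow_eight, ← mul_sub, pow_succ']
  exact mul_dvd_mul_left q h

end CharTwo

open scoped Classical in
theorem coeff_sum_X_pow_odd_sq (R : Type*) [Semiring R] {n m : ℕ} (h : m < (2 * n + 1) ^ 2) :
    (∑ k ∈ range n, (X : R[X]) ^ (2 * k + 1) ^ 2).coeff m =
      if ∃ k : ℕ, Odd k ∧ m = k ^ 2 then 1 else 0 := by
  simp only [finsetSum_coeff, coeff_X_pow]
  split_ifs with hm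
  · obtain ⟨_, ⟨k, rfl⟩, rfl⟩ := hm
    have hk : k < n := by
      have := lt_of_pow_lt_pow_left' 2 h
      lia
    rw [sum_eq_single_of_mem k (mem_range.2 hk), if_pos rfl]
    intro j _ hjk
    refine if_neg fun hsq ↦ hjk ?_
    have := Nat.pow_left_injective two_ne_zero hsq
    lia
  · exact sum_eq_zero fun k _ ↦ if_neg fun hk ↦ hm ⟨_, odd_two_mul_add_one k, hk⟩

open scoped Classical in
/-- The bound exceeds `N` because the first omitted factor `(1 - X ^ (N + 1)) ^ 24` is
`(1 - X ^ (8 * (N + 1))) ^ 3` in characteristic two. -/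
theorem delta_mod_two_expansion_general (R : Type*) [CommRing R] [CharP R 2] {N m : ℕ}
    (hm : m ≤ 8 * (N + 1)) :
    (X * ∏ n ∈ Finset.Icc 1 N, ((1 : R[X]) - X ^ n) ^ 24).coeff m =
      if ∃ k : ℕ, Odd k ∧ m = k ^ 2 then 1 else 0 := by
  have hcoeff := X_pow_dvd_iff.1
    (pow_dvd_mul_qPochhammer_pow_sub_sum_odd_sq (X : R[X]) N) m (Nat.lt_succ_of_le hm)
  rw [coeff_sub, sub_eq_zero] at hcoeff
  rw [prod_pow, prod_Icc_one_sub_pow, hcoeff, coeff_sum_X_pow_odd_sq R (by nlinarith)]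

/-- Mod-2 `q`-expansion of `Δ`: the coefficient of `X^m` (for `1 ≤ m ≤ N`) in
`X · ∏_{n=1}^{N} (1 − X^n)^{24}` over `ZMod 2` is `1` iff `m` is the square of an
odd natural number. -/
theorem delta_mod_two_expansion (N : ℕ) (hN : 1 ≤ N) (m : ℕ) (hm1 : 1 ≤ m)
    (hmN : m ≤ N) :
    (X * ∏ n ∈ Finset.Icc 1 N,
        ((1 : Polynomial (ZMod 2)) - X ^ n) ^ 24).coeff m = 1 ↔
      ∃ k : ℕ, Odd k ∧ m = k ^ 2 := by
  rw [delta_mod_two_expansion_general (ZMod 2) (by lia)]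
  simp
end
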